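/- Let k ≥ 2 be an integer, j ∈ {1,…,k−1}, and c ∈ ℝ a constant. Suppose (c_n) is a sequence of real numbers converging to c, and set p = p(n) = ((j+1)·log n + log log n + c_n)·(k−j)!/((k−j+1)·n^{k−j}). Then dim_{F_2} H^j(G_p;F_2) converges in distribution to a Poisson random variable with expectation λ_j := (j+1)·e^{−c}/((k−j+1)^2·j!), i.e. for every integer s ≥ 0, Pr(dim_{F_2} H^j(G_p;F_2) = s) → e^{−λ_j}·λ_j^s/s! as n → ∞; moreover with high probability H^0(G_p;F_2) ≅ F_2 and H^i(G_p;F_2) = 0 for all i ∈ {1,…,j−1}. In particular, Pr(G_p is F_2-cohomologically j-connected) → e^{−λ_j} as n → ∞. -/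

import Mathlib

open MeasureTheory Filter

attribute [local instance] Classical.propDecidable

namespace RSC

variable {V : Type*}

/-- `A` is an `i`-dimensional simplex of the complex `G`. -/
def IsSimplex (G : Set (Finset V)) (i : ℕ) (A : Finset V) : Prop :=
  A ∈ G ∧ A.card = i + 1

/-- A `k`-dimensional simplicial complex on vertex set `V`. -/
structure IsKComplex (G : Set (Finset V)) (k : ℕ) : Prop where
  down : ∀ A ∈ G, ∀ B, B ⊆ A → B.Nonempty → B ∈ G
  singletons : ∀ v : V, ({v} : Finset V) ∈ G
  dim : ∀ A ∈ G, A.card ≤ k + 1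

/-- `i`-cochains with `F₂`-coefficients. -/
abbrev Cochain (G : Set (Finset V)) (i : ℕ) : Type _ :=
  {A : Finset V // IsSimplex G i A} → ZMod 2

/-- The coboundary map `δ^i : C^i(G) → C^{i+1}(G)`. -/
noncomputable def coboundary (G : Set (Finset V)) (i : ℕ) :
    Cochain G i →ₗ[ZMod 2] Cochain G (i + 1) where
  toFun f := fun σ => ∑ τ ∈ Finset.powersetCard (i + 1) (σ : Finset V),
      if h : IsSimplex G i τ then f ⟨τ, h⟩ else 0
  map_add' f g := by
    funext σ
    simp only [Pi.add_apply, ← Finset.sum_add_distrib]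
    refine Finset.sum_congr rfl fun τ _ => ?_
    by_cases h : IsSimplex G i τ <;> simp [h]
  map_smul' c f := by
    funext σ
    simp only [Pi.smul_apply, RingHom.id_apply, Finset.smul_sum]
    refine Finset.sum_congr rfl fun τ _ => ?_
    by_cases h : IsSimplex G i τ <;> simp [h]

/-- The submodule of `i`-cocycles. -/
noncomputable def cocycles (G : Set (Finset V)) (i : ℕ) : Submodule (ZMod 2) (Cochain G i) :=
  LinearMap.ker (coboundary G i)

/-- The submodule of `i`-coboundaries (`δ^{-1}` is the zero map). -/
noncomputable def coboundaries (G : Set (Finset V)) : (i : ℕ) → Submodule (ZMod 2) (Cochain G i)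
  | 0 => ⊥
  | (i + 1) => LinearMap.range (coboundary G i)

/-- The `i`-th cohomology group `H^i(G;F₂) = ker δ^i / im δ^{i-1}`. -/
noncomputable abbrev cohomology (G : Set (Finset V)) (i : ℕ) :=
  (cocycles G i) ⧸ ((coboundaries G i).comap (cocycles G i).subtype)

/-- `F₂`-cohomological `j`-connectedness: `H^0 ≅ F₂` and `H^i = 0` for `1 ≤ i ≤ j`. -/
def CohomConnected (G : Set (Finset V)) (j : ℕ) : Prop :=
  Nonempty (cohomology G 0 ≃ₗ[ZMod 2] ZMod 2) ∧
    ∀ i, 1 ≤ i → i ≤ j → Subsingleton (cohomology G i)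

/-- The `j`-flower in `K` with centre `C`: the set of petals `C ∪ {w}`, `w ∈ K \ C`. -/
def Flower [DecidableEq V] (K C : Finset V) : Set (Finset V) :=
  {P | ∃ w ∈ K \ C, P = insert w C}

/-- A copy of `M_j^-`: a `k`-simplex `K` together with a `(j-1)`-simplex `C ⊆ K` such that
each petal of the flower `F(K,C)` is contained in no `k`-simplex other than `K`. -/
def IsMjMinus [DecidableEq V] (G : Set (Finset V)) (k j : ℕ) (K C : Finset V) : Prop :=
  IsSimplex G k K ∧ C ∈ G ∧ C.card = j ∧ C ⊆ K ∧
    ∀ P ∈ Flower K C, ∀ K', IsSimplex G k K' → P ⊆ K' → K' = K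

/-- A `j`-cycle: every `(j-1)`-simplex lies in an even number of members of `J`. -/
def IsCycle (G : Set (Finset V)) (j : ℕ) (J : Finset (Finset V)) : Prop :=
  (∀ σ ∈ J, IsSimplex G j σ) ∧
    ∀ τ : Finset V, τ.card = j → Even (J.filter (fun σ => τ ⊆ σ)).card

/-- A copy of `M_j`. -/
def IsMj [DecidableEq V] (G : Set (Finset V)) (k j : ℕ) (K C : Finset V)
    (J : Finset (Finset V)) : Prop :=
  IsMjMinus G k j K C ∧ IsCycle G j J ∧ ∃! P : Finset V, P ∈ J ∧ P ∈ Flower K C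

/-- A `j`-shell: a `(j+2)`-set all of whose `(j+1)`-subsets are `j`-simplices. -/
def IsShell (G : Set (Finset V)) (j : ℕ) (A : Finset V) : Prop :=
  A.card = j + 2 ∧ ∀ τ ⊆ A, τ.card = j + 1 → τ ∈ G

/-- A copy of `M_j^*`. -/
def IsMjStar [DecidableEq V] (G : Set (Finset V)) (k j : ℕ) (K C : Finset V) (w a : V) : Prop :=
  IsMjMinus G k j K C ∧ w ∈ K \ C ∧ a ∉ K ∧ IsShell G j (insert a (insert w C))

/-- The support of a cochain. -/
def cochainSupport {G : Set (Finset V)} {i : ℕ} (f : Cochain G i) : Set (Finset V) :=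
  {A | ∃ h : IsSimplex G i A, f ⟨A, h⟩ = 1}

/-- A cochain arising from a copy of `M_j^-`: its support is the flower `F(K,C)`. -/
def ArisesFrom [DecidableEq V] (G : Set (Finset V)) (k j : ℕ) (f : Cochain G j)
    (K C : Finset V) : Prop :=
  IsMjMinus G k j K C ∧ cochainSupport f = Flower K C

/-- A `j`-cocycle generated by copies of `M_j^-`: it differs by a `j`-coboundary from a sum
of `j`-cocycles arising from copies of `M_j^-`. -/
def GeneratedByMjMinus [DecidableEq V] (G : Set (Finset V)) (k j : ℕ) (f : Cochain G j) : Prop :=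
  ∃ (m : ℕ) (fs : Fin m → Cochain G j),
    (∀ i, ∃ K C, ArisesFrom G k j (fs i) K C) ∧
      f - (∑ i, fs i) ∈ coboundaries G j

/-- Membership in `N_G`: a `j`-cocycle not generated by copies of `M_j^-`. -/
def InNG [DecidableEq V] (G : Set (Finset V)) (k j : ℕ) (f : Cochain G j) : Prop :=
  f ∈ cocycles G j ∧ ¬ GeneratedByMjMinus G k j f

/-- Traversability: the transitive closure of "lying in a common `k`-simplex" is `S × S`. -/
def Traversable (G : Set (Finset V)) (k : ℕ) (S : Set (Finset V)) : Prop :=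
  ∀ σ₁ ∈ S, ∀ σ₂ ∈ S,
    Relation.TransGen
      (fun a b => a ∈ S ∧ b ∈ S ∧ ∃ K, IsSimplex G k K ∧ a ⊆ K ∧ b ⊆ K) σ₁ σ₂

/-- A local obstacle: a `k`-simplex containing at least `k-j+1` many `j`-simplices,
each lying in no other `k`-simplex. -/
def IsLocalObstacle (G : Set (Finset V)) (k j : ℕ) (K : Finset V) : Prop :=
  IsSimplex G k K ∧
    k - j + 1 ≤ {σ : Finset V | IsSimplex G j σ ∧ σ ⊆ K ∧
      ∀ K', IsSimplex G k K' → σ ⊆ K' → K' = K}.ncard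

/-- The random complex `G_p` given birth times `t`: all singletons together with all
non-empty subsets of `(k+1)`-sets with birth time at most `p`. -/
def complexAt (k n : ℕ) (t : Finset (Fin n) → ℝ) (p : ℝ) : Set (Finset (Fin n)) :=
  {A | (∃ v, A = {v}) ∨
    (A.Nonempty ∧ ∃ K : Finset (Fin n), K.card = k + 1 ∧ t K ≤ p ∧ A ⊆ K)}

/-- The distribution of birth times: i.i.d. uniform on `[0,1]`. -/
noncomputable def birthMeasure (n : ℕ) : Measure (Finset (Fin n) → ℝ) :=
  Measure.pi fun _ => volume.restrict (Set.Icc (0 : ℝ) 1)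

/-- `p_{M_j}`: the supremum of the probabilities `p ∈ [0,1]` at which `G_p` contains
a copy of `M_j`. -/
noncomputable def pMj (k j n : ℕ) (t : Finset (Fin n) → ℝ) : ℝ :=
  sSup {p : ℝ | p ∈ Set.Icc (0 : ℝ) 1 ∧
    ∃ K C J, IsMj (complexAt k n t p) k j K C J}

/-- The threshold `p_j`. -/
noncomputable def pjThreshold (k j n : ℕ) : ℝ :=
  ((j + 1 : ℝ) * Real.log n + Real.log (Real.log n)) * (Nat.factorial (k - j)) /
    (((k - j + 1 : ℕ) : ℝ) * (n : ℝ) ^ (k - j))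

/-- `p_j^-`. -/
noncomputable def pjMinus (k j n : ℕ) : ℝ :=
  (1 - 1 / Real.sqrt (Real.log n)) * ((j + 1 : ℝ) * Real.log n) * (Nat.factorial (k - j)) /
    (((k - j + 1 : ℕ) : ℝ) * (n : ℝ) ^ (k - j))

/-- `p_{j-1}^-`. -/
noncomputable def pjPrevMinus (k j n : ℕ) : ℝ :=
  (1 - 1 / Real.sqrt (Real.log n)) * ((j : ℝ) * Real.log n) * (Nat.factorial (k - j + 1)) /
    (((k - j + 2 : ℕ) : ℝ) * (n : ℝ) ^ (k - j + 1))

/-- `p_j^{(1)}`. -/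
noncomputable def pjOne (k j n : ℕ) : ℝ :=
  1 / (10 * ((j : ℝ) + 1) * (Nat.choose (k + 1) (j + 1)) * (n : ℝ) ^ (k - j))

/-- The number of copies of `M_j^-` in `G`. -/
noncomputable def countMjMinus (k j : ℕ) {n : ℕ} (G : Set (Finset (Fin n))) : ℕ :=
  {x : Finset (Fin n) × Finset (Fin n) | IsMjMinus G k j x.1 x.2}.ncard

/-- The number of copies of `M_j^*` in `G`. -/
noncomputable def countMjStar (k j : ℕ) {n : ℕ} (G : Set (Finset (Fin n))) : ℕ :=
  {x : Finset (Fin n) × Finset (Fin n) × Fin n × Fin n |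
    IsMjStar G k j x.1 x.2.1 x.2.2.1 x.2.2.2}.ncard

/-- `λ_j = (j+1)·e^{-c}/((k-j+1)²·j!)`. -/
noncomputable def lamj (k j : ℕ) (c : ℝ) : ℝ :=
  ((j : ℝ) + 1) * Real.exp (-c) / (((k - j + 1 : ℕ) : ℝ) ^ 2 * (Nat.factorial j))

section

variable {V : Type*}

/-- The coboundary on the full simplex, all dimensions at once. -/
noncomputable def dd (f : Finset V → ZMod 2) (ρ : Finset V) : ZMod 2 := ∑ x ∈ ρ, f (ρ.erase x)

/-- The cone operator. -/
noncomputable def cone (v : V) (f : Finset V → ZMod 2) (τ : Finset V) : ZMod 2 :=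
  if v ∈ τ then 0 else f (insert v τ)

lemma z2_add_self (a : ZMod 2) : a + a = 0 := CharTwo.add_self_eq_zero a

lemma z2_ne_zero {a : ZMod 2} (h : a ≠ 0) : a = 1 := by
  revert h; revert a; decide

lemma dd_add (f g : Finset V → ZMod 2) (ρ : Finset V) : dd (f + g) ρ = dd f ρ + dd g ρ := by
  simp [dd, Finset.sum_add_distrib]

lemma dd_dd (f : Finset V → ZMod 2) (ρ : Finset V) : dd (dd f) ρ = 0 := by
  unfold dd
  rw [Finset.sum_sigma']
  refine Finset.sum_involution (fun a _ => ⟨a.2, a.1⟩) ?_ ?_ ?_ ?_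
  · rintro ⟨x, y⟩ h
    simp only [Finset.erase_right_comm (a := x) (b := y)]
    exact z2_add_self _
  · rintro ⟨x, y⟩ h _ he
    simp only [Finset.mem_sigma, Finset.mem_erase] at h
    simp only [Sigma.mk.injEq] at he
    exact h.2.1 he.1
  · rintro ⟨x, y⟩ h
    simp only [Finset.mem_sigma, Finset.mem_erase] at h ⊢
    exact ⟨h.2.2, fun e => h.2.1 e.symm, h.1⟩
  · rintro ⟨x, y⟩ h
    rfl

lemma cone_formula (v : V) (f : Finset V → ZMod 2) (σ : Finset V) :
    f σ + dd (cone v f) σ = if v ∈ σ then 0 else dd f (insert v σ) := by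
  by_cases h : v ∈ σ
  · simp only [h, if_true]
    have : dd (cone v f) σ = f σ := by
      unfold dd
      rw [Finset.sum_eq_single v]
      · simp [cone, Finset.insert_erase h]
      · intro b hb hbv
        simp [cone, h, hbv.symm]
      · intro h'; exact absurd h h'
    rw [this]; exact z2_add_self _
  · simp only [h, if_false]
    unfold dd
    rw [Finset.sum_insert h, Finset.erase_insert h]
    congr 1
    refine Finset.sum_congr rfl fun x hx => ?_
    have hne : v ≠ x := fun e => h (e ▸ hx)
    simp only [cone, Finset.mem_erase, h, and_false, if_false]
    rw [Finset.erase_insert_of_ne hne]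

/-- The support among sets of size `m`. -/
noncomputable def supp [Fintype V] (m : ℕ) (f : Finset V → ZMod 2) : Finset (Finset V) :=
  (Finset.powersetCard m Finset.univ).filter (fun σ => f σ ≠ 0)

lemma mem_supp [Fintype V] {m : ℕ} {f : Finset V → ZMod 2} {σ : Finset V} :
    σ ∈ supp m f ↔ σ.card = m ∧ f σ ≠ 0 := by
  simp [supp, Finset.mem_powersetCard]

/-- Meshulam-Wallach expansion. -/
lemma expansion [Fintype V] (m : ℕ) (f : Finset V → ZMod 2)
    (hmin : ∀ g, (supp m f).card ≤ (supp m (f + dd g)).card) :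
    Fintype.card V * (supp m f).card ≤ (m + 1) * (supp (m + 1) (dd f)).card := by
  have h1 : Fintype.card V * (supp m f).card ≤
      ∑ v : V, (supp m (f + dd (cone v f))).card := by
    rw [← smul_eq_mul, ← Finset.card_univ]
    exact Finset.card_nsmul_le_sum _ _ _ (fun v _ => hmin _)
  refine h1.trans ?_
  have h2 : ∀ v : V, (supp m (f + dd (cone v f))).card ≤
      ((supp (m + 1) (dd f)).filter (fun ρ => v ∈ ρ)).card := by
    intro v
    refine Finset.card_le_card_of_injOn (fun σ => insert v σ) ?_ ?_
    · intro σ hσ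
      rw [Finset.mem_coe, mem_supp, Pi.add_apply, cone_formula] at hσ
      obtain ⟨hc, hne⟩ := hσ
      by_cases hv : v ∈ σ
      · simp [hv] at hne
      · simp only [hv, if_false] at hne
        simp [mem_supp, hne, Finset.card_insert_of_notMem hv, hc]
    · intro σ hσ τ hτ he
      have key : ∀ σ ∈ supp m (f + dd (cone v f)), v ∉ σ := by
        intro σ hσ hv
        rw [mem_supp, Pi.add_apply, cone_formula] at hσ
        simp [hv] at hσ
      have a := key σ hσ
      have b := key τ hτ
      simp only at he
      rw [← Finset.erase_insert a, he, Finset.erase_insert b]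
  refine (Finset.sum_le_sum fun v _ => h2 v).trans ?_
  simp only [Finset.card_filter]
  rw [Finset.sum_comm]
  have : ∀ ρ ∈ supp (m + 1) (dd f), (∑ v : V, if v ∈ ρ then 1 else 0) = m + 1 := by
    intro ρ hρ
    rw [← Finset.card_filter]
    simp [(mem_supp.1 hρ).1]
  rw [Finset.sum_congr rfl this]
  simp [mul_comm]

/-- `f` restricted to `K` is a cocycle on `m`-sets. -/
def CocOn (f : Finset V → ZMod 2) (m : ℕ) (K : Finset V) : Prop :=
  ∀ ρ ⊆ K, ρ.card = m + 1 → dd f ρ = 0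

/-- the flower as finset -/
noncomputable def fl (K C : Finset V) : Finset (Finset V) := (K \ C).image (fun w => insert w C)

lemma mem_fl {K C P : Finset V} : P ∈ fl K C ↔ ∃ w ∈ K \ C, insert w C = P := by
  simp [fl]

lemma card_fl {K C : Finset V} (h : C ⊆ K) : (fl K C).card = K.card - C.card := by
  unfold fl
  rw [Finset.card_image_of_injOn, Finset.card_sdiff_of_subset h]
  intro a ha b hb hab
  simp only [Finset.coe_sdiff, Set.mem_sdiff, Finset.mem_coe] at ha hb
  have : a ∈ insert b C := by
    have : insert a C = insert b C := hab
    rw [← this]; simp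
  rcases Finset.mem_insert.1 this with h | h
  · exact h
  · exact absurd h ha.2

/-- the part of the support of `f` in `K` -/
noncomputable def sK (f : Finset V → ZMod 2) (m : ℕ) (K : Finset V) : Finset (Finset V) :=
  (Finset.powersetCard m K).filter (fun σ => f σ ≠ 0)

lemma mem_sK {f : Finset V → ZMod 2} {m : ℕ} {K σ : Finset V} :
    σ ∈ sK f m K ↔ σ ⊆ K ∧ σ.card = m ∧ f σ ≠ 0 := by
  simp [sK, Finset.mem_powersetCard, and_assoc]

lemma exists_swap {f : Finset V → ZMod 2} {m : ℕ} {K σ : Finset V} (hf : CocOn f m K)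
    (hσ : σ ∈ sK f m K) (w : V) (hw : w ∈ K \ σ) :
    ∃ x ∈ σ, insert w (σ.erase x) ∈ sK f m K := by
  rw [mem_sK] at hσ
  obtain ⟨h1, h2, h3⟩ := hσ
  rw [Finset.mem_sdiff] at hw
  have h := hf (insert w σ) (Finset.insert_subset hw.1 h1) (by
    rw [Finset.card_insert_of_notMem hw.2, h2])
  unfold dd at h
  rw [Finset.sum_insert hw.2, Finset.erase_insert hw.2] at h
  have h4 : ∑ x ∈ σ, f ((insert w σ).erase x) ≠ 0 := by
    intro h5; rw [h5, add_zero] at h; exact h3 h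
  obtain ⟨x, hx, hx'⟩ := Finset.exists_ne_zero_of_sum_ne_zero h4
  have hne : w ≠ x := fun e => hw.2 (e ▸ hx)
  rw [Finset.erase_insert_of_ne hne] at hx'
  refine ⟨x, hx, mem_sK.2 ⟨?_, ?_, hx'⟩⟩
  · exact Finset.insert_subset hw.1 ((Finset.erase_subset _ _).trans h1)
  · rw [Finset.card_insert_of_notMem (by simp [hw.2]), Finset.card_erase_of_mem hx, h2]
    have : 0 < σ.card := Finset.card_pos.2 ⟨x, hx⟩
    omega

lemma sK_covers {f : Finset V → ZMod 2} {m : ℕ} {K σ : Finset V} (hf : CocOn f m K)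
    (hσ : σ ∈ sK f m K) (w : V) (hw : w ∈ K) : ∃ τ ∈ sK f m K, w ∈ τ := by
  by_cases h : w ∈ σ
  · exact ⟨σ, hσ, h⟩
  · obtain ⟨x, _, hx⟩ := exists_swap hf hσ w (Finset.mem_sdiff.2 ⟨hw, h⟩)
    exact ⟨_, hx, by simp⟩

lemma sK_card {f : Finset V → ZMod 2} {m : ℕ} {K σ : Finset V} (hf : CocOn f m K)
    (hσ : σ ∈ sK f m K) :
    ∃ x : V → V, (∀ w ∈ K \ σ, x w ∈ σ ∧ insert w (σ.erase (x w)) ∈ sK f m K) ∧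
      insert σ ((K \ σ).image fun w => insert w (σ.erase (x w))) ⊆ sK f m K ∧
      (insert σ ((K \ σ).image fun w => insert w (σ.erase (x w)))).card = K.card - m + 1 := by
  have h := fun w hw => exists_swap hf hσ w hw
  choose! x hx using h
  refine ⟨x, hx, ?_, ?_⟩
  · refine Finset.insert_subset hσ ?_
    intro τ hτ
    obtain ⟨w, hw, rfl⟩ := Finset.mem_image.1 hτ
    exact (hx w hw).2
  · rw [Finset.card_insert_of_notMem, Finset.card_image_of_injOn, Finset.card_sdiff_of_subset
      (mem_sK.1 hσ).1, (mem_sK.1 hσ).2.1]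
    · intro a ha b hb hab
      simp only [Finset.coe_sdiff, Set.mem_sdiff, Finset.mem_coe] at ha hb
      have h1 : a ∈ insert b (σ.erase (x b)) := by
        have : insert a (σ.erase (x a)) = insert b (σ.erase (x b)) := hab
        rw [← this]; simp
      rcases Finset.mem_insert.1 h1 with h | h
      · exact h
      · exact absurd (Finset.mem_of_mem_erase h) ha.2
    · intro h
      obtain ⟨w, hw, he⟩ := Finset.mem_image.1 h
      have : w ∈ σ := by rw [← he]; simp
      exact (Finset.mem_sdiff.1 hw).2 this

lemma sK_card_ge {f : Finset V → ZMod 2} {m : ℕ} {K σ : Finset V} (hf : CocOn f m K)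
    (hσ : σ ∈ sK f m K) : K.card - m + 1 ≤ (sK f m K).card := by
  obtain ⟨x, _, h1, h2⟩ := sK_card hf hσ
  rw [← h2]; exact Finset.card_le_card h1

lemma sK_flower {f : Finset V → ZMod 2} {m : ℕ} {K σ : Finset V} (hf : CocOn f m K)
    (hσ : σ ∈ sK f m K) (hm : m < K.card) (hc : (sK f m K).card ≤ K.card - m + 1) :
    ∃ C ⊆ K, C.card + 1 = m ∧ sK f m K = fl K C := by
  obtain ⟨x, hx, h1, h2⟩ := sK_card hf hσ
  have heq := Finset.eq_of_subset_of_card_le h1 (by rw [h2]; exact hc)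
  have hσ' := mem_sK.1 hσ
  -- all x the same
  have hall : ∀ w ∈ K \ σ, ∀ w' ∈ K \ σ, x w = x w' := by
    intro w hw w' hw'
    by_contra hne
    have hww : w ≠ w' := by rintro rfl; exact hne rfl
    have hwK := Finset.mem_sdiff.1 hw
    have hwK' := Finset.mem_sdiff.1 hw'
    set τ := insert w (σ.erase (x w)) with hτ
    have hτm := (hx w hw).2
    have hw'τ : w' ∈ K \ τ := by
      rw [Finset.mem_sdiff]
      refine ⟨hwK'.1, ?_⟩
      simp [hτ, hww.symm, hwK'.2]
    obtain ⟨y, hy, hy'⟩ := exists_swap hf hτm w' hw'τ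
    rw [← heq] at hy'
    have hxn : x w ∉ insert w' (τ.erase y) := by
      have e1 : x w ≠ w' := fun e => hwK'.2 (e ▸ (hx w hw).1)
      have e2 : x w ≠ w := fun e => hwK.2 (e ▸ (hx w hw).1)
      simp [hτ, e1, e2]
    rcases Finset.mem_insert.1 hy' with h | h
    · have : w' ∈ σ := by rw [← h]; simp
      exact hwK'.2 this
    · obtain ⟨u, hu, he⟩ := Finset.mem_image.1 h
      have huσ := (Finset.mem_sdiff.1 hu).2
      have : w' ∈ insert u (σ.erase (x u)) := by rw [he]; simp
      rcases Finset.mem_insert.1 this with h | h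
      · subst h
        apply hxn
        rw [← he]
        simp [hne, (hx w hw).1]
      · exact hwK'.2 (Finset.mem_of_mem_erase h)
  have hne : (K \ σ).Nonempty := by
    rw [← Finset.card_pos, Finset.card_sdiff_of_subset hσ'.1, hσ'.2.1]; omega
  obtain ⟨w0, hw0⟩ := hne
  have hx0 := (hx w0 hw0).1
  refine ⟨σ.erase (x w0), (Finset.erase_subset _ _).trans hσ'.1, ?_, ?_⟩
  · rw [Finset.card_erase_of_mem hx0, hσ'.2.1]
    have : 0 < σ.card := Finset.card_pos.2 ⟨_, hx0⟩
    omega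
  · rw [← heq]
    ext τ
    simp only [Finset.mem_insert, Finset.mem_image, mem_fl]
    constructor
    · rintro (h | ⟨w, hw, h⟩)
      · refine ⟨x w0, ?_, ?_⟩
        · simp [hσ'.1 hx0]
        · rw [h, Finset.insert_erase hx0]
      · refine ⟨w, ?_, ?_⟩
        · have := Finset.mem_sdiff.1 hw
          simp [this.1, this.2]
        · rw [← h, hall w hw w0 hw0]
    · rintro ⟨w, hw, h⟩
      by_cases hwσ : w ∈ σ
      · left
        have : w = x w0 := by
          have := (Finset.mem_sdiff.1 hw).2
          simp only [Finset.mem_erase, not_and] at this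
          by_contra h'
          exact this h' hwσ
        rw [← h, this, Finset.insert_erase hx0]
      · right
        have hw' : w ∈ K \ σ := Finset.mem_sdiff.2 ⟨(Finset.mem_sdiff.1 hw).1, hwσ⟩
        exact ⟨w, hw', by rw [← h, hall w hw' w0 hw0]⟩

end

section

/-- Connected finite sets, built one element at a time. -/
inductive Bld {α : Type*} (adj : α → α → Prop) : Finset α → Prop
  | single (a : α) : Bld adj {a}
  | step (A : Finset α) (a b : α) : Bld adj A → a ∈ A → adj a b → b ∉ A → Bld adj (insert b A)

lemma Bld.split {α : Type*} {adj : α → α → Prop} (hs : ∀ a b, adj a b → adj b a)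
    {A : Finset α} (hA : Bld adj A) : ∀ r ∈ A, 2 ≤ A.card →
    ∃ A₁ A₂ : Finset α, Bld adj A₁ ∧ Bld adj A₂ ∧ Disjoint A₁ A₂ ∧ A₁ ∪ A₂ = A ∧ r ∈ A₁ ∧
      ∃ b ∈ A₂, adj r b := by
  induction hA with
  | single a => intro r _ h; simp at h
  | step A a b hA ha hab hb ih =>
    intro r hr _
    rcases Finset.mem_insert.1 hr with rfl | hr
    · exact ⟨{r}, A, Bld.single r, hA, by simpa using hb, by simp, by simp, a, ha, hs _ _ hab⟩
    · by_cases h2 : 2 ≤ A.card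
      · obtain ⟨A₁, A₂, b1, b2, hd, hu, hr1, c, hc, hrc⟩ := ih r hr h2
        have hb1 : b ∉ A₁ := fun h => hb (hu ▸ Finset.mem_union_left _ h)
        have hb2 : b ∉ A₂ := fun h => hb (hu ▸ Finset.mem_union_right _ h)
        rw [← hu, Finset.mem_union] at ha
        rcases ha with ha | ha
        · refine ⟨insert b A₁, A₂, Bld.step _ a b b1 ha hab hb1, b2, ?_, ?_, ?_, c, hc, hrc⟩
          · exact Finset.disjoint_insert_left.2 ⟨hb2, hd⟩
          · rw [Finset.insert_union, hu]
          · exact Finset.mem_insert_of_mem hr1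
        · refine ⟨A₁, insert b A₂, b1, Bld.step _ a b b2 ha hab hb2, ?_, ?_, hr1, c,
            Finset.mem_insert_of_mem hc, hrc⟩
          · exact Finset.disjoint_insert_right.2 ⟨hb1, hd⟩
          · rw [Finset.union_insert, hu]
      · have hcard : A.card = 1 := by
          have : 0 < A.card := Finset.card_pos.2 ⟨r, hr⟩
          omega
        obtain ⟨y, hy⟩ := Finset.card_eq_one.1 hcard
        subst hy
        simp only [Finset.mem_singleton] at ha hr hb
        subst ha; subst hr
        exact ⟨{r}, {b}, Bld.single _, Bld.single _, by simpa using fun h => hb h.symm,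
          by ext; simp [or_comm], by simp, b, by simp, hab⟩

lemma Bld.nonempty {α : Type*} {adj : α → α → Prop} {A : Finset α} (hA : Bld adj A) :
    A.Nonempty := by
  cases hA <;> simp

/-- rooted connected sets of size `m+1` -/
noncomputable def rooted {α : Type*} (adj : α → α → Prop) (U : Finset α) (r : α) (m : ℕ) :
    Finset (Finset α) :=
  U.powerset.filter (fun A => Bld adj A ∧ r ∈ A ∧ A.card = m + 1)

lemma rooted_card {α : Type*} {adj : α → α → Prop} (hs : ∀ a b, adj a b → adj b a)
    (U : Finset α) (d : ℕ) (hd : ∀ a ∈ U, (U.filter (adj a)).card ≤ d) :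
    ∀ m : ℕ, ∀ r ∈ U, (rooted adj U r m).card ≤ d ^ m * catalan m := by
  intro m
  induction m using Nat.strong_induction_on with
  | _ m ih =>
  intro r hr
  cases m with
  | zero =>
    simp only [pow_zero, catalan_zero, mul_one]
    rw [Finset.card_le_one]
    intro A hA B hB
    simp only [rooted, Finset.mem_filter, zero_add] at hA hB
    obtain ⟨x, hx⟩ := Finset.card_eq_one.1 hA.2.2.2
    obtain ⟨y, hy⟩ := Finset.card_eq_one.1 hB.2.2.2
    subst hx; subst hy
    have h1 := hA.2.2.1
    have h2 := hB.2.2.1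
    simp only [Finset.mem_singleton] at h1 h2
    rw [← h1, ← h2]
  | succ m =>
    have hsub : rooted adj U r (m + 1) ⊆ (Finset.HasAntidiagonal.antidiagonal m).biUnion (fun ij =>
        (rooted adj U r ij.1).biUnion fun A₁ => (U.filter (adj r)).biUnion fun b =>
          (rooted adj U b ij.2).image (fun A₂ => A₁ ∪ A₂)) := by
      intro A hA
      simp only [rooted, Finset.mem_filter, Finset.mem_powerset] at hA
      obtain ⟨hAU, hB, hrA, hc⟩ := hA
      obtain ⟨A₁, A₂, b1, b2, hdis, hu, hr1, b, hb, hrb⟩ := hB.split hs r hrA (by omega)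
      have p1 : 0 < A₁.card := Finset.card_pos.2 b1.nonempty
      have p2 : 0 < A₂.card := Finset.card_pos.2 b2.nonempty
      have hcs : A₁.card + A₂.card = m + 2 := by
        rw [← Finset.card_union_of_disjoint hdis, hu, hc]
      have s1 : A₁ ⊆ U := (hu ▸ Finset.subset_union_left).trans hAU
      have s2 : A₂ ⊆ U := (hu ▸ Finset.subset_union_right).trans hAU
      simp only [Finset.mem_biUnion, Finset.HasAntidiagonal.mem_antidiagonal, Finset.mem_image, Finset.mem_filter,
        rooted, Finset.mem_powerset]
      exact ⟨(A₁.card - 1, A₂.card - 1), by simp; omega, A₁, ⟨s1, b1, hr1, by simp; omega⟩, b,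
        ⟨s2 hb, hrb⟩, A₂, ⟨s2, b2, hb, by simp; omega⟩, hu⟩
    refine (Finset.card_le_card hsub).trans ?_
    refine Finset.card_biUnion_le.trans ?_
    rw [catalan_succ', Finset.mul_sum]
    refine Finset.sum_le_sum fun ij hij => ?_
    rw [Finset.HasAntidiagonal.mem_antidiagonal] at hij
    have e1 := ih ij.1 (by omega) r hr
    refine (Finset.card_biUnion_le_card_mul _ _ (d * (d ^ ij.2 * catalan ij.2)) ?_).trans ?_
    · intro A₁ _
      refine (Finset.card_biUnion_le_card_mul _ _ (d ^ ij.2 * catalan ij.2) ?_).trans ?_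
      · intro b hb
        exact Finset.card_image_le.trans (ih ij.2 (by omega) b (Finset.mem_filter.1 hb).1)
      · exact Nat.mul_le_mul_right _ (hd r hr)
    · calc _ ≤ (d ^ ij.1 * catalan ij.1) * (d * (d ^ ij.2 * catalan ij.2)) :=
            Nat.mul_le_mul_right _ e1
        _ = d ^ (m + 1) * (catalan ij.1 * catalan ij.2) := by
            rw [← hij]; ring

lemma catalan_le (m : ℕ) : catalan m ≤ 4 ^ m := by
  rw [catalan_eq_centralBinom_div]
  refine (Nat.div_le_self _ _).trans ?_
  rw [Nat.centralBinom_eq_two_mul_choose]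
  refine (Nat.choose_le_two_pow _ _).trans ?_
  rw [pow_mul]; norm_num

/-- connected subsets of size `m+1` -/
noncomputable def bldSets {α : Type*} (adj : α → α → Prop) (U : Finset α) (m : ℕ) :
    Finset (Finset α) :=
  U.powerset.filter (fun A => Bld adj A ∧ A.card = m + 1)

lemma bldSets_card {α : Type*} {adj : α → α → Prop} (hs : ∀ a b, adj a b → adj b a)
    (U : Finset α) (d : ℕ) (hd : ∀ a ∈ U, (U.filter (adj a)).card ≤ d) (m : ℕ) :
    (bldSets adj U m).card ≤ U.card * (4 * d) ^ m := by
  have : bldSets adj U m ⊆ U.biUnion (fun r => rooted adj U r m) := by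
    intro A hA
    simp only [bldSets, Finset.mem_filter, Finset.mem_powerset] at hA
    obtain ⟨r, hr⟩ := hA.2.1.nonempty
    simp only [Finset.mem_biUnion, rooted, Finset.mem_filter, Finset.mem_powerset]
    exact ⟨r, hA.1 hr, hA.1, hA.2.1, hr, hA.2.2⟩
  refine (Finset.card_le_card this).trans (Finset.card_biUnion_le_card_mul _ _ _ ?_)
  intro r hr
  refine (rooted_card hs U d hd m r hr).trans ?_
  rw [mul_pow, mul_comm]
  exact Nat.mul_le_mul_right _ (catalan_le m)

end

section

/-- Expectation with respect to the binomial random subset of `U`. -/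
noncomputable def Ex {α : Type*} (p : ℝ) (U : Finset α) (F : Finset α → ℝ) : ℝ :=
  ∑ H ∈ U.powerset, p ^ H.card * (1 - p) ^ (U \ H).card * F H

/-- Probability with respect to the binomial random subset of `U`. -/
noncomputable def Pr {α : Type*} (p : ℝ) (U : Finset α) (Q : Finset α → Prop) : ℝ :=
  Ex p U (fun H => if Q H then 1 else 0)

section
variable {α : Type*} {p : ℝ} {U : Finset α}

lemma Ex_mono (h0 : 0 ≤ p) (h1 : p ≤ 1) {F F' : Finset α → ℝ} (h : ∀ H ⊆ U, F H ≤ F' H) :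
    Ex p U F ≤ Ex p U F' := by
  refine Finset.sum_le_sum fun H hH => ?_
  have : 0 ≤ 1 - p := by linarith
  exact mul_le_mul_of_nonneg_left (h H (Finset.mem_powerset.1 hH)) (by positivity)

lemma Ex_congr {F F' : Finset α → ℝ} (h : ∀ H ⊆ U, F H = F' H) :
    Ex p U F = Ex p U F' :=
  Finset.sum_congr rfl fun H hH => by rw [h H (Finset.mem_powerset.1 hH)]

lemma Ex_sum {ι : Type*} (s : Finset ι) (F : ι → Finset α → ℝ) :
    Ex p U (fun H => ∑ i ∈ s, F i H) = ∑ i ∈ s, Ex p U (F i) := by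
  unfold Ex
  rw [Finset.sum_comm]
  exact Finset.sum_congr rfl fun H _ => by rw [Finset.mul_sum]

lemma Ex_smul (c : ℝ) (F : Finset α → ℝ) :
    Ex p U (fun H => c * F H) = c * Ex p U F := by
  unfold Ex
  rw [Finset.mul_sum]
  exact Finset.sum_congr rfl fun H _ => by ring

lemma Ex_add (F F' : Finset α → ℝ) :
    Ex p U (fun H => F H + F' H) = Ex p U F + Ex p U F' := by
  unfold Ex
  rw [← Finset.sum_add_distrib]
  exact Finset.sum_congr rfl fun H _ => by ring

lemma Ex_prod (a b : α → ℝ) :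
    Ex p U (fun H => ∏ K ∈ U, if K ∈ H then a K else b K) =
      ∏ K ∈ U, (p * a K + (1 - p) * b K) := by
  rw [Finset.prod_add]
  refine Finset.sum_congr rfl fun H hH => ?_
  rw [Finset.mem_powerset] at hH
  rw [Finset.prod_mul_distrib, Finset.prod_mul_distrib, Finset.prod_const, Finset.prod_const]
  have : (∏ K ∈ U, if K ∈ H then a K else b K) = (∏ K ∈ H, a K) * ∏ K ∈ U \ H, b K := by
    rw [← Finset.prod_sdiff hH, mul_comm]
    congr 1
    · exact Finset.prod_congr rfl fun K hK => by simp [hK]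
    · exact Finset.prod_congr rfl fun K hK => by simp [(Finset.mem_sdiff.1 hK).2]
  simp only [this]; ring

lemma Ex_one : Ex p U (fun _ => 1) = 1 := by
  have := Ex_prod (p := p) (U := U) (fun _ => 1) (fun _ => 1)
  simpa using this

lemma Pr_nonneg (h0 : 0 ≤ p) (h1 : p ≤ 1) (Q : Finset α → Prop) : 0 ≤ Pr p U Q := by
  have := Ex_mono (U := U) h0 h1 (F := fun _ => 0) (F' := fun H => if Q H then 1 else 0)
    (fun H _ => by split_ifs <;> simp)
  have h : Ex p U (fun _ => (0 : ℝ)) = 0 := by simp [Ex]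
  rw [h] at this
  exact this

lemma Pr_mono (h0 : 0 ≤ p) (h1 : p ≤ 1) {Q Q' : Finset α → Prop} (h : ∀ H ⊆ U, Q H → Q' H) :
    Pr p U Q ≤ Pr p U Q' := by
  refine Ex_mono h0 h1 fun H hH => ?_
  by_cases hq : Q H
  · simp [hq, h H hH hq]
  · simp only [hq, if_false]; split_ifs <;> simp

lemma Pr_congr {Q Q' : Finset α → Prop} (h : ∀ H ⊆ U, (Q H ↔ Q' H)) :
    Pr p U Q = Pr p U Q' :=
  Ex_congr fun H hH => by simp [h H hH]

lemma Pr_le_one (h0 : 0 ≤ p) (h1 : p ≤ 1) (Q : Finset α → Prop) : Pr p U Q ≤ 1 := by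
  rw [← Ex_one (p := p) (U := U)]
  exact Ex_mono h0 h1 fun H _ => by split_ifs <;> simp

lemma Pr_compl (Q : Finset α → Prop) : Pr p U Q + Pr p U (fun H => ¬ Q H) = 1 := by
  unfold Pr
  rw [← Ex_add]
  refine Eq.trans (Ex_congr fun H _ => ?_) (Ex_one (p := p) (U := U))
  by_cases h : Q H <;> simp [h]

lemma Pr_or (h0 : 0 ≤ p) (h1 : p ≤ 1) (Q Q' : Finset α → Prop) :
    Pr p U (fun H => Q H ∨ Q' H) ≤ Pr p U Q + Pr p U Q' := by
  unfold Pr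
  rw [← Ex_add]
  refine Ex_mono h0 h1 fun H _ => ?_
  by_cases h : Q H <;> by_cases h' : Q' H <;> simp [h, h']

lemma Pr_exists (h0 : 0 ≤ p) (h1 : p ≤ 1) {ι : Type*} (s : Finset ι)
    (Q : ι → Finset α → Prop) :
    Pr p U (fun H => ∃ i ∈ s, Q i H) ≤ ∑ i ∈ s, Pr p U (Q i) := by
  unfold Pr
  rw [← Ex_sum]
  refine Ex_mono h0 h1 fun H _ => ?_
  by_cases h : ∃ i ∈ s, Q i H
  · simp only [h, if_true]
    obtain ⟨i, hi, hq⟩ := h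
    have := Finset.single_le_sum (f := fun i => if Q i H then (1 : ℝ) else 0)
      (fun i _ => by split_ifs <;> simp) hi
    simpa [hq] using this
  · simp only [h, if_false]
    exact Finset.sum_nonneg fun i _ => by split_ifs <;> simp

lemma cyl_eq {A B : Finset α} (hA : A ⊆ U) (hB : B ⊆ U) (hAB : Disjoint A B) :
    Pr p U (fun H => A ⊆ H ∧ Disjoint B H) = p ^ A.card * (1 - p) ^ B.card := by
  have h := Ex_prod (p := p) (U := U) (fun K => if K ∈ B then 0 else 1)
    (fun K => if K ∈ A then 0 else 1)
  have e1 : Pr p U (fun H => A ⊆ H ∧ Disjoint B H) = Ex p U (fun H => ∏ K ∈ U,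
      if K ∈ H then (if K ∈ B then 0 else 1) else (if K ∈ A then 0 else 1)) := by
    refine Ex_congr fun H hH => ?_
    by_cases hq : A ⊆ H ∧ Disjoint B H
    · simp only [hq, and_self, if_true]
      symm
      refine Finset.prod_eq_one fun K hK => ?_
      by_cases hKH : K ∈ H
      · have : K ∉ B := fun hb => Finset.disjoint_left.1 hq.2 hb hKH
        simp [hKH, this]
      · have : K ∉ A := fun ha => hKH (hq.1 ha)
        simp [hKH, this]
    · simp only [hq, if_false]
      symm
      rw [Finset.prod_eq_zero_iff]
      by_cases h1 : A ⊆ H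
      · have h2 : ¬ Disjoint B H := fun h => hq ⟨h1, h⟩
        obtain ⟨K, hKB, hKH⟩ := Finset.not_disjoint_iff.1 h2
        exact ⟨K, hB hKB, by simp [hKB, hKH]⟩
      · obtain ⟨K, hKA, hKH⟩ := Finset.not_subset.1 h1
        exact ⟨K, hA hKA, by simp [hKA, hKH]⟩
  rw [e1, h, ← Finset.prod_sdiff (Finset.union_subset hA hB)]
  have e2 : ∏ K ∈ U \ (A ∪ B), (p * (if K ∈ B then 0 else 1) + (1 - p) * (if K ∈ A then 0 else 1))
      = 1 := by
    refine Finset.prod_eq_one fun K hK => ?_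
    simp only [Finset.mem_sdiff, Finset.mem_union, not_or] at hK
    simp [hK.2.1, hK.2.2]
  rw [e2, one_mul, Finset.prod_union hAB]
  congr 1
  · rw [← Finset.prod_const]
    refine Finset.prod_congr rfl fun K hK => ?_
    simp [hK, Finset.disjoint_left.1 hAB hK]
  · rw [← Finset.prod_const]
    refine Finset.prod_congr rfl fun K hK => ?_
    simp [hK, Finset.disjoint_right.1 hAB hK]

lemma cyl_le (h0 : 0 ≤ p) (h1 : p ≤ 1) {A B : Finset α} (hA : A ⊆ U) (hB : B ⊆ U) :
    Pr p U (fun H => A ⊆ H ∧ Disjoint B H) ≤ p ^ A.card * (1 - p) ^ B.card := by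
  by_cases hAB : Disjoint A B
  · exact (cyl_eq hA hB hAB).le
  · have h1' : 0 ≤ 1 - p := by linarith
    have : Pr p U (fun H => A ⊆ H ∧ Disjoint B H) = 0 := by
      unfold Pr Ex
      refine Finset.sum_eq_zero fun H _ => ?_
      have : ¬ (A ⊆ H ∧ Disjoint B H) := by
        rintro ⟨h, h'⟩
        exact hAB (h'.symm.mono_left h)
      simp [this]
    rw [this]; positivity

lemma chernoff (h0 : 0 ≤ p) (h1 : p ≤ 1) {B : Finset α} (hB : B ⊆ U) (L : ℕ) :
    Pr p U (fun H => (B ∩ H).card ≤ L) ≤ 2 ^ L * (1 - p / 2) ^ B.card := by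
  have h := Ex_prod (p := p) (U := U) (fun K => if K ∈ B then 1 / 2 else 1) (fun _ => 1)
  have e : ∏ K ∈ U, (p * (if K ∈ B then 1 / 2 else 1) + (1 - p) * 1) = (1 - p / 2) ^ B.card := by
    rw [← Finset.prod_sdiff hB, ← Finset.prod_const]
    rw [Finset.prod_eq_one, one_mul]
    · exact Finset.prod_congr rfl fun K hK => by simp only [hK, if_true]; ring
    · intro K hK
      simp [(Finset.mem_sdiff.1 hK).2]
  rw [e] at h
  rw [← h, ← Ex_smul]
  refine Ex_mono h0 h1 fun H hH => ?_
  have e2 : (∏ K ∈ U, if K ∈ H then (if K ∈ B then (1 : ℝ) / 2 else 1) else 1) =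
      (1 / 2) ^ (B ∩ H).card := by
    rw [← Finset.prod_const, ← Finset.prod_sdiff (Finset.inter_subset_left.trans hB : B ∩ H ⊆ U),
      Finset.prod_eq_one, one_mul]
    · refine Finset.prod_congr rfl fun K hK => ?_
      rw [Finset.mem_inter] at hK
      simp [hK.1, hK.2]
    · intro K hK
      simp only [Finset.mem_sdiff, Finset.mem_inter, not_and] at hK
      by_cases hKB : K ∈ B
      · simp [hK.2 hKB]
      · simp [hKB]
  rw [e2]
  split_ifs with hc
  · rw [one_div, inv_pow]
    rw [← div_eq_mul_inv, one_le_div (by positivity)]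
    exact pow_le_pow_right₀ (by norm_num) hc
  · positivity

lemma markov (h0 : 0 ≤ p) (h1 : p ≤ 1) (X : Finset α → ℕ) (L : ℕ) (hL : 0 < L) :
    Pr p U (fun H => ¬ X H ≤ L) ≤ Ex p U (fun H => (X H : ℝ)) / L := by
  have hL' : (0 : ℝ) < L := by exact_mod_cast hL
  rw [le_div_iff₀ hL', mul_comm]
  unfold Pr
  rw [← Ex_smul]
  refine Ex_mono h0 h1 fun H _ => ?_
  by_cases h : X H ≤ L
  · simp [h]
  · have : L ≤ X H := by omega
    simp [h, this]

end

/-- The random set of `k`-simplices. -/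
noncomputable def Hof (k n : ℕ) (t : Finset (Fin n) → ℝ) (p : ℝ) : Finset (Finset (Fin n)) :=
  (Finset.powersetCard (k + 1) Finset.univ).filter (fun K => t K ≤ p)

lemma bridge (k n : ℕ) (p : ℝ) (h0 : 0 ≤ p) (h1 : p ≤ 1) (Q : Finset (Finset (Fin n)) → Prop) :
    birthMeasure n {t | Q (Hof k n t p)} =
      ENNReal.ofReal (Pr p (Finset.powersetCard (k + 1) Finset.univ) Q) := by
  set U : Finset (Finset (Fin n)) := Finset.powersetCard (k + 1) Finset.univ with hU
  have hset : ∀ H ⊆ U, {t | Hof k n t p = H} = Set.pi Set.univ (fun K : Finset (Fin n) =>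
      if K ∈ U then (if K ∈ H then Set.Iic p else Set.Ioi p) else Set.univ) := by
    intro H hH
    ext t
    simp only [Set.mem_ofPred_eq, Set.mem_pi, Set.mem_univ, forall_true_left, Hof, ← hU]
    constructor
    · intro h K
      by_cases hK : K ∈ U
      · by_cases hKH : K ∈ H
        · simp only [hK, hKH, if_true]
          rw [← h, Finset.mem_filter] at hKH
          exact hKH.2
        · simp only [hK, hKH, if_true, if_false, Set.mem_Ioi]
          by_contra hc
          apply hKH
          rw [← h, Finset.mem_filter]
          exact ⟨hK, not_lt.1 hc⟩
      · simp [hK]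
    · intro h
      ext K
      rw [Finset.mem_filter]
      have := h K
      by_cases hK : K ∈ U
      · by_cases hKH : K ∈ H
        · simp only [hK, hKH, if_true, Set.mem_Iic] at this
          simp [hK, hKH, this]
        · simp only [hK, hKH, if_true, if_false, Set.mem_Ioi] at this
          simp [hKH, this]
      · simp only [hK, false_and, false_iff]
        exact fun h => hK (hH h)
  have hmeas : ∀ H ⊆ U, MeasurableSet {t | Hof k n t p = H} := by
    intro H hH
    rw [hset H hH]
    refine MeasurableSet.univ_pi fun K => ?_
    split_ifs
    · exact measurableSet_Iic
    · exact measurableSet_Ioi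
    · exact MeasurableSet.univ
  have hval : ∀ H ⊆ U, birthMeasure n {t | Hof k n t p = H} =
      ENNReal.ofReal (p ^ H.card * (1 - p) ^ (U \ H).card) := by
    intro H hH
    rw [hset H hH, birthMeasure]
    have : SigmaFinite (volume.restrict (Set.Icc (0 : ℝ) 1)) := inferInstance
    rw [Measure.pi_pi]
    have e : ∀ K : Finset (Fin n), (volume.restrict (Set.Icc (0 : ℝ) 1))
        (if K ∈ U then (if K ∈ H then Set.Iic p else Set.Ioi p) else Set.univ) =
        ENNReal.ofReal (if K ∈ U then (if K ∈ H then p else 1 - p) else 1) := by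
      intro K
      split_ifs
      · rw [Measure.restrict_apply measurableSet_Iic]
        have : Set.Iic p ∩ Set.Icc 0 1 = Set.Icc 0 p := by
          ext x; simp only [Set.mem_inter_iff, Set.mem_Iic, Set.mem_Icc]
          constructor
          · rintro ⟨a, b, c⟩; exact ⟨b, a⟩
          · rintro ⟨a, b⟩; exact ⟨b, a, b.trans h1⟩
        rw [this]; simp
      · rw [Measure.restrict_apply measurableSet_Ioi]
        have : Set.Ioi p ∩ Set.Icc 0 1 = Set.Ioc p 1 := by
          ext x; simp only [Set.mem_inter_iff, Set.mem_Ioi, Set.mem_Icc, Set.mem_Ioc]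
          constructor
          · rintro ⟨a, b, c⟩; exact ⟨a, c⟩
          · rintro ⟨a, b⟩; exact ⟨a, h0.trans a.le, b⟩
        rw [this]; simp
      · simp
    rw [Finset.prod_congr rfl fun K _ => e K]
    rw [← ENNReal.ofReal_prod_of_nonneg]
    · congr 1
      rw [← Finset.prod_subset (Finset.subset_univ U), ← Finset.prod_sdiff hH, mul_comm]
      · congr 1
        · rw [← Finset.prod_const]
          exact Finset.prod_congr rfl fun K hK => by simp [hK, hH hK]
        · rw [← Finset.prod_const]
          refine Finset.prod_congr rfl fun K hK => ?_
          rw [Finset.mem_sdiff] at hK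
          simp [hK.1, hK.2]
      · intro K _ hK
        simp [hK]
    · intro K _
      have : 0 ≤ 1 - p := by linarith
      split_ifs <;> first | assumption | norm_num
  have hsplit : {t : Finset (Fin n) → ℝ | Q (Hof k n t p)} =
      ⋃ H ∈ U.powerset.filter Q, {t | Hof k n t p = H} := by
    ext t
    simp only [Set.mem_ofPred_eq, Set.mem_iUnion, Finset.mem_filter, Finset.mem_powerset,
      exists_prop]
    constructor
    · intro h
      exact ⟨_, ⟨Finset.filter_subset _ _, h⟩, rfl⟩
    · rintro ⟨H, ⟨_, h⟩, rfl⟩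
      exact h
  rw [hsplit, measure_biUnion_finset]
  · rw [Finset.sum_congr rfl fun H hH => hval H
      (Finset.mem_powerset.1 (Finset.mem_filter.1 hH).1)]
    rw [← ENNReal.ofReal_sum_of_nonneg]
    · congr 1
      unfold Pr Ex
      rw [Finset.sum_filter]
      refine Finset.sum_congr rfl fun H _ => ?_
      by_cases hq : Q H
      · simp only [hq, if_true, mul_one]
        congr!
      · simp [hq]
    · intro H _
      have : 0 ≤ 1 - p := by linarith
      positivity
  · intro H _ H' _ hne
    refine Set.disjoint_left.2 ?_
    rintro t h h'
    exact hne (h.symm.trans h')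
  · intro H hH
    exact hmeas H (Finset.mem_powerset.1 (Finset.mem_filter.1 hH).1)

end

section

/-- truncated inclusion-exclusion sum -/
noncomputable def bonf (X s m : ℕ) : ℝ :=
  ∑ i ∈ Finset.range (m + 1), (-1 : ℝ) ^ i * ((s + i).choose s) * (X.choose (s + i))

lemma alt_sum (N m : ℕ) :
    ∑ i ∈ Finset.range (m + 1), (-1 : ℝ) ^ i * ((N + 1).choose i) = (-1) ^ m * N.choose m := by
  induction m with
  | zero => simp
  | succ m ih =>
    rw [Finset.sum_range_succ, ih, Nat.choose_succ_succ, pow_succ]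
    push_cast; ring

lemma bonf_lt {X s : ℕ} (h : X < s) (m : ℕ) : bonf X s m = 0 := by
  unfold bonf
  refine Finset.sum_eq_zero fun i _ => ?_
  rw [Nat.choose_eq_zero_of_lt (show X < s + i by omega)]; simp

lemma bonf_self (s m : ℕ) : bonf s s m = 1 := by
  unfold bonf
  rw [Finset.sum_range_succ']
  have : ∑ i ∈ Finset.range m, (-1 : ℝ) ^ (i + 1) * ((s + (i + 1)).choose s) *
      (s.choose (s + (i + 1))) = 0 := by
    refine Finset.sum_eq_zero fun i _ => ?_
    rw [Nat.choose_eq_zero_of_lt (show s < s + (i + 1) by omega)]; simp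
  rw [this]; simp

lemma bonf_gt (s N m : ℕ) :
    bonf (s + (N + 1)) s m = (-1) ^ m * ((s + (N + 1)).choose s * N.choose m) := by
  unfold bonf
  have : ∀ i ∈ Finset.range (m + 1), (-1 : ℝ) ^ i * ((s + i).choose s) *
      ((s + (N + 1)).choose (s + i)) =
      (s + (N + 1)).choose s * ((-1 : ℝ) ^ i * ((N + 1).choose i)) := by
    intro i _
    by_cases hi : i ≤ N + 1
    · have := Nat.choose_mul (n := s + (N + 1)) (k := s + i) (s := s) (by omega)
      have e1 : s + (N + 1) - s = N + 1 := by omega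
      have e2 : s + i - s = i := by omega
      rw [e1, e2] at this
      have h2 : ((s + (N + 1)).choose (s + i) : ℝ) * (s + i).choose s =
        (s + (N + 1)).choose s * (N + 1).choose i := by exact_mod_cast this
      linear_combination (-1 : ℝ) ^ i * h2
    · rw [Nat.choose_eq_zero_of_lt (show s + (N + 1) < s + i by omega),
        Nat.choose_eq_zero_of_lt (show N + 1 < i by omega)]
      simp
  rw [Finset.sum_congr rfl this, ← Finset.mul_sum, alt_sum]
  ring

lemma bonf_even (X s m : ℕ) (hm : Even m) : (if X = s then (1 : ℝ) else 0) ≤ bonf X s m := by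
  rcases lt_trichotomy X s with h | h | h
  · simp [bonf_lt h, h.ne]
  · subst h; simp [bonf_self]
  · obtain ⟨N, rfl⟩ : ∃ N, X = s + (N + 1) := ⟨X - s - 1, by omega⟩
    rw [bonf_gt, hm.neg_one_pow]
    simp only [show ¬ (s + (N + 1) = s) by omega, if_false]
    positivity

lemma bonf_odd (X s m : ℕ) (hm : Odd m) : bonf X s m ≤ (if X = s then (1 : ℝ) else 0) := by
  rcases lt_trichotomy X s with h | h | h
  · simp [bonf_lt h, h.ne]
  · subst h; simp [bonf_self]
  · obtain ⟨N, rfl⟩ : ∃ N, X = s + (N + 1) := ⟨X - s - 1, by omega⟩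
    rw [bonf_gt, hm.neg_one_pow]
    simp only [show ¬ (s + (N + 1) = s) by omega, if_false]
    have : (0 : ℝ) ≤ (s + (N + 1)).choose s * N.choose m := by positivity
    linarith

lemma poisson_of_moments {α : ℕ → Type*} (p : ℕ → ℝ) (U : ∀ n, Finset (α n))
    (hp : ∀ᶠ n in atTop, 0 ≤ p n ∧ p n ≤ 1) (X : ∀ n, Finset (α n) → ℕ) (lam : ℝ)
    (hmom : ∀ r : ℕ, Tendsto (fun n => Ex (p n) (U n) (fun H => ((X n H).choose r : ℝ))) atTop
      (nhds (lam ^ r / r.factorial))) (s : ℕ) :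
    Tendsto (fun n => Pr (p n) (U n) (fun H => X n H = s)) atTop
      (nhds (Real.exp (-lam) * lam ^ s / s.factorial)) := by
  set L := Real.exp (-lam) * lam ^ s / s.factorial with hL
  set b : ℕ → ℝ := fun m => ∑ i ∈ Finset.range (m + 1),
    (-1 : ℝ) ^ i * ((s + i).choose s) * (lam ^ (s + i) / (s + i).factorial) with hb
  have ha : ∀ m, Tendsto (fun n => Ex (p n) (U n) (fun H => bonf (X n H) s m)) atTop
      (nhds (b m)) := by
    intro m
    simp only [bonf, Ex_sum, Ex_smul]
    refine tendsto_finsetSum _ fun i _ => ?_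
    exact (hmom (s + i)).const_mul _
  have hbL : Tendsto b atTop (nhds L) := by
    have h1 : ∀ m, b m = lam ^ s / s.factorial * ∑ i ∈ Finset.range (m + 1),
        (-lam) ^ i / i.factorial := by
      intro m
      rw [hb, Finset.mul_sum]
      refine Finset.sum_congr rfl fun i _ => ?_
      have : ((s + i).choose s : ℝ) * s.factorial * i.factorial = (s + i).factorial := by
        have := Nat.choose_mul_factorial_mul_factorial (Nat.le_add_right s i)
        rw [Nat.add_sub_cancel_left] at this
        exact_mod_cast this
      have h1 : ((s + i).factorial : ℝ) ≠ 0 := by positivity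
      have h2 : (s.factorial : ℝ) ≠ 0 := by positivity
      have h3 : (i.factorial : ℝ) ≠ 0 := by positivity
      have h4 : (((s + i).choose s : ℕ) : ℝ) = (s + i).factorial / (s.factorial * i.factorial) := by
        field_simp; linarith
      rw [h4, neg_pow lam, pow_add]
      field_simp
    have h2 : Tendsto (fun m => ∑ i ∈ Finset.range m, (-lam) ^ i / (i.factorial : ℝ)) atTop
        (nhds (Real.exp (-lam))) := by
      have := NormedSpace.expSeries_div_hasSum_exp (𝔸 := ℝ) (-lam)
      rw [← Real.exp_eq_exp_ℝ] at this
      exact this.tendsto_sum_nat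
    have h3 := ((tendsto_add_atTop_iff_nat 1).2 h2).const_mul (lam ^ s / (s.factorial : ℝ))
    have : lam ^ s / s.factorial * Real.exp (-lam) = L := by rw [hL]; ring
    rw [this] at h3
    exact h3.congr fun m => (h1 m).symm
  rw [tendsto_order]
  constructor
  · intro a haL
    have := (tendsto_order.1 hbL).1 a haL
    obtain ⟨M, hM⟩ := eventually_atTop.1 this
    have h1 := (tendsto_order.1 (ha (2 * M + 1))).1 a (hM _ (by omega))
    filter_upwards [h1, hp] with n hn hpn
    refine hn.trans_le (Ex_mono hpn.1 hpn.2 fun H _ => ?_)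
    convert bonf_odd (X n H) s (2 * M + 1) ⟨M, rfl⟩ using 2
  · intro a haL
    have := (tendsto_order.1 hbL).2 a haL
    obtain ⟨M, hM⟩ := eventually_atTop.1 this
    have h1 := (tendsto_order.1 (ha (2 * M))).2 a (hM _ (by omega))
    filter_upwards [h1, hp] with n hn hpn
    refine lt_of_le_of_lt (Ex_mono hpn.1 hpn.2 fun H _ => ?_) hn
    convert bonf_even (X n H) s (2 * M) ⟨M, by omega⟩ using 2

end

section

variable {V : Type*} [Fintype V]

/-- All potential `k`-simplices. -/
noncomputable def KK (V : Type*) [Fintype V] (k : ℕ) : Finset (Finset V) :=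
  Finset.powersetCard (k + 1) Finset.univ

lemma mem_KK {k : ℕ} {K : Finset V} : K ∈ KK V k ↔ K.card = k + 1 := by
  simp [KK, Finset.mem_powersetCard]

lemma card_KK (k : ℕ) : (KK V k).card = (Fintype.card V).choose (k + 1) := by
  simp [KK]

lemma card_super {k : ℕ} (σ : Finset V) (h : σ.card ≤ k + 1) :
    ((KK V k).filter (fun K => σ ⊆ K)).card =
      (Fintype.card V - σ.card).choose (k + 1 - σ.card) := by
  have : (Fintype.card V - σ.card).choose (k + 1 - σ.card) =
      (Finset.powersetCard (k + 1 - σ.card) (Finset.univ \ σ)).card := by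
    rw [Finset.card_powersetCard, Finset.card_sdiff_of_subset (Finset.subset_univ _),
      Finset.card_univ]
  rw [this]
  refine Finset.card_nbij' (fun K => K \ σ) (fun L => L ∪ σ) ?_ ?_ ?_ ?_
  · intro K hK
    simp only [Finset.coe_filter, Set.mem_ofPred_eq, mem_KK] at hK
    simp only [Finset.mem_coe, Finset.mem_powersetCard]
    refine ⟨Finset.sdiff_subset_sdiff (Finset.subset_univ _) le_rfl, ?_⟩
    rw [Finset.card_sdiff_of_subset hK.2, hK.1]
  · intro L hL
    simp only [Finset.mem_coe, Finset.mem_powersetCard] at hL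
    simp only [Finset.coe_filter, Set.mem_ofPred_eq, mem_KK]
    refine ⟨?_, Finset.subset_union_right⟩
    rw [Finset.card_union_of_disjoint, hL.2]
    · omega
    · exact Finset.disjoint_left.2 fun x hx => (Finset.mem_sdiff.1 (hL.1 hx)).2
  · intro K hK
    simp only [Finset.coe_filter, Set.mem_ofPred_eq, mem_KK] at hK
    exact Finset.sdiff_union_of_subset hK.2
  · intro L hL
    simp only [Finset.mem_coe, Finset.mem_powersetCard] at hL
    ext x
    simp only [Finset.mem_sdiff, Finset.mem_union]
    constructor
    · rintro ⟨h | h, h'⟩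
      · exact h
      · exact absurd h h'
    · intro h
      exact ⟨Or.inl h, (Finset.mem_sdiff.1 (hL.1 h)).2⟩

lemma card_super_le {k : ℕ} (σ : Finset V) :
    ((KK V k).filter (fun K => σ ⊆ K)).card ≤ (Fintype.card V) ^ (k + 1 - σ.card) := by
  by_cases h : σ.card ≤ k + 1
  · rw [card_super σ h]
    refine (Nat.choose_le_pow _ _).trans ?_
    exact Nat.pow_le_pow_left (Nat.sub_le _ _) _
  · have : (KK V k).filter (fun K => σ ⊆ K) = ∅ := by
      rw [Finset.filter_eq_empty_iff]
      intro K hK hs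
      rw [mem_KK] at hK
      have := Finset.card_le_card hs
      omega
    rw [this]; simp

/-- Potential `k`-simplices containing exactly one element of `S`. -/
noncomputable def U1 (k : ℕ) (S : Finset (Finset V)) : Finset (Finset V) :=
  (KK V k).filter (fun K => (S.filter (fun σ => σ ⊆ K)).card = 1)

lemma exactly_one {k m : ℕ} (hm : m ≤ k) (S : Finset (Finset V)) (hS : ∀ σ ∈ S, σ.card = m) :
    S.card * (Fintype.card V - m).choose (k + 1 - m) ≤
      (U1 k S).card + S.card ^ 2 * (Fintype.card V) ^ (k - m) := by
  have e1 : S.card * (Fintype.card V - m).choose (k + 1 - m) =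
      ∑ K ∈ KK V k, (S.filter (fun σ => σ ⊆ K)).card := by
    simp only [Finset.card_filter]
    rw [Finset.sum_comm, Finset.card_eq_sum_ones, Finset.sum_mul]
    refine Finset.sum_congr rfl fun σ hσ => ?_
    rw [← Finset.card_filter, card_super σ (by rw [hS σ hσ]; omega), hS σ hσ, one_mul]
  have e2 : ∑ K ∈ KK V k, ((S.filter (fun σ => σ ⊆ K)).offDiag).card ≤
      S.card ^ 2 * (Fintype.card V) ^ (k - m) := by
    have : ∀ K ∈ KK V k, ((S.filter (fun σ => σ ⊆ K)).offDiag).card =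
        ∑ x ∈ S.offDiag, if x.1 ∪ x.2 ⊆ K then 1 else 0 := by
      intro K _
      rw [← Finset.card_filter]
      congr 1
      ext x
      simp only [Finset.mem_offDiag, Finset.mem_filter, Finset.union_subset_iff]
      tauto
    rw [Finset.sum_congr rfl this, Finset.sum_comm]
    have h2 : ∀ x ∈ S.offDiag, (∑ K ∈ KK V k, if x.1 ∪ x.2 ⊆ K then 1 else 0) ≤
        (Fintype.card V) ^ (k - m) := by
      intro x hx
      rw [← Finset.card_filter]
      refine (card_super_le _).trans ?_
      rw [Finset.mem_offDiag] at hx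
      have hlt : m < (x.1 ∪ x.2).card := by
        by_contra hc
        have h1 : x.1 = x.1 ∪ x.2 := Finset.eq_of_subset_of_card_le Finset.subset_union_left
          (by rw [hS _ hx.1]; omega)
        have h2 : x.2 = x.1 ∪ x.2 := Finset.eq_of_subset_of_card_le Finset.subset_union_right
          (by rw [hS _ hx.2.1]; omega)
        exact hx.2.2 (h1.trans h2.symm)
      have hpos : 0 < Fintype.card V := by
        have : (x.1 ∪ x.2).card ≤ Fintype.card V := Finset.card_le_univ _
        omega
      exact Nat.pow_le_pow_right hpos (by omega)
    refine (Finset.sum_le_card_nsmul _ _ _ h2).trans ?_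
    rw [smul_eq_mul]
    refine Nat.mul_le_mul_right _ ?_
    rw [Finset.offDiag_card, sq]
    exact Nat.sub_le _ _
  have e3 : (U1 k S).card = ∑ K ∈ KK V k,
      if (S.filter (fun σ => σ ⊆ K)).card = 1 then 1 else 0 := by
    rw [U1, Finset.card_filter]
  rw [e1, e3]
  refine le_trans ?_ (Nat.add_le_add_left e2 _)
  rw [← Finset.sum_add_distrib]
  refine Finset.sum_le_sum fun K _ => ?_
  rw [Finset.offDiag_card]
  generalize (S.filter (fun σ => σ ⊆ K)).card = d
  rcases d with _ | _ | d
  · simp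
  · simp
  · have : (d + 1 + 1) * (d + 1 + 1) - (d + 1 + 1) = (d + 1 + 1) * (d + 1) := by
      rw [← Nat.mul_sub_one]; rfl
    rw [this]
    have : (d + 1 + 1) * 1 ≤ (d + 1 + 1) * (d + 1) := Nat.mul_le_mul_left _ (by omega)
    omega

/-- `K` contains a member of `D` -/
def Hits (D : Finset (Finset V)) (K : Finset V) : Prop := ∃ ρ ∈ D, ρ ⊆ K

lemma cover_lb {k s : ℕ} (hs : s ≤ k + 1) (D : Finset (Finset V)) (hD : ∀ σ ∈ D, σ.card = s) :
    D.card * (Fintype.card V - s).choose (k + 1 - s) ≤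
      ((KK V k).filter (Hits D)).card * 2 ^ (k + 1) := by
  have e1 : D.card * (Fintype.card V - s).choose (k + 1 - s) =
      ∑ K ∈ KK V k, (D.filter (fun σ => σ ⊆ K)).card := by
    simp only [Finset.card_filter]
    rw [Finset.sum_comm, Finset.card_eq_sum_ones, Finset.sum_mul]
    refine Finset.sum_congr rfl fun σ hσ => ?_
    rw [← Finset.card_filter, card_super σ (by rw [hD σ hσ]; omega), hD σ hσ, one_mul]
  rw [e1, Finset.card_filter, Finset.sum_mul]
  refine Finset.sum_le_sum fun K hK => ?_
  split_ifs with h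
  · rw [one_mul, ← mem_KK.1 hK, ← Finset.card_powerset]
    refine Finset.card_le_card fun σ hσ => ?_
    exact Finset.mem_powerset.2 (Finset.mem_filter.1 hσ).2
  · have : D.filter (fun σ => σ ⊆ K) = ∅ := by
      rw [Finset.filter_eq_empty_iff]
      exact fun σ hσ hs => h ⟨σ, hσ, hs⟩
    simp [this]

/-- adjacency of potential `k`-simplices -/
def KAdj (m : ℕ) (K K' : Finset V) : Prop := ∃ σ : Finset V, σ.card = m ∧ σ ⊆ K ∧ σ ⊆ K'

lemma KAdj_symm (m : ℕ) (K K' : Finset V) (h : KAdj m K K') : KAdj m K' K := by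
  obtain ⟨σ, h1, h2, h3⟩ := h
  exact ⟨σ, h1, h3, h2⟩

lemma KAdj_deg {k m : ℕ} (K : Finset V) (hK : K ∈ KK V k) :
    ((KK V k).filter (KAdj m K)).card ≤ 2 ^ (k + 1) * (Fintype.card V) ^ (k + 1 - m) := by
  have : (KK V k).filter (KAdj m K) ⊆ (Finset.powersetCard m K).biUnion
      (fun σ => (KK V k).filter (fun K' => σ ⊆ K')) := by
    intro K' h
    obtain ⟨h1, σ, h2, h3, h4⟩ := Finset.mem_filter.1 h
    simp only [Finset.mem_biUnion, Finset.mem_filter, Finset.mem_powersetCard]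
    exact ⟨σ, ⟨h3, h2⟩, h1, h4⟩
  refine (Finset.card_le_card this).trans ?_
  refine (Finset.card_biUnion_le_card_mul _ _ ((Fintype.card V) ^ (k + 1 - m)) ?_).trans ?_
  · intro σ hσ
    have := card_super_le (k := k) σ
    rw [(Finset.mem_powersetCard.1 hσ).2] at this
    exact this
  · refine Nat.mul_le_mul_right _ ?_
    rw [← mem_KK.1 hK, ← Finset.card_powerset]
    exact Finset.card_le_card (fun σ hσ => Finset.mem_powerset.2 (Finset.mem_powersetCard.1 hσ).1)

/-- `m`-sets contained in a member of `A` -/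
noncomputable def cov (m : ℕ) (A : Finset (Finset V)) : Finset (Finset V) :=
  A.biUnion (Finset.powersetCard m)

lemma mem_cov {m : ℕ} {A : Finset (Finset V)} {σ : Finset V} :
    σ ∈ cov m A ↔ σ.card = m ∧ ∃ K ∈ A, σ ⊆ K := by
  simp only [cov, Finset.mem_biUnion, Finset.mem_powersetCard]
  constructor
  · rintro ⟨K, h, h1, h2⟩; exact ⟨h2, K, h, h1⟩
  · rintro ⟨h2, K, h, h1⟩; exact ⟨K, h, h1, h2⟩

lemma card_cov {k m : ℕ} {A : Finset (Finset V)} (hA : A ⊆ KK V k) :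
    (cov m A).card ≤ 2 ^ (k + 1) * A.card := by
  unfold cov
  rw [mul_comm]
  refine Finset.card_biUnion_le_card_mul _ _ _ fun K hK => ?_
  rw [← mem_KK.1 (hA hK), ← Finset.card_powerset]
  exact Finset.card_le_card (fun σ hσ => Finset.mem_powerset.2 (Finset.mem_powersetCard.1 hσ).1)

/-- indicator cochain -/
noncomputable def ind (S : Finset (Finset V)) (σ : Finset V) : ZMod 2 := if σ ∈ S then 1 else 0

lemma ind_ne {S : Finset (Finset V)} {σ : Finset V} : ind S σ ≠ 0 ↔ σ ∈ S := by
  unfold ind; split_ifs with h <;> simp [h]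

lemma supp_ind {m : ℕ} {S : Finset (Finset V)} (hS : ∀ σ ∈ S, σ.card = m) :
    supp m (ind S) = S := by
  ext σ
  rw [mem_supp, ind_ne]
  exact ⟨fun h => h.2, fun h => ⟨hS σ h, h⟩⟩

/-- potential simplices on which `ind S` is not a cocycle -/
noncomputable def badK (k m : ℕ) (S : Finset (Finset V)) : Finset (Finset V) :=
  (KK V k).filter (Hits (supp (m + 1) (dd (ind S))))

lemma not_coc_iff {m : ℕ} {f : Finset V → ZMod 2} {K : Finset V} :
    ¬ CocOn f m K ↔ ∃ ρ ∈ supp (m + 1) (dd f), ρ ⊆ K := by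
  unfold CocOn
  push Not
  constructor
  · rintro ⟨ρ, h1, h2, h3⟩; exact ⟨ρ, mem_supp.2 ⟨h2, h3⟩, h1⟩
  · rintro ⟨ρ, h1, h2⟩
    rw [mem_supp] at h1
    exact ⟨ρ, h2, h1.1, h1.2⟩

lemma U1_subset_badK {k m : ℕ} (hm : m ≤ k) (S : Finset (Finset V)) (hS : ∀ σ ∈ S, σ.card = m) :
    U1 k S ⊆ badK k m S := by
  intro K hK
  simp only [U1, Finset.mem_filter] at hK
  simp only [badK, Finset.mem_filter]
  refine ⟨hK.1, ?_⟩
  obtain ⟨σ, hσ⟩ := Finset.card_eq_one.1 hK.2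
  have h1 : σ ∈ S.filter (fun σ => σ ⊆ K) := by rw [hσ]; simp
  rw [Finset.mem_filter] at h1
  have hKc := mem_KK.1 hK.1
  have : (K \ σ).Nonempty := by
    rw [← Finset.card_pos, Finset.card_sdiff_of_subset h1.2, hS σ h1.1, hKc]; omega
  obtain ⟨w, hw⟩ := this
  rw [Finset.mem_sdiff] at hw
  have hsub : insert w σ ⊆ K := Finset.insert_subset hw.1 h1.2
  refine ⟨insert w σ, mem_supp.2 ⟨?_, ?_⟩, hsub⟩
  · rw [Finset.card_insert_of_notMem hw.2, hS σ h1.1]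
  · unfold dd
    rw [Finset.sum_insert hw.2, Finset.erase_insert hw.2, Finset.sum_eq_zero, add_zero]
    · exact ind_ne.2 h1.1
    · intro x hx
      by_contra hne
      have h2 := ind_ne.1 hne
      have h3 : (insert w σ).erase x ∈ S.filter (fun σ => σ ⊆ K) :=
        Finset.mem_filter.2 ⟨h2, (Finset.erase_subset _ _).trans hsub⟩
      rw [hσ, Finset.mem_singleton] at h3
      rw [← h3] at hx
      simp at hx

end

section

variable {V : Type*}

/-- the complex generated by `H` -/
def cx (H : Finset (Finset V)) : Set (Finset V) :=
  {A | (∃ v, A = {v}) ∨ (A.Nonempty ∧ ∃ K ∈ H, A ⊆ K)}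

lemma cx_down {H : Finset (Finset V)} {A B : Finset V} (hA : A ∈ cx H) (hB : B ⊆ A)
    (hne : B.Nonempty) : B ∈ cx H := by
  rcases hA with ⟨v, rfl⟩ | ⟨h1, K, hK, h2⟩
  · left
    exact ⟨v, (Finset.Nonempty.subset_singleton_iff hne).1 hB⟩
  · exact Or.inr ⟨hne, K, hK, hB.trans h2⟩

lemma mem_cx_of_two {H : Finset (Finset V)} {A : Finset V} (hA : 2 ≤ A.card) :
    A ∈ cx H ↔ ∃ K ∈ H, A ⊆ K := by
  constructor
  · rintro (⟨v, rfl⟩ | ⟨_, h⟩)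
    · simp at hA
    · exact h
  · intro h
    exact Or.inr ⟨Finset.card_pos.1 (by omega), h⟩

/-- restriction of a function to a cochain -/
def rs (G : Set (Finset V)) (i : ℕ) : (Finset V → ZMod 2) →ₗ[ZMod 2] Cochain G i where
  toFun g := fun A => g A.1
  map_add' _ _ := rfl
  map_smul' _ _ := rfl

lemma rs_surj (G : Set (Finset V)) (i : ℕ) (f : Cochain G i) : ∃ g, rs G i g = f := by
  refine ⟨fun A => if h : IsSimplex G i A then f ⟨A, h⟩ else 0, ?_⟩
  funext A
  simp [rs, A.2]

lemma sum_faces (g : Finset V → ZMod 2) (σ : Finset V) (i : ℕ) (h : σ.card = i + 2) :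
    ∑ τ ∈ Finset.powersetCard (i + 1) σ, g τ = dd g σ := by
  unfold dd
  have : Finset.powersetCard (i + 1) σ = σ.image (fun x => σ.erase x) := by
    ext τ
    simp only [Finset.mem_powersetCard, Finset.mem_image]
    constructor
    · rintro ⟨h1, h2⟩
      have h3 : (σ \ τ).card = 1 := by
        rw [Finset.card_sdiff_of_subset h1]; omega
      obtain ⟨x, hx⟩ := Finset.card_eq_one.1 h3
      have hx' : x ∈ σ \ τ := by rw [hx]; simp
      refine ⟨x, (Finset.mem_sdiff.1 hx').1, ?_⟩
      rw [← Finset.sdiff_singleton_eq_erase, ← hx]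
      exact Finset.sdiff_sdiff_eq_self h1
    · rintro ⟨x, hx, rfl⟩
      refine ⟨Finset.erase_subset _ _, ?_⟩
      rw [Finset.card_erase_of_mem hx]; omega
  rw [this, Finset.sum_image]
  intro x hx y hy hxy
  by_contra hne
  have h1 : y ∈ σ.erase x := Finset.mem_erase.2 ⟨fun h => hne h.symm, hy⟩
  have hxy' : σ.erase x = σ.erase y := hxy
  rw [hxy'] at h1
  simp at h1

lemma cob_rs (H : Finset (Finset V)) (i : ℕ) (g : Finset V → ZMod 2) :
    coboundary (cx H) i (rs (cx H) i g) = rs (cx H) (i + 1) (dd g) := by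
  funext σ
  show (∑ τ ∈ Finset.powersetCard (i + 1) (σ : Finset V),
      if h : IsSimplex (cx H) i τ then rs (cx H) i g ⟨τ, h⟩ else 0) = dd g σ.1
  rw [← sum_faces g σ.1 i σ.2.2]
  refine Finset.sum_congr rfl fun τ hτ => ?_
  rw [Finset.mem_powersetCard] at hτ
  rw [dif_pos]
  · rfl
  · exact ⟨cx_down σ.2.1 hτ.1 (Finset.card_pos.1 (by omega)), hτ.2⟩

lemma rs_eq {G : Set (Finset V)} {i : ℕ} {f g : Finset V → ZMod 2} :
    rs G i f = rs G i g ↔ ∀ σ ∈ G, σ.card = i + 1 → f σ = g σ := by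
  constructor
  · intro h σ h1 h2
    exact congrFun h ⟨σ, h1, h2⟩
  · intro h
    funext σ
    exact h σ.1 σ.2.1 σ.2.2

lemma rs_cocycle {H : Finset (Finset V)} {i : ℕ} {f : Finset V → ZMod 2} :
    rs (cx H) i f ∈ cocycles (cx H) i ↔ ∀ K ∈ H, CocOn f (i + 1) K := by
  unfold cocycles
  rw [LinearMap.mem_ker, cob_rs, ← map_zero (rs (cx H) (i + 1)), rs_eq]
  constructor
  · intro h K hK ρ h1 h2
    exact h ρ ((mem_cx_of_two (by omega)).2 ⟨K, hK, h1⟩) h2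
  · intro h σ h1 h2
    obtain ⟨K, hK, h3⟩ := (mem_cx_of_two (by omega)).1 h1
    exact h K hK σ h3 h2

lemma rs_coboundary {H : Finset (Finset V)} {i : ℕ} {f : Finset V → ZMod 2} :
    rs (cx H) (i + 1) f ∈ coboundaries (cx H) (i + 1) ↔
      ∃ g, ∀ K ∈ H, ∀ σ ⊆ K, σ.card = i + 2 → f σ = dd g σ := by
  show rs (cx H) (i + 1) f ∈ LinearMap.range (coboundary (cx H) i) ↔ _
  rw [LinearMap.mem_range]
  constructor
  · rintro ⟨y, hy⟩
    obtain ⟨g, rfl⟩ := rs_surj _ _ y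
    rw [cob_rs, rs_eq] at hy
    refine ⟨g, fun K hK σ h1 h2 => ?_⟩
    exact (hy σ ((mem_cx_of_two (by omega)).2 ⟨K, hK, h1⟩) h2).symm
  · rintro ⟨g, hg⟩
    refine ⟨rs _ _ g, ?_⟩
    rw [cob_rs, rs_eq]
    intro σ h1 h2
    obtain ⟨K, hK, h3⟩ := (mem_cx_of_two (by omega)).1 h1
    exact (hg K hK σ h3 h2).symm

/-- a copy of `M_j^-` -/
def IsM (H : Finset (Finset V)) (j : ℕ) (K C : Finset V) : Prop :=
  K ∈ H ∧ C ⊆ K ∧ C.card = j ∧ ∀ P ∈ fl K C, ∀ K' ∈ H, P ⊆ K' → K' = K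

lemma ind_fl {j : ℕ} {K C σ : Finset V} (hC : C.card = j) (hσ : σ.card = j + 1) (h : σ ⊆ K) :
    ind (fl K C) σ = dd (ind {C}) σ := by
  unfold dd ind
  simp only [Finset.mem_singleton, mem_fl]
  by_cases hCσ : C ⊆ σ
  · have h3 : (σ \ C).card = 1 := by
      rw [Finset.card_sdiff_of_subset hCσ]; omega
    obtain ⟨x, hx⟩ := Finset.card_eq_one.1 h3
    have hx' : x ∈ σ \ C := by rw [hx]; simp
    rw [Finset.mem_sdiff] at hx'
    have e : insert x C = σ := by
      rw [← Finset.sdiff_union_of_subset hCσ, hx]; rfl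
    rw [if_pos ⟨x, Finset.mem_sdiff.2 ⟨h hx'.1, hx'.2⟩, e⟩]
    rw [Finset.sum_eq_single x]
    · rw [if_pos]
      rw [← e, Finset.erase_insert hx'.2]
    · intro y hy hyx
      rw [if_neg]
      intro h4
      have : y ∉ C := by rw [← h4]; simp
      rw [← e, Finset.mem_insert] at hy
      tauto
    · intro h; exact absurd hx'.1 h
  · rw [if_neg, Finset.sum_eq_zero]
    · intro x _
      rw [if_neg]
      rintro rfl
      exact hCσ (Finset.erase_subset _ _)
    · rintro ⟨w, _, rfl⟩
      exact hCσ (Finset.subset_insert _ _)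

lemma dd_congr {f g : Finset V → ZMod 2} {ρ : Finset V} {m : ℕ} (hρ : ρ.card = m + 1)
    (h : ∀ σ ⊆ ρ, σ.card = m → f σ = g σ) : dd f ρ = dd g ρ := by
  unfold dd
  refine Finset.sum_congr rfl fun x hx => h _ (Finset.erase_subset _ _) ?_
  rw [Finset.card_erase_of_mem hx]; omega

lemma CocOn.congr {f g : Finset V → ZMod 2} {m : ℕ} {K : Finset V} (hf : CocOn f m K)
    (h : ∀ σ ⊆ K, σ.card = m → f σ = g σ) : CocOn g m K := by
  intro ρ h1 h2
  rw [← dd_congr h2 (fun σ hσ hc => h σ (hσ.trans h1) hc)]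
  exact hf ρ h1 h2

lemma CocOn.add {f g : Finset V → ZMod 2} {m : ℕ} {K : Finset V} (hf : CocOn f m K)
    (hg : CocOn g m K) : CocOn (f + g) m K := by
  intro ρ h1 h2
  rw [dd_add, hf ρ h1 h2, hg ρ h1 h2, add_zero]

lemma cocOn_dd (g : Finset V → ZMod 2) (m : ℕ) (K : Finset V) : CocOn (dd g) m K :=
  fun ρ _ _ => dd_dd g ρ

lemma cocOn_zero (m : ℕ) (K : Finset V) : CocOn (0 : Finset V → ZMod 2) m K := by
  intro ρ _ _; simp [dd]

lemma fl_card_mem {K C P : Finset V} (hP : P ∈ fl K C) : P.card = C.card + 1 := by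
  obtain ⟨w, hw, rfl⟩ := mem_fl.1 hP
  rw [Finset.card_insert_of_notMem (Finset.mem_sdiff.1 hw).2]

lemma fl_sub {K C P : Finset V} (hC : C ⊆ K) (hP : P ∈ fl K C) : P ⊆ K := by
  obtain ⟨w, hw, rfl⟩ := mem_fl.1 hP
  exact Finset.insert_subset (Finset.mem_sdiff.1 hw).1 hC

lemma IsM.coc [Fintype V] {H : Finset (Finset V)} {j : ℕ} {K C : Finset V} (h : IsM H j K C) :
    ∀ K' ∈ H, CocOn (ind (fl K C)) (j + 1) K' := by
  intro K' hK'
  obtain ⟨h1, h2, h3, h4⟩ := h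
  by_cases e : K' = K
  · subst e
    exact (cocOn_dd (ind {C}) (j + 1) K').congr fun σ hσ hc => (ind_fl h3 hc hσ).symm
  · refine (cocOn_zero (j + 1) K').congr fun σ hσ hc => ?_
    by_contra hne
    exact e (h4 σ (ind_ne.1 fun h => hne (by rw [h]; rfl)) K' hK' hσ)

lemma fl_inj {K C C' : Finset V} {j : ℕ} (hC : C ⊆ K) (hC' : C' ⊆ K) (h2 : j + 2 ≤ K.card)
    (h3 : C.card = j) (h3' : C'.card = j) (h : fl K C = fl K C') : C = C' := by
  by_contra hne
  have hns : ¬ C' ⊆ C := fun hs => hne (Finset.eq_of_subset_of_card_le hs (by omega)).symm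
  obtain ⟨x, hx, hxC⟩ := Finset.not_subset.1 hns
  have h4 : 1 < (K \ C).card := by
    rw [Finset.card_sdiff_of_subset hC]; omega
  obtain ⟨w, hw, hwx⟩ := Finset.exists_mem_ne h4 x
  have h5 : insert w C ∈ fl K C' := by rw [← h]; exact mem_fl.2 ⟨w, hw, rfl⟩
  obtain ⟨w', hw', h6⟩ := mem_fl.1 h5
  have : x ∈ insert w C := by rw [← h6]; exact Finset.mem_insert_of_mem hx
  rw [Finset.mem_insert] at this
  rcases this with h | h
  · exact hwx h.symm
  · exact hxC h

end

section

variable {V : Type*} [Fintype V]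

/-- event: every nonzero coboundary of degree `j-1` meets more than `n` simplices -/
def E1 (j : ℕ) (H : Finset (Finset V)) : Prop :=
  ∀ g : Finset V → ZMod 2, (supp (j + 1) (dd g)).Nonempty →
    Fintype.card V < (H.filter (Hits (supp (j + 1) (dd g)))).card

/-- no small sparse structures -/
def Esm (k j M0 : ℕ) (H : Finset (Finset V)) : Prop :=
  ∀ A ⊆ H, Bld (KAdj (j + 1)) A → A.card ≤ M0 → ∀ S ⊆ cov (j + 1) A, k - j + 2 ≤ S.card →
    ¬ Disjoint (U1 k S) H

/-- no large sparse structures -/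
def Elarge (k j M0 : ℕ) (H : Finset (Finset V)) : Prop :=
  ∀ A ⊆ H, Bld (KAdj (j + 1)) A → M0 < A.card → ∀ S ⊆ cov (j + 1) A, A.card ≤ S.card →
    Fintype.card V * S.card ≤ (j + 2) * (supp (j + 2) (dd (ind S))).card →
    ¬ Disjoint (badK k (j + 1) S) H

/-- potential pairs -/
noncomputable def Xi (V : Type*) [Fintype V] (k j : ℕ) : Finset (Finset V × Finset V) :=
  ((KK V k) ×ˢ (Finset.powersetCard j Finset.univ)).filter (fun a => a.2 ⊆ a.1)

lemma mem_Xi {k j : ℕ} {a : Finset V × Finset V} :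
    a ∈ Xi V k j ↔ a.1.card = k + 1 ∧ a.2.card = j ∧ a.2 ⊆ a.1 := by
  simp only [Xi, Finset.mem_filter, Finset.mem_product, mem_KK, Finset.mem_powersetCard]
  simp [and_assoc]

/-- the copies of `M_j^-` in `H` -/
noncomputable def XM (k j : ℕ) (H : Finset (Finset V)) : Finset (Finset V × Finset V) :=
  (Xi V k j).filter (fun a => IsM H j a.1 a.2)

lemma mem_XM {k j : ℕ} {H : Finset (Finset V)} (hH : H ⊆ KK V k) {a : Finset V × Finset V} :
    a ∈ XM k j H ↔ IsM H j a.1 a.2 := by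
  simp only [XM, Finset.mem_filter, mem_Xi]
  constructor
  · exact fun h => h.2
  · intro h
    exact ⟨⟨mem_KK.1 (hH h.1), h.2.2.1, h.2.1⟩, h⟩

lemma E1_zero {j : ℕ} {H : Finset (Finset V)} (h : E1 j H) (g : Finset V → ZMod 2)
    (hc : (H.filter (Hits (supp (j + 1) (dd g)))).card ≤ Fintype.card V) :
    ∀ σ : Finset V, σ.card = j + 1 → dd g σ = 0 := by
  intro σ hσ
  by_contra hne
  have := h g ⟨σ, mem_supp.2 ⟨hσ, hne⟩⟩
  omega

lemma E1_skeleton {j : ℕ} {H : Finset (Finset V)} (h : E1 j H) (hn : j < Fintype.card V)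
    (τ : Finset V) (hτ : τ.card ≤ j) : ∃ K ∈ H, τ ⊆ K := by
  obtain ⟨τ', h1, h2⟩ := Finset.exists_superset_card_eq hτ hn.le
  obtain ⟨w, hw⟩ : ∃ w, w ∉ τ' := by
    by_contra hcon
    push Not at hcon
    have : τ' = Finset.univ := Finset.eq_univ_iff_forall.2 hcon
    rw [this, Finset.card_univ] at h2
    omega
  have h3 := h (ind {τ'}) ⟨insert w τ', by
    rw [mem_supp]
    have hc : (insert w τ').card = j + 1 := by rw [Finset.card_insert_of_notMem hw, h2]
    refine ⟨hc, ?_⟩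
    rw [← ind_fl (K := insert w τ') h2 hc le_rfl, ind_ne, mem_fl]
    exact ⟨w, by simp [hw], rfl⟩⟩
  obtain ⟨K, hK⟩ := Finset.card_pos.1 (lt_of_le_of_lt (Nat.zero_le _) h3)
  rw [Finset.mem_filter] at hK
  obtain ⟨hK, ρ, hρ, hρK⟩ := hK
  rw [mem_supp] at hρ
  rw [← ind_fl (K := ρ) h2 hρ.1 le_rfl, ind_ne, mem_fl] at hρ
  obtain ⟨hc, x, hx, rfl⟩ := hρ
  exact ⟨K, hK, h1.trans ((Finset.subset_insert _ _).trans hρK)⟩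

/-- low degree cocycles are cocycles on the complete complex -/
lemma E1_low {j : ℕ} {H : Finset (Finset V)} (h : E1 j H) (hn : j < Fintype.card V)
    {i : ℕ} (hi : i + 1 ≤ j) {f : Finset V → ZMod 2} (hf : ∀ K ∈ H, CocOn f (i + 1) K) :
    ∀ σ : Finset V, σ.card = i + 2 → dd f σ = 0 := by
  intro σ hσ
  by_cases hij : i + 2 ≤ j
  · obtain ⟨K, hK, h1⟩ := E1_skeleton h hn σ (by omega)
    exact hf K hK σ h1 hσ
  · have hij : j = i + 1 := by omega
    subst hij
    refine E1_zero h f ?_ σ hσ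
    rw [Finset.filter_eq_empty_iff.2]
    · simp
    · intro K hK
      exact fun hh => not_coc_iff.2 hh (hf K hK)

lemma E1_vanish {j : ℕ} {H : Finset (Finset V)} (h : E1 j H) (hn : j < Fintype.card V)
    {i : ℕ} (hi1 : 1 ≤ i) (hi : i + 1 ≤ j) : Subsingleton (cohomology (cx H) i) := by
  unfold cohomology
  rw [Submodule.Quotient.subsingleton_iff, eq_top_iff]
  rintro ⟨f, hf⟩ -
  obtain ⟨f, rfl⟩ := rs_surj _ _ f
  rw [rs_cocycle] at hf
  rw [Submodule.mem_comap, Submodule.subtype_apply]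
  have h0 := E1_low h hn hi hf
  obtain ⟨i, rfl⟩ : ∃ i', i = i' + 1 := ⟨i - 1, by omega⟩
  rw [rs_coboundary]
  have : Nonempty V := Fintype.card_pos_iff.1 (by omega)
  obtain ⟨v⟩ := this
  refine ⟨cone v f, fun K hK σ h1 h2 => ?_⟩
  have h3 := cone_formula v f σ
  have h4 : f σ + dd (cone v f) σ = 0 := by
    rw [h3]
    split_ifs with hv
    · rfl
    · exact h0 _ (by rw [Finset.card_insert_of_notMem hv]; omega)
  rw [← add_zero (f σ), ← z2_add_self (dd (cone v f) σ), ← add_assoc, h4, zero_add]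

lemma E1_H0 {j : ℕ} {H : Finset (Finset V)} (h : E1 j H) (hj : 1 ≤ j) (hn : j < Fintype.card V) :
    Nonempty (cohomology (cx H) 0 ≃ₗ[ZMod 2] ZMod 2) := by
  have : Nonempty V := Fintype.card_pos_iff.1 (by omega)
  obtain ⟨v⟩ := this
  have hv : IsSimplex (cx H) 0 {v} := ⟨Or.inl ⟨v, rfl⟩, by simp⟩
  let L : cocycles (cx H) 0 →ₗ[ZMod 2] ZMod 2 :=
    (LinearMap.proj (⟨{v}, hv⟩ : {A : Finset V // IsSimplex (cx H) 0 A})).comp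
      (cocycles (cx H) 0).subtype
  have hsurj : Function.Surjective L := by
    intro y
    refine ⟨⟨rs (cx H) 0 (fun _ => y), ?_⟩, rfl⟩
    rw [rs_cocycle]
    intro K hK ρ h1 h2
    simp only [dd, Finset.sum_const, h2, zero_add, nsmul_eq_mul]
    norm_num
    left; rfl
  have hker : (coboundaries (cx H) 0).comap (cocycles (cx H) 0).subtype = LinearMap.ker L := by
    ext ⟨f, hf⟩
    show f ∈ (⊥ : Submodule (ZMod 2) (Cochain (cx H) 0)) ↔ _
    rw [Submodule.mem_bot, LinearMap.mem_ker]
    obtain ⟨f, rfl⟩ := rs_surj _ _ f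
    show _ ↔ f {v} = 0
    rw [rs_cocycle] at hf
    have h0 := E1_low h hn (by omega) hf
    rw [← map_zero (rs (cx H) 0), rs_eq]
    constructor
    · intro h; exact h _ hv.1 hv.2
    · intro h σ h1 h2
      obtain ⟨w, rfl⟩ := Finset.card_eq_one.1 h2
      by_cases hvw : v = w
      · subst hvw; exact h
      · have h3 := h0 {v, w} (Finset.card_pair hvw)
        unfold dd at h3
        rw [Finset.sum_pair hvw] at h3
        have e1 : ({v, w} : Finset V).erase v = {w} := by
          rw [Finset.erase_insert]; simpa using hvw
        have e2 : ({v, w} : Finset V).erase w = {v} := by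
          rw [Finset.pair_comm, Finset.erase_insert]; simpa using fun h => hvw h.symm
        rw [e1, e2, h, add_zero] at h3
        exact h3
  exact ⟨(Submodule.quotEquivOfEq _ _ hker).trans (L.quotKerEquivOfSurjective hsurj)⟩

end

section

variable {V : Type*} [Fintype V]

/-- generated by copies of `M_j^-` modulo coboundaries -/
def Gen (k j : ℕ) (H : Finset (Finset V)) (f : Finset V → ZMod 2) : Prop :=
  ∃ (c : Finset V × Finset V → ZMod 2) (g : Finset V → ZMod 2), ∀ σ ∈ cov (j + 1) H,
    f σ = ∑ a ∈ XM k j H, c a * ind (fl a.1 a.2) σ + dd g σ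

lemma Gen.add {k j : ℕ} {H : Finset (Finset V)} {f f' : Finset V → ZMod 2}
    (h : Gen k j H f) (h' : Gen k j H f') : Gen k j H (f + f') := by
  obtain ⟨c, g, h⟩ := h
  obtain ⟨c', g', h'⟩ := h'
  refine ⟨c + c', g + g', fun σ hσ => ?_⟩
  simp only [Pi.add_apply, add_mul, Finset.sum_add_distrib, dd_add, h σ hσ, h' σ hσ]
  ring

lemma Gen.congr {k j : ℕ} {H : Finset (Finset V)} {f f' : Finset V → ZMod 2}
    (h : Gen k j H f) (h' : ∀ σ ∈ cov (j + 1) H, f σ = f' σ) : Gen k j H f' := by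
  obtain ⟨c, g, h⟩ := h
  exact ⟨c, g, fun σ hσ => by rw [← h' σ hσ, h σ hσ]⟩

lemma gen_dd {k j : ℕ} {H : Finset (Finset V)} (g : Finset V → ZMod 2) : Gen k j H (dd g) :=
  ⟨0, g, fun σ _ => by simp⟩

lemma gen_fl {k j : ℕ} {H : Finset (Finset V)} (hH : H ⊆ KK V k) {K C : Finset V}
    (h : IsM H j K C) : Gen k j H (ind (fl K C)) := by
  refine ⟨fun a => if a = (K, C) then 1 else 0, 0, fun σ _ => ?_⟩
  have h0 : dd (0 : Finset V → ZMod 2) σ = 0 := by simp [dd]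
  rw [h0, add_zero, Finset.sum_eq_single (K, C)]
  · simp
  · intro b _ hb; simp [hb]
  · intro hn; exact absurd ((mem_XM hH).2 h) hn

/-- restriction of `f` to a set -/
noncomputable def res (S : Finset (Finset V)) (f : Finset V → ZMod 2) (σ : Finset V) : ZMod 2 :=
  if σ ∈ S then f σ else 0

lemma CocOn_iff_ind {m : ℕ} {f : Finset V → ZMod 2} {K : Finset V} :
    CocOn f m K ↔ CocOn (ind (supp m f)) m K := by
  have : ∀ σ ⊆ K, σ.card = m → f σ = ind (supp m f) σ := by
    intro σ _ hc
    unfold ind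
    split_ifs with h
    · exact z2_ne_zero (mem_supp.1 h).2
    · by_contra hne
      exact h (mem_supp.2 ⟨hc, hne⟩)
  exact ⟨fun h => h.congr this, fun h => h.congr fun σ h1 h2 => (this σ h1 h2).symm⟩

/-- the key step : minimal cocycle with everything covered -/
lemma core_step {k j M0 : ℕ} (hj : j < k) {H : Finset (Finset V)} (hH : H ⊆ KK V k)
    (hsm : Esm k j M0 H) (hla : Elarge k j M0 H) (f : Finset V → ZMod 2)
    (hf : ∀ K ∈ H, CocOn f (j + 1) K)
    (hmin : ∀ g, (supp (j + 1) f).card ≤ (supp (j + 1) (f + dd g)).card)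
    (A : Finset (Finset V)) (hA : A ⊆ H) (hB : Bld (KAdj (j + 1)) A)
    (hAc : A.card ≤ (supp (j + 1) f).card) (hcov : supp (j + 1) f ⊆ cov (j + 1) A) :
    ∃ K C, IsM H j K C ∧ ∀ σ : Finset V, σ.card = j + 1 → f σ = ind (fl K C) σ := by
  set S := supp (j + 1) f with hS
  have hScard : ∀ σ ∈ S, σ.card = j + 1 := fun σ hσ => (mem_supp.1 hσ).1
  have hbad : Disjoint (badK k (j + 1) S) H := by
    rw [Finset.disjoint_left]
    intro K hK hKH
    simp only [badK, Finset.mem_filter] at hK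
    exact not_coc_iff.2 hK.2 (CocOn_iff_ind.1 (hf K hKH))
  have hU1 : Disjoint (U1 k S) H :=
    Finset.disjoint_of_subset_left (U1_subset_badK (by omega) S hScard) hbad
  have hsmall : S.card ≤ k - j + 1 := by
    by_contra hcon
    push Not at hcon
    by_cases hM : A.card ≤ M0
    · exact hsm A hA hB hM S hcov hcon hU1
    · refine hla A hA hB (by omega) S hcov hAc ?_ hbad
      have h1 := expansion (j + 1) f hmin
      have h2 : supp (j + 1 + 1) (dd f) = supp (j + 2) (dd (ind S)) := by
        ext ρ
        rw [mem_supp, mem_supp]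
        refine and_congr_right fun hc => ?_
        rw [dd_congr (m := j + 1) hc (g := ind S)]
        intro σ _ hc
        unfold ind
        split_ifs with h
        · exact z2_ne_zero (mem_supp.1 h).2
        · by_contra hne
          exact h (mem_supp.2 ⟨hc, hne⟩)
      rw [h2] at h1
      exact h1
  have hcard : ∀ K ∈ H, K.card = k + 1 := fun K hK => mem_KK.1 (hH hK)
  have hfull : ∀ K ∈ H, ∀ σ ∈ sK f (j + 1) K, sK f (j + 1) K = S := by
    intro K hK σ hσ
    refine Finset.eq_of_subset_of_card_le ?_ ?_
    · intro τ hτ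
      rw [mem_sK] at hτ
      exact mem_supp.2 hτ.2
    · have := sK_card_ge (hf K hK) hσ
      rw [hcard K hK] at this
      omega
  obtain ⟨K1, hK1⟩ := hB.nonempty
  have hSne : S.Nonempty := by
    rw [← Finset.card_pos]
    have : 0 < A.card := Finset.card_pos.2 ⟨K1, hK1⟩
    omega
  obtain ⟨σ0, hσ0⟩ := hSne
  obtain ⟨_, K, hKA, hσK⟩ := mem_cov.1 (hcov hσ0)
  have hKH := hA hKA
  have hσ0K : σ0 ∈ sK f (j + 1) K := mem_sK.2 ⟨hσK, mem_supp.1 hσ0⟩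
  obtain ⟨C, hC, hCc, hfl⟩ := sK_flower (hf K hKH) hσ0K (by rw [hcard K hKH]; omega) (by
    rw [hfull K hKH σ0 hσ0K, hcard K hKH]; omega)
  rw [hfull K hKH σ0 hσ0K] at hfl
  refine ⟨K, C, ⟨hKH, hC, by omega, ?_⟩, ?_⟩
  · intro P hP K' hK' hPK'
    rw [← hfl] at hP
    have hP' : P ∈ sK f (j + 1) K' := mem_sK.2 ⟨hPK', mem_supp.1 hP⟩
    have e := hfull K' hK' P hP'
    have hsub : K ⊆ K' := by
      intro w hw
      obtain ⟨τ, hτ, hwτ⟩ := sK_covers (hf K hKH) hσ0K w hw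
      rw [hfull K hKH σ0 hσ0K, ← e, mem_sK] at hτ
      exact hτ.1 hwτ
    exact (Finset.eq_of_subset_of_card_le hsub (by rw [hcard K hKH, hcard K' hK'])).symm
  · intro σ hc
    rw [← hfl]
    unfold ind
    split_ifs with h
    · exact z2_ne_zero (mem_supp.1 h).2
    · by_contra hne
      exact h (mem_supp.2 ⟨hc, hne⟩)

lemma gen_all {k j M0 : ℕ} (hj : j < k) {H : Finset (Finset V)} (hH : H ⊆ KK V k)
    (hsm : Esm k j M0 H) (hla : Elarge k j M0 H) :
    ∀ (w : ℕ) (f : Finset V → ZMod 2), (∀ K ∈ H, CocOn f (j + 1) K) →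
      ((cov (j + 1) H).filter (fun σ => f σ ≠ 0)).card = w → Gen k j H f := by
  intro w
  induction w using Nat.strong_induction_on with
  | _ w ih =>
  intro f hf hw
  -- work with the restriction
  by_cases hmin : ∃ g : Finset V → ZMod 2, ((cov (j + 1) H).filter (fun σ => (f + dd g) σ ≠ 0)).card < w
  · obtain ⟨g, hg⟩ := hmin
    have h1 := ih _ hg (f + dd g) (fun K hK => (hf K hK).add (cocOn_dd g _ K)) rfl
    refine (h1.add (gen_dd g)).congr fun σ _ => ?_
    simp only [Pi.add_apply]
    rw [add_assoc, z2_add_self, add_zero]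
  push Not at hmin
  have hmemH : ∀ K ∈ H, ∀ σ ⊆ K, σ.card = j + 1 → σ ∈ cov (j + 1) H :=
    fun K hK σ h1 h2 => mem_cov.2 ⟨h2, K, hK, h1⟩
  set f0 := res (cov (j + 1) H) f with hf0
  have hf0eq : ∀ σ ∈ cov (j + 1) H, f0 σ = f σ := fun σ hσ => by simp [hf0, res, hσ]
  have hf0coc : ∀ K ∈ H, CocOn f0 (j + 1) K := fun K hK =>
    (hf K hK).congr fun σ h1 h2 => (hf0eq σ (hmemH K hK σ h1 h2)).symm
  have hsupp : supp (j + 1) f0 = (cov (j + 1) H).filter (fun σ => f σ ≠ 0) := by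
    ext σ
    rw [mem_supp, Finset.mem_filter]
    constructor
    · rintro ⟨h1, h2⟩
      have : σ ∈ cov (j + 1) H := by
        by_contra hn
        exact h2 (by simp [hf0, res, hn])
      exact ⟨this, by rwa [← hf0eq σ this]⟩
    · rintro ⟨h1, h2⟩
      exact ⟨(mem_cov.1 h1).1, by rwa [hf0eq σ h1]⟩
  have hmin0 : ∀ g, (supp (j + 1) f0).card ≤ (supp (j + 1) (f0 + dd g)).card := by
    intro g
    rw [hsupp, hw]
    refine (hmin g).trans (Finset.card_le_card ?_)
    intro σ hσ
    rw [Finset.mem_filter] at hσ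
    rw [mem_supp]
    refine ⟨(mem_cov.1 hσ.1).1, ?_⟩
    simpa only [Pi.add_apply, hf0eq σ hσ.1] using hσ.2
  have hgoal : Gen k j H f0 → Gen k j H f := fun h => h.congr hf0eq
  apply hgoal
  by_cases hne : (supp (j + 1) f0).Nonempty
  swap
  · rw [Finset.not_nonempty_iff_eq_empty] at hne
    refine (gen_dd (k := k) (j := j) (H := H) 0).congr fun σ hσ => ?_
    have h0 : dd (0 : Finset V → ZMod 2) σ = 0 := by simp [dd]
    rw [h0]
    by_contra hc
    have : σ ∈ supp (j + 1) f0 := mem_supp.2 ⟨(mem_cov.1 hσ).1, fun h => hc h.symm⟩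
    rw [hne] at this
    simp at this
  obtain ⟨σ0, hσ0⟩ := hne
  have hσ0' := hσ0
  rw [hsupp, Finset.mem_filter, mem_cov] at hσ0'
  obtain ⟨⟨hσ0c, K0, hK0, hσ0K⟩, _⟩ := hσ0'
  -- maximal A
  let P := H.powerset.filter (fun A => Bld (KAdj (j + 1)) A ∧
    A.card ≤ (supp (j + 1) f0 ∩ cov (j + 1) A).card)
  have hP : P.Nonempty := by
    refine ⟨{K0}, ?_⟩
    simp only [P, Finset.mem_filter, Finset.mem_powerset]
    refine ⟨by simpa using hK0, Bld.single K0, ?_⟩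
    rw [Finset.card_singleton, Nat.one_le_iff_ne_zero, ← Nat.pos_iff_ne_zero, Finset.card_pos]
    exact ⟨σ0, Finset.mem_inter.2 ⟨hσ0, mem_cov.2 ⟨hσ0c, K0, by simp, hσ0K⟩⟩⟩
  obtain ⟨A, hAP, hAmax⟩ := Finset.exists_max_image P Finset.card hP
  simp only [P, Finset.mem_filter, Finset.mem_powerset] at hAP
  obtain ⟨hAH, hAB, hAc⟩ := hAP
  have hsep : ∀ K ∈ H, ∀ σ1 ∈ supp (j + 1) f0, ∀ σ2 ∈ supp (j + 1) f0, σ1 ⊆ K → σ2 ⊆ K →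
      σ1 ∈ cov (j + 1) A → σ2 ∈ cov (j + 1) A := by
    intro K hK σ1 h1 σ2 h2 h1K h2K h1A
    by_contra h2A
    have hKA : K ∉ A := fun h => h2A (mem_cov.2 ⟨(mem_supp.1 h2).1, K, h, h2K⟩)
    obtain ⟨h1c, K1, hK1, h1K1⟩ := mem_cov.1 h1A
    have hmem : insert K A ∈ P := by
      simp only [P, Finset.mem_filter, Finset.mem_powerset]
      refine ⟨Finset.insert_subset hK hAH,
        by convert Bld.step A K1 K hAB hK1 ⟨σ1, h1c, h1K1, h1K⟩ hKA, ?_⟩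
      rw [Finset.card_insert_of_notMem hKA]
      have hss : insert σ2 (supp (j + 1) f0 ∩ cov (j + 1) A) ⊆
          supp (j + 1) f0 ∩ cov (j + 1) (insert K A) := by
        refine Finset.insert_subset ?_ ?_
        · exact Finset.mem_inter.2 ⟨h2, mem_cov.2 ⟨(mem_supp.1 h2).1, K, by simp, h2K⟩⟩
        · intro τ hτ
          rw [Finset.mem_inter, mem_cov] at hτ
          obtain ⟨hτ1, hτ2, K', hK', hτ3⟩ := hτ
          exact Finset.mem_inter.2 ⟨hτ1, mem_cov.2 ⟨hτ2, K', by simp [hK'], hτ3⟩⟩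
      have h3 := Finset.card_le_card hss
      rw [Finset.card_insert_of_notMem (fun h => h2A (Finset.mem_inter.1 h).2)] at h3
      omega
    have := hAmax _ hmem
    rw [Finset.card_insert_of_notMem hKA] at this
    omega
  by_cases hcov : supp (j + 1) f0 ⊆ cov (j + 1) A
  · rw [Finset.inter_eq_left.2 hcov] at hAc
    obtain ⟨K, C, hM, heq⟩ := core_step hj hH hsm hla f0 hf0coc hmin0 A hAH hAB hAc hcov
    exact (gen_fl hH hM).congr fun σ hσ => (heq σ (mem_cov.1 hσ).1).symm
  -- split
  obtain ⟨σ2, hσ2, hσ2A⟩ := Finset.not_subset.1 hcov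
  set f1 := res (cov (j + 1) A) f0 with hf1
  have hf1coc : ∀ K ∈ H, CocOn f1 (j + 1) K := by
    intro K hK
    by_cases hex : ∃ σ1 ∈ supp (j + 1) f0, σ1 ⊆ K ∧ σ1 ∈ cov (j + 1) A
    · obtain ⟨σ1, h1, h1K, h1A⟩ := hex
      refine (hf0coc K hK).congr fun σ hσ hc => ?_
      by_cases hz : f0 σ = 0
      · simp [hf1, res, hz]
      · have := hsep K hK σ1 h1 σ (mem_supp.2 ⟨hc, hz⟩) h1K hσ h1A
        simp [hf1, res, this]
    · push Not at hex
      refine (cocOn_zero (j + 1) K).congr fun σ hσ hc => ?_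
      simp only [hf1, res, Pi.zero_apply]
      split_ifs with h
      · by_contra hz
        exact hex σ (mem_supp.2 ⟨hc, fun h => hz h.symm⟩) hσ h
      · rfl
  have hwt : (supp (j + 1) f0).card = w := by rw [hsupp, hw]
  have lt1 : ((cov (j + 1) H).filter (fun σ => f1 σ ≠ 0)).card < w := by
    rw [← hwt]
    refine Finset.card_lt_card ?_
    rw [Finset.ssubset_iff_of_subset]
    · refine ⟨σ2, hσ2, ?_⟩
      simp [hf1, res, hσ2A]
    · intro σ hσ
      rw [Finset.mem_filter] at hσ
      refine mem_supp.2 ⟨(mem_cov.1 hσ.1).1, fun h => hσ.2 ?_⟩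
      simp [hf1, res, h]
  have hAne : (supp (j + 1) f0 ∩ cov (j + 1) A).Nonempty := by
    rw [← Finset.card_pos]
    exact lt_of_lt_of_le (Finset.card_pos.2 hAB.nonempty) hAc
  obtain ⟨σ1, hσ1⟩ := hAne
  rw [Finset.mem_inter] at hσ1
  have lt2 : ((cov (j + 1) H).filter (fun σ => (f0 + f1) σ ≠ 0)).card < w := by
    rw [← hwt]
    refine Finset.card_lt_card ?_
    rw [Finset.ssubset_iff_of_subset]
    · refine ⟨σ1, hσ1.1, ?_⟩
      simp [hf1, res, hσ1.2, z2_add_self]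
    · intro σ hσ
      rw [Finset.mem_filter] at hσ
      refine mem_supp.2 ⟨(mem_cov.1 hσ.1).1, fun h => hσ.2 ?_⟩
      simp [hf1, res, h]
  have g1 := ih _ lt1 f1 hf1coc rfl
  have g2 := ih _ lt2 (f0 + f1) (fun K hK => (hf0coc K hK).add (hf1coc K hK)) rfl
  refine (g2.add g1).congr fun σ _ => ?_
  simp only [Pi.add_apply]
  rw [add_assoc, z2_add_self, add_zero]

end

section

variable {V : Type*} [Fintype V]

lemma unique_C {k j M0 : ℕ} (hj : j < k) (hM0 : 1 ≤ M0) {H : Finset (Finset V)} (hH : H ⊆ KK V k)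
    (hsm : Esm k j M0 H) {K C C' : Finset V} (h : IsM H j K C) (h' : IsM H j K C') : C = C' := by
  by_contra hne
  have hKc := mem_KK.1 (hH h.1)
  have hfne : fl K C ≠ fl K C' := fun he =>
    hne (fl_inj h.2.1 h'.2.1 (by omega) h.2.2.1 h'.2.2.1 he)
  have hc1 : (fl K C).card = k + 1 - j := by rw [card_fl h.2.1, hKc, h.2.2.1]
  have hc2 : (fl K C').card = k + 1 - j := by rw [card_fl h'.2.1, hKc, h'.2.2.1]
  have hgt : k + 1 - j < (fl K C ∪ fl K C').card := by
    rw [← hc1]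
    refine Finset.card_lt_card (Finset.ssubset_iff_subset_ne.2 ⟨Finset.subset_union_left, ?_⟩)
    intro he
    apply hfne
    have : fl K C' ⊆ fl K C := by rw [he]; exact Finset.subset_union_right
    exact (Finset.eq_of_subset_of_card_le this (by omega)).symm
  refine hsm {K} (by simpa using h.1) (Bld.single K) (by simpa using hM0) (fl K C ∪ fl K C') ?_
    (by omega) ?_
  · intro P hP
    rw [mem_cov]
    rcases Finset.mem_union.1 hP with hP | hP
    · exact ⟨by rw [fl_card_mem hP, h.2.2.1], K, by simp, fl_sub h.2.1 hP⟩
    · exact ⟨by rw [fl_card_mem hP, h'.2.2.1], K, by simp, fl_sub h'.2.1 hP⟩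
  · rw [Finset.disjoint_left]
    intro K' hU hK'
    simp only [U1, Finset.mem_filter] at hU
    have hsub : ∀ P ∈ fl K C ∪ fl K C', P ⊆ K' → K' = K := by
      intro P hP hPK
      rcases Finset.mem_union.1 hP with hP | hP
      · exact h.2.2.2 P hP K' hK' hPK
      · exact h'.2.2.2 P hP K' hK' hPK
    by_cases e : K' = K
    · subst e
      have : (fl K' C ∪ fl K' C').filter (fun σ => σ ⊆ K') = fl K' C ∪ fl K' C' := by
        rw [Finset.filter_eq_self]
        intro P hP
        rcases Finset.mem_union.1 hP with hP | hP
        · exact fl_sub h.2.1 hP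
        · exact fl_sub h'.2.1 hP
      have h2 := hU.2
      rw [this] at h2
      omega
    · have h2 := hU.2
      rw [Finset.filter_eq_empty_iff.2 (fun P hP hPK => e (hsub P hP hPK))] at h2
      simp at h2

lemma finrank_Hj {k j M0 : ℕ} (hj0 : 1 ≤ j) (hj : j < k) (hM0 : 1 ≤ M0) {H : Finset (Finset V)}
    (hH : H ⊆ KK V k) (h1 : E1 j H)
    (hsm : Esm k j M0 H) (hla : Elarge k j M0 H) (hX : (XM k j H).card ≤ Fintype.card V) :
    Module.finrank (ZMod 2) (cohomology (cx H) j) = (XM k j H).card := by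
  let ι := {a // a ∈ XM k j H}
  let F : (ι → ZMod 2) →ₗ[ZMod 2] (Finset V → ZMod 2) :=
    { toFun := fun c σ => ∑ a : ι, c a * ind (fl a.1.1 a.1.2) σ
      map_add' := by
        intro c c'
        funext σ
        simp only [Pi.add_apply, add_mul, Finset.sum_add_distrib]
      map_smul' := by
        intro r c
        funext σ
        simp only [Pi.smul_apply, smul_eq_mul, RingHom.id_apply, Finset.mul_sum, mul_assoc] }
  have hIs : ∀ a : ι, IsM H j a.1.1 a.1.2 := fun a => (mem_XM hH).1 a.2
  have hFcoc : ∀ c, rs (cx H) j (F c) ∈ cocycles (cx H) j := by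
    intro c
    rw [rs_cocycle]
    intro K hK ρ hρ hc
    have : dd (F c) ρ = ∑ a : ι, c a * dd (ind (fl a.1.1 a.1.2)) ρ := by
      simp only [dd, F, LinearMap.coe_mk, AddHom.coe_mk, Finset.mul_sum]
      rw [Finset.sum_comm]
    rw [this]
    refine Finset.sum_eq_zero fun a _ => ?_
    rw [(hIs a).coc K hK ρ hρ hc, mul_zero]
  let L : (ι → ZMod 2) →ₗ[ZMod 2] cocycles (cx H) j :=
    LinearMap.codRestrict _ ((rs (cx H) j).comp F) hFcoc
  let Φ : (ι → ZMod 2) →ₗ[ZMod 2] cohomology (cx H) j := (Submodule.mkQ _).comp L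
  obtain ⟨i, rfl⟩ : ∃ i, j = i + 1 := ⟨j - 1, by omega⟩
  have hinj : Function.Injective Φ := by
    rw [injective_iff_map_eq_zero]
    intro c hc
    have hc' : rs (cx H) (i + 1) (F c) ∈ coboundaries (cx H) (i + 1) := by
      have := (Submodule.Quotient.mk_eq_zero _).1 hc
      exact this
    rw [rs_coboundary] at hc'
    obtain ⟨g, hg⟩ := hc'
    have hz := E1_zero h1 g (by
      refine le_trans (le_trans (Finset.card_le_card ?_) (Finset.card_image_le (s := XM k (i+1) H)
        (f := Prod.fst))) hX
      intro K hK
      rw [Finset.mem_filter] at hK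
      obtain ⟨hK, ρ, hρ, hρK⟩ := hK
      rw [mem_supp] at hρ
      have h2 := hρ.2
      rw [← hg K hK ρ hρK hρ.1] at h2
      obtain ⟨a, _, ha⟩ := Finset.exists_ne_zero_of_sum_ne_zero h2
      have ha' := ind_ne.1 (right_ne_zero_of_mul ha)
      have := (hIs a).2.2.2 ρ ha' K hK hρK
      exact Finset.mem_image.2 ⟨a.1, a.2, this.symm⟩)
    funext a
    obtain ⟨hKa, hCa, hca, hua⟩ := hIs a
    have hKc := mem_KK.1 (hH hKa)
    have : (fl a.1.1 a.1.2).Nonempty := by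
      rw [← Finset.card_pos, card_fl hCa, hKc, hca]; omega
    obtain ⟨P, hP⟩ := this
    have hPK := fl_sub hCa hP
    have hPc : P.card = i + 1 + 1 := by rw [fl_card_mem hP, hca]
    have h3 := hg _ hKa P hPK hPc
    rw [hz P hPc] at h3
    have h4 : F c P = c a := by
      show ∑ b : ι, c b * ind (fl b.1.1 b.1.2) P = c a
      rw [Finset.sum_eq_single a]
      · simp [ind, hP]
      · intro b _ hb
        have : P ∉ fl b.1.1 b.1.2 := by
          intro hPb
          have e := hua P hP _ (hIs b).1 (fl_sub (hIs b).2.1 hPb)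
          have hb2 := hIs b
          rw [e] at hb2
          have e2 := unique_C hj hM0 hH hsm hb2 (hIs a)
          exact hb (Subtype.ext (Prod.ext e e2))
        simp [ind, this]
      · simp
    rw [← h4, h3]; rfl
  have hsurj : Function.Surjective Φ := by
    intro y
    obtain ⟨⟨f, hf⟩, rfl⟩ := Submodule.Quotient.mk_surjective _ y
    obtain ⟨f, rfl⟩ := rs_surj _ _ f
    obtain ⟨c, g, hcg⟩ := gen_all hj hH hsm hla _ f (rs_cocycle.1 hf) rfl
    refine ⟨fun a => c a.1, ?_⟩
    refine (Submodule.Quotient.eq _).2 ?_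
    show rs (cx H) (i + 1) (F fun a => c a.1) - rs (cx H) (i + 1) f ∈ coboundaries (cx H) (i + 1)
    rw [← map_sub, rs_coboundary]
    refine ⟨g, fun K hK σ h2 h3 => ?_⟩
    rw [Pi.sub_apply, hcg σ (mem_cov.2 ⟨h3, K, hK, h2⟩)]
    have : (F fun a => c a.1) σ = ∑ a ∈ XM k (i + 1) H, c a * ind (fl a.1 a.2) σ := by
      show ∑ a : ι, c a.1 * ind (fl a.1.1 a.1.2) σ = _
      exact Finset.sum_coe_sort (XM k (i + 1) H) (fun a => c a * ind (fl a.1 a.2) σ)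
    rw [this, sub_add_cancel_left, CharTwo.neg_eq]
  rw [← (LinearEquiv.ofBijective Φ ⟨hinj, hsurj⟩).finrank_eq, Module.finrank_fintype_fun_eq_card]
  simp [ι]

end

section

variable {V : Type*} [Fintype V]

lemma one_sub_pow_le {q : ℝ} (h1 : q ≤ 1) (N : ℕ) : (1 - q) ^ N ≤ Real.exp (-(q * N)) := by
  have h := Real.add_one_le_exp (-q)
  calc (1 - q) ^ N ≤ (Real.exp (-q)) ^ N :=
        pow_le_pow_left₀ (by linarith) (by linarith) N
    _ = Real.exp (-(q * N)) := by rw [← Real.exp_nat_mul]; ring_nf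

lemma union_bld {p b : ℝ} (h0 : 0 ≤ p) (h1 : p ≤ 1) (hb : 0 ≤ b) (k j m : ℕ)
    (Q : Finset (Finset V) → Prop) (B : Finset (Finset V) → Finset (Finset V))
    (hB : ∀ S, B S ⊆ KK V k)
    (hbd : ∀ A ∈ bldSets (KAdj (j + 1)) (KK V k) m, ∀ S ⊆ cov (j + 1) A, Q S →
      (1 - p) ^ (B S).card ≤ b) :
    Pr p (KK V k) (fun H => ∃ A ∈ bldSets (KAdj (j + 1)) (KK V k) m, ∃ S ∈ (cov (j + 1) A).powerset,
      Q S ∧ A ⊆ H ∧ Disjoint (B S) H) ≤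
      (Fintype.card V : ℝ) ^ (k + 1) * (4 * (2 ^ (k + 1) * (Fintype.card V : ℝ) ^ (k - j))) ^ m *
        2 ^ (2 ^ (k + 1) * (m + 1)) * p ^ (m + 1) * b := by
  refine (Pr_exists h0 h1 _ _).trans ?_
  have hA : ∀ A ∈ bldSets (KAdj (j + 1)) (KK V k) m,
      Pr p (KK V k) (fun H => ∃ S ∈ (cov (j + 1) A).powerset, Q S ∧ A ⊆ H ∧ Disjoint (B S) H) ≤
        2 ^ (2 ^ (k + 1) * (m + 1)) * p ^ (m + 1) * b := by
    intro A hA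
    have hA' := hA
    simp only [bldSets, Finset.mem_filter, Finset.mem_powerset] at hA'
    obtain ⟨hAK, hAB, hAc⟩ := hA'
    refine (Pr_exists h0 h1 _ _).trans ?_
    have : ∀ S ∈ (cov (j + 1) A).powerset,
        Pr p (KK V k) (fun H => Q S ∧ A ⊆ H ∧ Disjoint (B S) H) ≤ p ^ (m + 1) * b := by
      intro S hS
      rw [Finset.mem_powerset] at hS
      by_cases hQ : Q S
      · refine (Pr_mono h0 h1 (fun H _ h => h.2)).trans ((cyl_le h0 h1 hAK (hB S)).trans ?_)
        rw [hAc]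
        exact mul_le_mul_of_nonneg_left (hbd A hA S hS hQ) (by positivity)
      · refine le_trans (le_of_eq ?_) (by positivity : (0 : ℝ) ≤ p ^ (m + 1) * b)
        simp [Pr, Ex, hQ]
    refine (Finset.sum_le_sum this).trans ?_
    rw [Finset.sum_const, Finset.card_powerset, nsmul_eq_mul, ← mul_assoc]
    have h2 : ((2 ^ (cov (j + 1) A).card : ℕ) : ℝ) ≤ 2 ^ (2 ^ (k + 1) * (m + 1)) := by
      push_cast
      refine pow_le_pow_right₀ (by norm_num) ?_
      rw [← hAc]
      exact card_cov hAK
    gcongr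
  refine (Finset.sum_le_sum hA).trans ?_
  rw [Finset.sum_const, nsmul_eq_mul]
  have h3 := bldSets_card (KAdj_symm (V := V) (j + 1)) (KK V k) _ (fun K hK => KAdj_deg K hK) m
  have h4 : ((bldSets (KAdj (j + 1)) (KK V k) m).card : ℝ) ≤
      (Fintype.card V : ℝ) ^ (k + 1) * (4 * (2 ^ (k + 1) * (Fintype.card V : ℝ) ^ (k - j))) ^ m := by
    have h5 : (bldSets (KAdj (j + 1)) (KK V k) m).card ≤
        (Fintype.card V) ^ (k + 1) * (4 * (2 ^ (k + 1) * (Fintype.card V) ^ (k - j))) ^ m := by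
      refine h3.trans ?_
      rw [card_KK, Nat.add_sub_add_right]
      exact Nat.mul_le_mul_right _ (Nat.choose_le_pow _ _)
    exact_mod_cast h5
  calc _ ≤ ((Fintype.card V : ℝ) ^ (k + 1) *
        (4 * (2 ^ (k + 1) * (Fintype.card V : ℝ) ^ (k - j))) ^ m) *
        (2 ^ (2 ^ (k + 1) * (m + 1)) * p ^ (m + 1) * b) :=
        mul_le_mul_of_nonneg_right h4 (by positivity)
    _ = _ := by ring

lemma Pr_Esm {p : ℝ} (h0 : 0 ≤ p) (h1 : p ≤ 1) {k j : ℕ} (hj : j < k) (M0 : ℕ) :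
    Pr p (KK V k) (fun H => ¬ Esm k j M0 H) ≤ ∑ m ∈ Finset.range M0,
      (Fintype.card V : ℝ) ^ (k + 1) * (4 * (2 ^ (k + 1) * (Fintype.card V : ℝ) ^ (k - j))) ^ m *
        2 ^ (2 ^ (k + 1) * (m + 1)) * p ^ (m + 1) *
        Real.exp (-(p * ((k - j + 2 : ℕ) * ((Fintype.card V - (j + 1)).choose (k - j) : ℕ)
          - (2 ^ (k + 1) * M0) ^ 2 * (Fintype.card V : ℝ) ^ (k - (j + 1))))) := by
  refine (Pr_mono h0 h1 (Q' := fun H => ∃ m ∈ Finset.range M0,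
    ∃ A ∈ bldSets (KAdj (j + 1)) (KK V k) m, ∃ S ∈ (cov (j + 1) A).powerset,
      k - j + 2 ≤ S.card ∧ A ⊆ H ∧ Disjoint (U1 k S) H) ?_).trans
    ((Pr_exists h0 h1 _ _).trans (Finset.sum_le_sum fun m hm => ?_))
  · intro H hH h
    unfold Esm at h
    push Not at h
    obtain ⟨A, hA, hB, hc, S, hS, hSc, hd⟩ := h
    have : 0 < A.card := Finset.card_pos.2 hB.nonempty
    refine ⟨A.card - 1, Finset.mem_range.2 (by omega), A, ?_, S, Finset.mem_powerset.2 hS, hSc,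
      hA, hd⟩
    simp only [bldSets, Finset.mem_filter, Finset.mem_powerset]
    exact ⟨hA.trans hH, hB, by omega⟩
  · refine union_bld h0 h1 (Real.exp_nonneg _) k j m (fun S => k - j + 2 ≤ S.card) (U1 k)
      (fun S => Finset.filter_subset _ _) ?_
    intro A hA S hS hSc
    simp only [bldSets, Finset.mem_filter, Finset.mem_powerset] at hA
    refine (one_sub_pow_le h1 _).trans (Real.exp_le_exp.2 (neg_le_neg ?_))
    refine mul_le_mul_of_nonneg_left ?_ h0
    have h2 := exactly_one (k := k) (m := j + 1) (by omega) S
      (fun σ hσ => (mem_cov.1 (hS hσ)).1)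
    rw [Nat.add_sub_add_right] at h2
    have h3 : S.card ≤ 2 ^ (k + 1) * M0 := by
      refine (Finset.card_le_card hS).trans ((card_cov hA.1).trans ?_)
      rw [Finset.mem_range] at hm
      exact Nat.mul_le_mul_left _ (by omega)
    have h4 : (k - j + 2) * (Fintype.card V - (j + 1)).choose (k - j) ≤ (U1 k S).card +
        (2 ^ (k + 1) * M0) ^ 2 * (Fintype.card V) ^ (k - (j + 1)) :=
      (Nat.mul_le_mul_right _ hSc).trans (h2.trans (by gcongr))
    have h5 : (((k - j + 2) * (Fintype.card V - (j + 1)).choose (k - j) : ℕ) : ℝ) ≤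
      (((U1 k S).card + (2 ^ (k + 1) * M0) ^ 2 * (Fintype.card V) ^ (k - (j + 1)) : ℕ) : ℝ) := by
      exact_mod_cast h4
    push_cast at h5 ⊢
    linarith

lemma Pr_Elarge {p : ℝ} (h0 : 0 ≤ p) (h1 : p ≤ 1) {k j : ℕ} (hj : j < k) (M0 : ℕ) :
    Pr p (KK V k) (fun H => ¬ Elarge k j M0 H) ≤ ∑ m ∈ Finset.Ico M0 (KK V k).card,
      (Fintype.card V : ℝ) ^ (k + 1) * (4 * (2 ^ (k + 1) * (Fintype.card V : ℝ) ^ (k - j))) ^ m *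
        2 ^ (2 ^ (k + 1) * (m + 1)) * p ^ (m + 1) *
        Real.exp (-(p * ((m + 1) * ((Fintype.card V *
          ((Fintype.card V - (j + 2)).choose (k - (j + 1)) : ℕ)) / (2 ^ (k + 1) * (j + 2)))))) := by
  refine (Pr_mono h0 h1 (Q' := fun H => ∃ m ∈ Finset.Ico M0 (KK V k).card,
    ∃ A ∈ bldSets (KAdj (j + 1)) (KK V k) m, ∃ S ∈ (cov (j + 1) A).powerset,
      (m + 1 ≤ S.card ∧
      Fintype.card V * S.card ≤ (j + 2) * (supp (j + 2) (dd (ind S))).card) ∧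
      A ⊆ H ∧ Disjoint (badK k (j + 1) S) H) ?_).trans
    ((Pr_exists h0 h1 _ _).trans (Finset.sum_le_sum fun m hm => ?_))
  · intro H hH h
    unfold Elarge at h
    push Not at h
    obtain ⟨A, hA, hB, hc, S, hS, hSc, hS2, hd⟩ := h
    have h3 : 0 < A.card := Finset.card_pos.2 hB.nonempty
    have h4 := Finset.card_le_card (hA.trans hH)
    refine ⟨A.card - 1, Finset.mem_Ico.2 ⟨by omega, by omega⟩, A, ?_, S,
      Finset.mem_powerset.2 hS, ⟨by omega, hS2⟩, hA, hd⟩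
    simp only [bldSets, Finset.mem_filter, Finset.mem_powerset]
    exact ⟨hA.trans hH, hB, by omega⟩
  · refine union_bld h0 h1 (Real.exp_nonneg _) k j m (fun S => m + 1 ≤ S.card ∧
      Fintype.card V * S.card ≤ (j + 2) * (supp (j + 2) (dd (ind S))).card) (badK k (j + 1))
      (fun S => Finset.filter_subset _ _) ?_
    rintro A hA S hS ⟨hSc, hS2⟩
    refine (one_sub_pow_le h1 _).trans (Real.exp_le_exp.2 (neg_le_neg ?_))
    refine mul_le_mul_of_nonneg_left ?_ h0
    have h2 := cover_lb (k := k) (s := j + 2) (by omega) (supp (j + 2) (dd (ind S)))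
      (fun σ hσ => (mem_supp.1 hσ).1)
    have e : k + 1 - (j + 2) = k - (j + 1) := by omega
    rw [e] at h2
    have h2' : (supp (j + 2) (dd (ind S))).card * (Fintype.card V - (j + 2)).choose (k - (j + 1)) ≤
      (badK k (j + 1) S).card * 2 ^ (k + 1) := by
      exact h2
    set Z := (Fintype.card V - (j + 2)).choose (k - (j + 1))
    have h3 : (m + 1) * (Fintype.card V * Z) ≤
        (badK k (j + 1) S).card * (2 ^ (k + 1) * (j + 2)) := by
      calc (m + 1) * (Fintype.card V * Z) ≤ S.card * (Fintype.card V * Z) :=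
            Nat.mul_le_mul_right _ hSc
        _ = Fintype.card V * S.card * Z := by ring
        _ ≤ (j + 2) * (supp (j + 2) (dd (ind S))).card * Z := Nat.mul_le_mul_right _ hS2
        _ = (j + 2) * ((supp (j + 2) (dd (ind S))).card * Z) := by ring
        _ ≤ (j + 2) * ((badK k (j + 1) S).card * 2 ^ (k + 1)) := Nat.mul_le_mul_left _ h2'
        _ = _ := by ring
    have h4 : (((m + 1) * (Fintype.card V * Z) : ℕ) : ℝ) ≤
        (((badK k (j + 1) S).card * (2 ^ (k + 1) * (j + 2)) : ℕ) : ℝ) := by exact_mod_cast h3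
    push_cast at h4
    rw [← mul_div_assoc, div_le_iff₀ (by positivity)]
    exact h4

lemma sum_powerset_pow {α : Type*} (s : Finset α) (x : ℝ) :
    ∑ S ∈ s.powerset, x ^ S.card = (1 + x) ^ s.card := by
  have := Finset.prod_one_add (s := s) (f := fun _ => x)
  simp only [Finset.prod_const] at this
  exact this.symm

lemma Pr_E1 {p : ℝ} (h0 : 0 ≤ p) (h1 : p ≤ 1) {k j : ℕ} (hj : j < k) :
    Pr p (KK V k) (fun H => ¬ E1 j H) ≤
      Real.exp ((Fintype.card V : ℝ) ^ j * (2 ^ (Fintype.card V) *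
        Real.exp (-(p / 2 * ((Fintype.card V *
          ((Fintype.card V - (j + 1)).choose (k - j) : ℕ)) / (2 ^ (k + 1) * (j + 1))))))) - 1 := by
  set n := Fintype.card V with hn
  set b : ℝ := (n * ((n - (j + 1)).choose (k - j) : ℕ)) / (2 ^ (k + 1) * (j + 1)) with hb
  set x : ℝ := 2 ^ n * Real.exp (-(p / 2 * b)) with hx
  have hx0 : 0 ≤ x := by positivity
  let J : Finset (Finset V) := Finset.powersetCard j Finset.univ
  let I := J.powerset.filter (fun S => S.Nonempty ∧
    n * S.card ≤ (j + 1) * (supp (j + 1) (dd (ind S))).card)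
  let B : Finset (Finset V) → Finset (Finset V) := fun S =>
    (KK V k).filter (Hits (supp (j + 1) (dd (ind S))))
  have step1 : Pr p (KK V k) (fun H => ¬ E1 j H) ≤
      ∑ S ∈ I, Pr p (KK V k) (fun H => (B S ∩ H).card ≤ n) := by
    refine (Pr_mono h0 h1 (Q' := fun H => ∃ S ∈ I, (B S ∩ H).card ≤ n) ?_).trans
      (Pr_exists h0 h1 _ _)
    intro H hH h
    unfold E1 at h
    push Not at h
    obtain ⟨g, hg, hc⟩ := h
    -- minimal representative
    obtain ⟨h, hmin⟩ : ∃ h : Finset V → ZMod 2, ∀ h', (supp j (g + dd h)).card ≤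
        (supp j (g + dd h')).card := by
      have := WellFounded.has_min (measure (fun h : Finset V → ZMod 2 =>
        (supp j (g + dd h)).card)).wf Set.univ ⟨0, trivial⟩
      obtain ⟨h, _, hh⟩ := this
      exact ⟨h, fun h' => not_lt.1 (hh h' trivial)⟩
    set S := supp j (g + dd h) with hS
    have hdd : ∀ ρ : Finset V, ρ.card = j + 1 → dd (ind S) ρ = dd g ρ := by
      intro ρ hρ
      have e1 : dd (g + dd h) ρ = dd g ρ := by rw [dd_add, dd_dd, add_zero]
      rw [← e1]
      refine dd_congr hρ fun σ _ hc => ?_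
      unfold ind
      split_ifs with hh
      · exact (z2_ne_zero (mem_supp.1 hh).2).symm
      · by_contra hne
        exact hh (mem_supp.2 ⟨hc, fun h => hne h.symm⟩)
    have hsup : supp (j + 1) (dd (ind S)) = supp (j + 1) (dd g) := by
      ext ρ
      rw [mem_supp, mem_supp]
      exact and_congr_right fun hc => by rw [hdd ρ hc]
    refine ⟨S, ?_, ?_⟩
    · simp only [I, J, Finset.mem_filter, Finset.mem_powerset]
      refine ⟨fun σ hσ => Finset.mem_powersetCard.2 ⟨Finset.subset_univ _, (mem_supp.1 hσ).1⟩,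
        ?_, ?_⟩
      · by_contra hne
        rw [Finset.not_nonempty_iff_eq_empty] at hne
        rw [← hsup, hne] at hg
        obtain ⟨ρ, hρ⟩ := hg
        rw [mem_supp] at hρ
        exact hρ.2 (by simp [dd, ind])
      · rw [hsup]
        have h5 := expansion j (g + dd h) (fun g' => by
          have := hmin (h + g')
          have e : g + dd (h + g') = g + dd h + dd g' := by
            funext σ; simp only [Pi.add_apply, dd_add]; ring
          rwa [e] at this)
        have e2 : supp (j + 1) (dd (g + dd h)) = supp (j + 1) (dd g) := by
          ext ρ
          rw [mem_supp, mem_supp, dd_add, dd_dd, add_zero]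
        rw [e2] at h5
        exact h5
    · simp only [B]
      rw [hsup]
      refine le_trans (Finset.card_le_card ?_) hc
      intro K hK
      rw [Finset.mem_inter, Finset.mem_filter] at hK
      exact Finset.mem_filter.2 ⟨hK.2, hK.1.2⟩
  have step2 : ∀ S ∈ I, Pr p (KK V k) (fun H => (B S ∩ H).card ≤ n) ≤ x ^ S.card := by
    intro S hS
    simp only [I, J, Finset.mem_filter, Finset.mem_powerset] at hS
    obtain ⟨hSJ, hSne, hSd⟩ := hS
    have hBS : B S ⊆ KK V k := Finset.filter_subset _ _
    have hch := chernoff h0 h1 hBS n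
    refine le_trans (le_of_eq (Pr_congr fun H _ => ?_)) (hch.trans ?_)
    · have e : ∀ (i1 i2 : DecidableEq (Finset V)), @Inter.inter _ (@Finset.instInter _ i1) (B S) H =
          @Inter.inter _ (@Finset.instInter _ i2) (B S) H := by
        intro i1 i2
        rw [Subsingleton.elim i1 i2]
      rw [e]
    have hS1 : 1 ≤ S.card := Finset.card_pos.2 hSne
    have h2 := cover_lb (k := k) (s := j + 1) (by omega) (supp (j + 1) (dd (ind S)))
      (fun σ hσ => (mem_supp.1 hσ).1)
    rw [Nat.add_sub_add_right] at h2
    have h2' : (supp (j + 1) (dd (ind S))).card * (n - (j + 1)).choose (k - j) ≤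
      (B S).card * 2 ^ (k + 1) := by
      exact h2
    set Z := (n - (j + 1)).choose (k - j)
    have h3 : S.card * (n * Z) ≤ (B S).card * (2 ^ (k + 1) * (j + 1)) := by
      calc S.card * (n * Z) = n * S.card * Z := by ring
        _ ≤ (j + 1) * (supp (j + 1) (dd (ind S))).card * Z := Nat.mul_le_mul_right _ hSd
        _ = (j + 1) * ((supp (j + 1) (dd (ind S))).card * Z) := by ring
        _ ≤ (j + 1) * ((B S).card * 2 ^ (k + 1)) := Nat.mul_le_mul_left _ h2'
        _ = _ := by ring
    have h4 : ((S.card * (n * Z) : ℕ) : ℝ) ≤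
        (((B S).card * (2 ^ (k + 1) * (j + 1)) : ℕ) : ℝ) := by exact_mod_cast h3
    push_cast at h4
    have h5 : (S.card : ℝ) * b ≤ (B S).card := by
      rw [hb, ← mul_div_assoc, div_le_iff₀ (by positivity)]
      exact h4
    have h6 : (1 - p / 2) ^ (B S).card ≤ (Real.exp (-(p / 2 * b))) ^ S.card := by
      refine (one_sub_pow_le (by linarith) _).trans ?_
      rw [← Real.exp_nat_mul]
      refine Real.exp_le_exp.2 ?_
      have : p / 2 * (S.card * b) ≤ p / 2 * (B S).card :=
        mul_le_mul_of_nonneg_left h5 (by linarith)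
      linarith
    have h7 : (2 : ℝ) ^ n ≤ (2 ^ n) ^ S.card := by
      refine le_self_pow₀ (one_le_pow₀ (by norm_num)) (by omega)
    rw [hx, mul_pow]
    exact mul_le_mul h7 h6 (pow_nonneg (by linarith) _) (by positivity)
  refine step1.trans ((Finset.sum_le_sum step2).trans ?_)
  have hI : I ⊆ J.powerset.erase ∅ := by
    intro S hS
    simp only [I, Finset.mem_filter] at hS
    exact Finset.mem_erase.2 ⟨hS.2.1.ne_empty, hS.1⟩
  refine (Finset.sum_le_sum_of_subset_of_nonneg hI (fun S _ _ => by positivity)).trans ?_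
  have h8 := Finset.sum_erase_add J.powerset (fun S => x ^ S.card) (Finset.empty_mem_powerset J)
  rw [sum_powerset_pow] at h8
  simp only [Finset.card_empty, pow_zero] at h8
  have h9 : (1 + x) ^ J.card ≤ Real.exp ((n : ℝ) ^ j * x) := by
    calc (1 + x) ^ J.card ≤ (Real.exp x) ^ J.card :=
          pow_le_pow_left₀ (by linarith) (by linarith [Real.add_one_le_exp x]) _
      _ = Real.exp (J.card * x) := by rw [Real.exp_nat_mul]
      _ ≤ _ := by
          refine Real.exp_le_exp.2 (mul_le_mul_of_nonneg_right ?_ hx0)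
          have : J.card ≤ n ^ j := by
            simp only [J, Finset.card_powersetCard, Finset.card_univ]
            exact Nat.choose_le_pow _ _
          exact_mod_cast this
  linarith

end

section

lemma log_tends : Tendsto (fun n : ℕ => Real.log n) atTop atTop :=
  Real.tendsto_log_atTop.comp tendsto_natCast_atTop_atTop

lemma exp_neg_log_mul (ε : ℝ) (hε : 0 < ε) (r : ℕ) :
    Tendsto (fun n : ℕ => (Real.log n) ^ r * Real.exp (-(ε * Real.log n))) atTop (nhds 0) := by
  have h := (Real.tendsto_pow_mul_exp_neg_atTop_nhds_zero r)
  have h2 := (h.comp (Tendsto.const_mul_atTop hε log_tends)).const_mul ((1 / ε) ^ r)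
  rw [mul_zero] at h2
  refine h2.congr fun n => ?_
  simp only [Function.comp_apply]
  rw [mul_pow, ← mul_assoc, ← mul_assoc, ← mul_pow, one_div_mul_cancel hε.ne', one_pow, one_mul]

lemma choose_bounds (r e n : ℕ) (hn : r + e ≤ n) (hn0 : 0 < n) :
    (1 : ℝ) - e * (r + e) / n ≤ ((n - r).choose e : ℕ) * (e.factorial : ℝ) / (n : ℝ) ^ e ∧
      ((n - r).choose e : ℕ) * (e.factorial : ℝ) / (n : ℝ) ^ e ≤ 1 := by
  have hnR : (0 : ℝ) < n := by exact_mod_cast hn0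
  have key : ((n - r).choose e : ℕ) * e.factorial = (n - r).descFactorial e := by
    rw [mul_comm, Nat.descFactorial_eq_factorial_mul_choose]
  have key' : (((n - r).choose e : ℕ) : ℝ) * (e.factorial : ℝ) =
      (((n - r).descFactorial e : ℕ) : ℝ) := by exact_mod_cast key
  rw [key']
  constructor
  · have h1 : (n - r - e) ^ e ≤ (n - r).descFactorial e := by
      refine le_trans ?_ (Nat.pow_sub_le_descFactorial (n - r) e)
      exact Nat.pow_le_pow_left (by omega) _
    have h2 : ((n : ℝ) - (r + e)) ^ e ≤ ((n - r).descFactorial e : ℕ) := by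
      have h3 : (((n - r - e) ^ e : ℕ) : ℝ) ≤ ((n - r).descFactorial e : ℕ) := by exact_mod_cast h1
      rw [Nat.sub_sub] at h3
      push_cast [Nat.cast_sub hn] at h3
      exact h3
    have h4 : (1 : ℝ) - e * (r + e) / n ≤ (1 - (r + e) / n) ^ e := by
      have h5 : (-2 : ℝ) ≤ -((r + e : ℝ) / n) := by
        have : (r + e : ℝ) / n ≤ 1 := by
          rw [div_le_one hnR]; exact_mod_cast hn
        linarith
      have := one_add_mul_le_pow h5 e
      calc (1 : ℝ) - e * (r + e) / n = 1 + e * (-((r + e : ℝ) / n)) := by ring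
        _ ≤ _ := this
        _ = _ := by ring
    refine h4.trans ?_
    rw [le_div_iff₀ (by positivity), ← mul_pow]
    have : (1 - ((r : ℝ) + e) / n) * n = n - (r + e) := by field_simp
    rw [this]
    exact h2
  · rw [div_le_one (by positivity)]
    have : (n - r).descFactorial e ≤ n ^ e :=
      (Nat.descFactorial_le_pow _ _).trans (Nat.pow_le_pow_left (Nat.sub_le _ _) _)
    exact_mod_cast this

lemma choose_tends (r e : ℕ) :
    Tendsto (fun n : ℕ => ((n - r).choose e : ℕ) * (e.factorial : ℝ) / (n : ℝ) ^ e) atTop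
      (nhds 1) := by
  have h1 : Tendsto (fun n : ℕ => (1 : ℝ) - e * (r + e) / n) atTop (nhds 1) := by
    have := (tendsto_const_div_atTop_nhds_zero_nat ((e : ℝ) * (r + e))).const_sub 1
    simpa using this
  refine tendsto_of_tendsto_of_tendsto_of_le_of_le' h1 tendsto_const_nhds ?_ ?_
  · filter_upwards [eventually_ge_atTop (r + e + 1)] with n hn
    exact (choose_bounds r e n (by omega) (by omega)).1
  · filter_upwards [eventually_ge_atTop (r + e + 1)] with n hn
    exact (choose_bounds r e n (by omega) (by omega)).2

/-- the hypotheses on `p` -/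
structure Win (k j : ℕ) (c : ℝ) (cseq p : ℕ → ℝ) : Prop where
  hj : 1 ≤ j
  hjk : j < k
  hc : Tendsto cseq atTop (nhds c)
  hp : ∀ n : ℕ, p n =
      ((j + 1 : ℝ) * Real.log n + Real.log (Real.log n) + cseq n) * (Nat.factorial (k - j)) /
        (((k - j + 1 : ℕ) : ℝ) * (n : ℝ) ^ (k - j))

/-- numerator -/
noncomputable def xs (j : ℕ) (cseq : ℕ → ℝ) (n : ℕ) : ℝ :=
  (j + 1 : ℝ) * Real.log n + Real.log (Real.log n) + cseq n

/-- number of k-simplices over a j-simplex -/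
noncomputable def MM (k j n : ℕ) : ℕ := (n - (j + 1)).choose (k - j)

/-- the constant -/
noncomputable def kap (k j : ℕ) : ℝ := (j + 1) * (Nat.factorial (k - j)) / ((k - j + 1 : ℕ) : ℝ)

lemma kap_pos (k j : ℕ) : 0 < kap k j := by
  unfold kap; positivity

section
variable {k j : ℕ} {c : ℝ} {cseq p : ℕ → ℝ}

lemma Win.xs_log (h : Win k j c cseq p) :
    Tendsto (fun n => xs j cseq n / Real.log n) atTop (nhds (j + 1)) := by
  have h1 : Tendsto (fun n : ℕ => Real.log (Real.log n) / Real.log n) atTop (nhds 0) := by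
    have := (Real.isLittleO_log_id_atTop.tendsto_div_nhds_zero).comp log_tends
    exact this
  have h2 : Tendsto (fun n : ℕ => cseq n / Real.log n) atTop (nhds 0) :=
    h.hc.div_atTop log_tends
  have h3 := (h1.add h2).const_add ((j : ℝ) + 1)
  simp only [add_zero] at h3
  refine h3.congr' ?_
  filter_upwards [log_tends.eventually_gt_atTop 0] with n hn
  unfold xs
  field_simp
  ring

lemma Win.xs_ge (h : Win k j c cseq p) : ∀ᶠ n : ℕ in atTop, Real.log n ≤ xs j cseq n := by
  have h1 := h.xs_log.eventually (eventually_gt_nhds (show (1 : ℝ) < j + 1 by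
    have : (1 : ℝ) ≤ j := by exact_mod_cast h.hj
    linarith))
  filter_upwards [h1, log_tends.eventually_gt_atTop 0] with n h1 h2
  rw [lt_div_iff₀ h2] at h1
  linarith

lemma Win.y_eq (h : Win k j c cseq p) {n : ℕ} (hn : 0 < n) :
    p n * (n : ℝ) ^ (k - j) = xs j cseq n * (Nat.factorial (k - j)) / ((k - j + 1 : ℕ) : ℝ) := by
  rw [h.hp n]
  have : (0 : ℝ) < n := by exact_mod_cast hn
  unfold xs
  field_simp

lemma Win.y_log (h : Win k j c cseq p) :
    Tendsto (fun n => p n * (n : ℝ) ^ (k - j) / Real.log n) atTop (nhds (kap k j)) := by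
  have h1 := h.xs_log.mul_const ((Nat.factorial (k - j) : ℝ) / ((k - j + 1 : ℕ) : ℝ))
  have e : ((j : ℝ) + 1) * ((Nat.factorial (k - j) : ℝ) / ((k - j + 1 : ℕ) : ℝ)) = kap k j := by
    unfold kap; ring
  rw [e] at h1
  refine h1.congr' ?_
  filter_upwards [eventually_gt_atTop 0] with n hn
  rw [h.y_eq hn]
  ring

lemma Win.y_ge (h : Win k j c cseq p) :
    ∀ᶠ n : ℕ in atTop, kap k j / 2 * Real.log n ≤ p n * (n : ℝ) ^ (k - j) := by
  have h1 := h.y_log.eventually (eventually_gt_nhds (half_lt_self (kap_pos k j)))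
  filter_upwards [h1, log_tends.eventually_gt_atTop 0] with n h1 h2
  rw [lt_div_iff₀ h2] at h1
  exact h1.le

lemma Win.y_le (h : Win k j c cseq p) :
    ∀ᶠ n : ℕ in atTop, p n * (n : ℝ) ^ (k - j) ≤ 2 * kap k j * Real.log n := by
  have h1 := h.y_log.eventually (eventually_lt_nhds (show kap k j < 2 * kap k j by
    linarith [kap_pos k j]))
  filter_upwards [h1, log_tends.eventually_gt_atTop 0] with n h1 h2
  rw [div_lt_iff₀ h2] at h1
  exact h1.le

lemma log_pow_div (r : ℕ) : Tendsto (fun n : ℕ => (Real.log n) ^ r / n) atTop (nhds 0) := by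
  refine (exp_neg_log_mul 1 one_pos r).congr' ?_
  filter_upwards [eventually_gt_atTop 0] with n hn
  have : (0 : ℝ) < n := by exact_mod_cast hn
  rw [one_mul, Real.exp_neg, Real.exp_log this, div_eq_mul_inv]

lemma Win.p_pos (h : Win k j c cseq p) : ∀ᶠ n in atTop, 0 < p n := by
  filter_upwards [h.y_ge, log_tends.eventually_gt_atTop 0, eventually_gt_atTop 0] with n h1 h2 h3
  have : (0 : ℝ) < n := by exact_mod_cast h3
  have hk := kap_pos k j
  have h4 : 0 < p n * (n : ℝ) ^ (k - j) := lt_of_lt_of_le (by positivity) h1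
  exact pos_of_mul_pos_left h4 (by positivity)

lemma Win.pn_le (h : Win k j c cseq p) :
    ∀ᶠ n : ℕ in atTop, p n ≤ 2 * kap k j * (Real.log n / n) := by
  filter_upwards [h.y_le, h.p_pos, eventually_gt_atTop 0] with n h1 h2 h3
  have h4 : (1 : ℝ) ≤ n := by exact_mod_cast h3
  have h5 : (n : ℝ) ≤ (n : ℝ) ^ (k - j) := le_self_pow₀ h4 (by have := h.hjk; omega)
  rw [← mul_div_assoc, le_div_iff₀ (by linarith)]
  exact (mul_le_mul_of_nonneg_left h5 h2.le).trans h1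

lemma Win.plog (h : Win k j c cseq p) (r : ℕ) :
    Tendsto (fun n => p n * (Real.log n) ^ r) atTop (nhds 0) := by
  have h1 := (log_pow_div (r + 1)).const_mul (2 * kap k j)
  rw [mul_zero] at h1
  refine squeeze_zero' ?_ ?_ h1
  · filter_upwards [h.p_pos, log_tends.eventually_gt_atTop 0] with n h1 h2
    positivity
  · filter_upwards [h.pn_le, log_tends.eventually_gt_atTop 0] with n h1 h2
    refine (mul_le_mul_of_nonneg_right h1 (by positivity)).trans (le_of_eq ?_)
    ring

lemma Win.p_zero (h : Win k j c cseq p) : Tendsto p atTop (nhds 0) := by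
  simpa using h.plog 0

lemma Win.p_half (h : Win k j c cseq p) : ∀ᶠ n in atTop, p n ≤ 1 / 2 :=
  (h.p_zero.eventually (eventually_lt_nhds (show (0 : ℝ) < 1 / 2 by norm_num))).mono
    fun _ h => h.le

lemma Win.p01 (h : Win k j c cseq p) : ∀ᶠ n in atTop, 0 ≤ p n ∧ p n ≤ 1 := by
  filter_upwards [h.p_pos, h.p_half] with n h1 h2
  exact ⟨h1.le, by linarith⟩

lemma Win.pM (h : Win k j c cseq p) :
    Tendsto (fun n => p n * MM k j n - xs j cseq n / ((k - j + 1 : ℕ) : ℝ)) atTop (nhds 0) := by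
  set e := k - j with he
  set A : ℝ := ((e + 1 : ℕ) : ℝ) with hA
  have hA0 : 0 < A := by rw [hA]; positivity
  have h1 : Tendsto (fun n : ℕ => ((xs j cseq n / Real.log n) *
      ((e : ℝ) * ((j + 1 : ℕ) + e) / A)) * (Real.log n ^ 1 / n)) atTop (nhds 0) := by
    have := (h.xs_log.mul_const ((e : ℝ) * ((j + 1 : ℕ) + e) / A)).mul (log_pow_div 1)
    rw [mul_zero] at this
    exact this
  rw [tendsto_zero_iff_abs_tendsto_zero]
  refine squeeze_zero' (Eventually.of_forall fun n => abs_nonneg _) ?_ h1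
  filter_upwards [h.xs_ge, log_tends.eventually_gt_atTop 0, eventually_ge_atTop (j + 1 + e + 1)]
    with n h2 h3 h4
  have hn : (0 : ℝ) < n := by exact_mod_cast (by omega : 0 < n)
  obtain ⟨b1, b2⟩ := choose_bounds (j + 1) e n (by omega) (by omega)
  set R : ℝ := ((n - (j + 1)).choose e : ℕ) * (e.factorial : ℝ) / (n : ℝ) ^ e with hR
  have e1 : p n * MM k j n = xs j cseq n / A * R := by
    have hy := h.y_eq (n := n) (by omega)
    have hne : (n : ℝ) ^ e ≠ 0 := by positivity
    have : p n = xs j cseq n * (Nat.factorial e) / A / (n : ℝ) ^ e := by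
      rw [eq_div_iff hne]; exact hy
    rw [this, hR]
    unfold MM
    rw [← he]
    field_simp
  simp only [Function.comp_apply]
  rw [e1]
  have hx : 0 ≤ xs j cseq n / A := div_nonneg (by linarith) hA0.le
  have e2 : xs j cseq n / A * R - xs j cseq n / A = -(xs j cseq n / A * (1 - R)) := by ring
  rw [e2, abs_neg, abs_of_nonneg (mul_nonneg hx (by linarith))]
  refine (mul_le_mul_of_nonneg_left (show 1 - R ≤ (e : ℝ) * ((j + 1 : ℕ) + e) / n by linarith)
    hx).trans (le_of_eq ?_)
  field_simp

/-- `exp(-pM)` -/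
noncomputable def tht (k j : ℕ) (p : ℕ → ℝ) (n : ℕ) : ℝ := Real.exp (-(p n * MM k j n))

lemma tht_pos (k j : ℕ) (p : ℕ → ℝ) (n : ℕ) : 0 < tht k j p n := Real.exp_pos _

lemma Win.exp_xs (h : Win k j c cseq p) :
    Tendsto (fun n : ℕ => (n : ℝ) ^ (k + 1) * p n * Real.exp (-(xs j cseq n))) atTop
      (nhds (kap k j * Real.exp (-c))) := by
  have h1 := h.y_log.mul ((Real.continuous_exp.tendsto _).comp h.hc.neg)
  refine h1.congr' ?_
  filter_upwards [log_tends.eventually_gt_atTop 0, eventually_gt_atTop 0] with n h2 h3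
  have hn : (0 : ℝ) < n := by exact_mod_cast h3
  have e1 : Real.exp (-(xs j cseq n)) =
      ((n : ℝ) ^ (j + 1))⁻¹ * (Real.log n)⁻¹ * Real.exp (-cseq n) := by
    unfold xs
    rw [neg_add, neg_add, Real.exp_add, Real.exp_add, Real.exp_neg (Real.log _),
      Real.exp_log h2, Real.exp_neg (_ * _)]
    congr 3
    have : ((j : ℝ) + 1) = ((j + 1 : ℕ) : ℝ) := by push_cast; rfl
    rw [this, Real.exp_nat_mul, Real.exp_log hn]
  have e2 : (n : ℝ) ^ (k + 1) = (n : ℝ) ^ (k - j) * (n : ℝ) ^ (j + 1) := by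
    rw [← pow_add]; congr 1; have := h.hjk; omega
  simp only [Function.comp_apply]
  rw [e1, e2]
  field_simp

lemma Win.main1 (h : Win k j c cseq p) :
    Tendsto (fun n : ℕ => (n : ℝ) ^ (k + 1) * (p n * (tht k j p n) ^ (k - j + 1))) atTop
      (nhds (kap k j * Real.exp (-c))) := by
  have h1 := (Real.continuous_exp.tendsto _).comp
    ((h.pM.const_mul (((k - j + 1 : ℕ) : ℝ))).neg)
  have h2 := h.exp_xs.mul h1
  rw [mul_zero, neg_zero, Real.exp_zero, mul_one] at h2
  refine h2.congr fun n => ?_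
  simp only [Function.comp_apply, tht]
  rw [← Real.exp_nat_mul, mul_assoc, mul_assoc, ← Real.exp_add]
  congr 3
  field_simp
  ring

lemma Win.tht_log (h : Win k j c cseq p) (r : ℕ) :
    Tendsto (fun n : ℕ => tht k j p n * (Real.log n) ^ r) atTop (nhds 0) := by
  have hA0 : (0 : ℝ) < ((k - j + 1 : ℕ) : ℝ) := by positivity
  have h1 := (exp_neg_log_mul (1 / ((k - j + 1 : ℕ) : ℝ)) (by positivity) r).mul
    ((Real.continuous_exp.tendsto _).comp h.pM.neg)
  rw [zero_mul] at h1
  refine squeeze_zero' ?_ ?_ h1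
  · filter_upwards [log_tends.eventually_gt_atTop 0] with n h2
    have := tht_pos k j p n
    positivity
  · filter_upwards [log_tends.eventually_gt_atTop 0, h.xs_ge] with n h2 h3
    simp only [Function.comp_apply, tht]
    rw [mul_assoc, ← Real.exp_add, mul_comm]
    refine mul_le_mul_of_nonneg_left (Real.exp_le_exp.2 ?_) (by positivity)
    have : 1 / ((k - j + 1 : ℕ) : ℝ) * Real.log n ≤ xs j cseq n / ((k - j + 1 : ℕ) : ℝ) := by
      rw [one_div_mul_eq_div]
      gcongr
    linarith

lemma Win.tht_zero (h : Win k j c cseq p) : Tendsto (tht k j p) atTop (nhds 0) := by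
  simpa using h.tht_log 0

lemma Win.main2 (h : Win k j c cseq p) :
    Tendsto (fun n : ℕ => ((n.choose (k + 1) * (k + 1).choose j : ℕ) : ℝ) *
      (p n * (tht k j p n) ^ (k - j + 1))) atTop (nhds (lamj k j c)) := by
  have h1 := ((choose_tends 0 (k + 1)).mul h.main1).mul_const
    (((k + 1).choose j : ℝ) / ((k + 1).factorial : ℝ))
  have hjk := h.hjk
  have e : 1 * (kap k j * Real.exp (-c)) * (((k + 1).choose j : ℝ) / ((k + 1).factorial : ℝ)) =
      lamj k j c := by
    have h2 : ((k + 1).choose j : ℝ) * (j.factorial : ℝ) * ((k - j + 1).factorial : ℝ) =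
        (k + 1).factorial := by
      have := Nat.choose_mul_factorial_mul_factorial (n := k + 1) (k := j) (by omega)
      rw [show k + 1 - j = k - j + 1 by omega] at this
      exact_mod_cast this
    have h3 : ((k - j + 1).factorial : ℝ) = ((k - j + 1 : ℕ) : ℝ) * ((k - j).factorial : ℝ) := by
      rw [Nat.factorial_succ]; push_cast; ring
    rw [← h2, h3]
    have hc0 : ((k + 1).choose j : ℝ) ≠ 0 := by
      exact_mod_cast (Nat.choose_pos (by omega)).ne'
    unfold kap lamj
    field_simp
  rw [e] at h1
  refine h1.congr' ?_
  filter_upwards [eventually_gt_atTop 0] with n h3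
  have hn : (0 : ℝ) < n := by exact_mod_cast h3
  rw [Nat.sub_zero]
  push_cast
  field_simp

end

end

section

section
variable {k j : ℕ} {c : ℝ} {cseq p : ℕ → ℝ}

lemma choose_lb (r e : ℕ) : ∀ᶠ n : ℕ in atTop,
    (n : ℝ) ^ e / (2 * (e.factorial : ℝ)) ≤ ((n - r).choose e : ℕ) := by
  filter_upwards [(choose_tends r e).eventually (eventually_gt_nhds (show (1/2 : ℝ) < 1 by norm_num)),
    eventually_gt_atTop 0] with n h1 h2
  have hn : (0 : ℝ) < n := by exact_mod_cast h2
  rw [lt_div_iff₀ (by positivity)] at h1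
  rw [div_le_iff₀ (by positivity)]
  linarith

lemma Win.E1_zero (h : Win k j c cseq p) :
    Tendsto (fun n => Pr (p n) (KK (Fin n) k) (fun H => ¬ E1 j H)) atTop (nhds 0) := by
  have g1 : Tendsto (fun n : ℕ => Real.exp ((n : ℝ) ^ j * Real.exp (-(n : ℝ))) - 1) atTop
      (nhds 0) := by
    have := (Real.continuous_exp.tendsto _).comp
      ((Real.tendsto_pow_mul_exp_neg_atTop_nhds_zero j).comp tendsto_natCast_atTop_atTop)
    simpa using this.sub_const 1
  refine squeeze_zero' ?_ ?_ g1
  · filter_upwards [h.p01] with n hn using Pr_nonneg hn.1 hn.2 _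
  set c1 : ℝ := 1 / (4 * ((k - j).factorial : ℝ) * (2 ^ (k + 1) * (j + 1))) with hc1
  have hc1p : 0 < c1 := by positivity
  have hk := kap_pos k j
  filter_upwards [h.p01, h.p_pos, h.y_ge, choose_lb (j + 1) (k - j),
    (Tendsto.const_mul_atTop (show 0 < c1 * (kap k j / 2) by positivity)
      log_tends).eventually_ge_atTop 2] with n hn hp hy hM hl
  refine (Pr_E1 hn.1 hn.2 h.hjk).trans ?_
  simp only [Fintype.card_fin]
  gcongr
  have e1 : (2 : ℝ) * n ≤ p n / 2 * ((n * ((n - (j + 1)).choose (k - j) : ℕ)) / (2 ^ (k + 1) * (j + 1))) := by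
    calc (2 : ℝ) * n ≤ (c1 * (p n * (n : ℝ) ^ (k - j))) * n := by
          gcongr
          refine hl.trans ?_
          rw [mul_assoc]
          gcongr
      _ = p n / 2 * ((n * ((n : ℝ) ^ (k - j) / (2 * ((k - j).factorial : ℝ)))) / (2 ^ (k + 1) * (j + 1))) := by
          rw [hc1]; field_simp; ring
      _ ≤ _ := by gcongr
  calc (2 : ℝ) ^ n * Real.exp _ ≤ (Real.exp 1) ^ n * Real.exp (-(2 * n)) := by
        gcongr
        have := Real.add_one_le_exp 1
        linarith
    _ = Real.exp (-(n : ℝ)) := by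
        rw [← Real.exp_nat_mul, ← Real.exp_add]; ring_nf

lemma Win.Esm_zero (h : Win k j c cseq p) (M0 : ℕ) :
    Tendsto (fun n => Pr (p n) (KK (Fin n) k) (fun H => ¬ Esm k j M0 H)) atTop (nhds 0) := by
  have hjk := h.hjk
  have g0 : Tendsto (fun n : ℕ => p n * (n : ℝ) ^ (k - (j + 1))) atTop (nhds 0) := by
    have := h.y_log.mul (log_pow_div 1)
    rw [mul_zero] at this
    refine this.congr' ?_
    filter_upwards [log_tends.eventually_gt_atTop 0, eventually_gt_atTop 0] with n h1 h2
    have hn : (0 : ℝ) < n := by exact_mod_cast h2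
    rw [show k - j = (k - (j + 1)) + 1 by omega, pow_succ]
    field_simp
  have g1 : Tendsto (fun n : ℕ => ∑ m ∈ Finset.range M0,
      ((n : ℝ) ^ (k + 1) * (p n * (tht k j p n) ^ (k - j + 1))) *
      ((p n * (n : ℝ) ^ (k - j) / Real.log n) ^ m * (tht k j p n * (Real.log n) ^ m)) *
      ((4 * 2 ^ (k + 1)) ^ m * 2 ^ (2 ^ (k + 1) * (m + 1))) *
      Real.exp ((2 ^ (k + 1) * M0) ^ 2 * (p n * (n : ℝ) ^ (k - (j + 1))))) atTop (nhds 0) := by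
    have : (0 : ℝ) = ∑ m ∈ Finset.range M0, (0 : ℝ) := by simp
    rw [this]
    refine tendsto_finsetSum _ fun m _ => ?_
    have := ((h.main1.mul ((h.y_log.pow m).mul (h.tht_log m))).mul_const
      ((4 * 2 ^ (k + 1)) ^ m * 2 ^ (2 ^ (k + 1) * (m + 1)) : ℝ)).mul
      ((Real.continuous_exp.tendsto _).comp (g0.const_mul ((2 ^ (k + 1) * M0 : ℝ) ^ 2)))
    simp only [mul_zero, zero_mul] at this
    exact this
  refine squeeze_zero' ?_ ?_ g1
  · filter_upwards [h.p01] with n hn using Pr_nonneg hn.1 hn.2 _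
  filter_upwards [h.p01, log_tends.eventually_gt_atTop 0] with n hn hl
  refine (Pr_Esm hn.1 hn.2 h.hjk M0).trans (Finset.sum_le_sum fun m _ => le_of_eq ?_)
  simp only [Fintype.card_fin]
  have e1 : Real.exp (-(p n * ((k - j + 2 : ℕ) * ((n - (j + 1)).choose (k - j) : ℕ)
          - (2 ^ (k + 1) * M0) ^ 2 * (n : ℝ) ^ (k - (j + 1))))) =
      (tht k j p n) ^ (k - j + 1) * tht k j p n *
      Real.exp ((2 ^ (k + 1) * M0) ^ 2 * (p n * (n : ℝ) ^ (k - (j + 1)))) := by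
    rw [← pow_succ]
    unfold tht
    rw [← Real.exp_nat_mul, ← Real.exp_add]
    congr 1
    unfold MM
    push_cast
    ring
  rw [e1, pow_succ (p n)]
  rw [div_pow, mul_pow, mul_pow, mul_pow, mul_pow]
  have : Real.log n ^ m ≠ 0 := by positivity
  field_simp
  rw [mul_pow]
  ring

lemma Win.Elarge_zero (h : Win k j c cseq p) : ∃ M0 : ℕ, 1 ≤ M0 ∧
    Tendsto (fun n => Pr (p n) (KK (Fin n) k) (fun H => ¬ Elarge k j M0 H)) atTop (nhds 0) := by
  have hjk := h.hjk
  have hk := kap_pos k j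
  set e := k - (j + 1) with he
  set c1 : ℝ := 1 / (2 * (e.factorial : ℝ) * (2 ^ (k + 1) * (j + 2))) with hc1
  have hc1p : 0 < c1 := by positivity
  set ε : ℝ := c1 * (kap k j / 2) with hε
  have hεp : 0 < ε := by positivity
  obtain ⟨M0, hM0⟩ := exists_nat_ge ((2 * k + 3) / ε)
  have hM0' : 2 * k + 3 ≤ ε * M0 := by rw [div_le_iff₀ hεp] at hM0; linarith
  refine ⟨M0, ?_, ?_⟩
  · by_contra hh
    have : M0 = 0 := by omega
    subst this
    simp at hM0'
    have : (0 : ℝ) ≤ k := by positivity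
    linarith
  set C : ℝ := 4 * 2 ^ (k + 1) * 2 ^ (2 ^ (k + 1)) * (2 * kap k j) with hC
  have hCp : 0 < C := by positivity
  have g0 : Tendsto (fun n : ℕ => C * ((Real.log n) ^ 1 * Real.exp (-(ε * Real.log n)))) atTop
    (nhds 0) := by
    simpa using (exp_neg_log_mul ε hεp 1).const_mul C
  have g1 : Tendsto (fun n : ℕ => C ^ (M0 + 1) * ((Real.log n) ^ (M0 + 1) *
      Real.exp (-(1 * Real.log n)))) atTop (nhds 0) := by
    simpa using (exp_neg_log_mul 1 one_pos (M0 + 1)).const_mul (C ^ (M0 + 1))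
  refine squeeze_zero' ?_ ?_ g1
  · filter_upwards [h.p01] with n hn using Pr_nonneg hn.1 hn.2 _
  filter_upwards [h.p01, h.y_ge, h.y_le, choose_lb (j + 2) e, log_tends.eventually_gt_atTop 0,
    g0.eventually (eventually_le_nhds (show (0 : ℝ) < 1 by norm_num)),
    eventually_gt_atTop 0] with n hn hy1 hy2 hM hl hq hn0
  have hnR : (0 : ℝ) < n := by exact_mod_cast hn0
  have hn1 : (1 : ℝ) ≤ n := by exact_mod_cast hn0
  set q := C * ((Real.log n) ^ 1 * Real.exp (-(ε * Real.log n))) with hqd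
  have hq0 : 0 ≤ q := by positivity
  refine (Pr_Elarge hn.1 hn.2 h.hjk M0).trans ?_
  simp only [Fintype.card_fin]
  set y := p n * (n : ℝ) ^ (k - j) with hy
  have hy0 : 0 ≤ y := le_trans (by positivity) hy1
  have hterm : ∀ m ∈ Finset.Ico M0 (KK (Fin n) k).card,
      (n : ℝ) ^ (k + 1) * (4 * (2 ^ (k + 1) * (n : ℝ) ^ (k - j))) ^ m *
        2 ^ (2 ^ (k + 1) * (m + 1)) * p n ^ (m + 1) *
        Real.exp (-(p n * ((m + 1) * ((n *
          ((n - (j + 2)).choose (k - (j + 1)) : ℕ)) / (2 ^ (k + 1) * (j + 2)))))) ≤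
      (n : ℝ) ^ (k + 1) * q ^ (M0 + 1) := by
    intro m hm
    have hm1 := (Finset.mem_Ico.1 hm).1
    have hexp : (m + 1) * (c1 * y) ≤ p n * ((m + 1) * ((n *
          ((n - (j + 2)).choose (k - (j + 1)) : ℕ)) / (2 ^ (k + 1) * (j + 2)))) := by
      calc (m + 1) * (c1 * y) = p n * ((m + 1) * ((n *
          ((n : ℝ) ^ e / (2 * (e.factorial : ℝ)))) / (2 ^ (k + 1) * (j + 2)))) := by
            rw [hy, hc1, show k - j = e + 1 by omega, pow_succ]
            field_simp
            rw [pow_succ]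
            ring
        _ ≤ _ := by
          have := hn.1
          gcongr
    have hbase : 4 * 2 ^ (k + 1) * 2 ^ (2 ^ (k + 1)) * y * Real.exp (-(c1 * y)) ≤ q := by
      rw [hqd, hC, pow_one]
      calc 4 * 2 ^ (k + 1) * 2 ^ (2 ^ (k + 1)) * y * Real.exp (-(c1 * y)) ≤
          4 * 2 ^ (k + 1) * 2 ^ (2 ^ (k + 1)) * (2 * kap k j * Real.log n) *
            Real.exp (-(ε * Real.log n)) := by
            have hh : ε * Real.log n ≤ c1 * y := by
              rw [hε, mul_assoc]
              gcongr
            gcongr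
        _ = _ := by ring
    have h4 : (1 : ℝ) ≤ 4 * (2 ^ (k + 1) * (n : ℝ) ^ (k - j)) := by
      have a1 : (1 : ℝ) ≤ 2 ^ (k + 1) := one_le_pow₀ (by norm_num)
      have a2 : (1 : ℝ) ≤ (n : ℝ) ^ (k - j) := one_le_pow₀ hn1
      nlinarith
    calc _ ≤ (n : ℝ) ^ (k + 1) * (4 * (2 ^ (k + 1) * (n : ℝ) ^ (k - j))) ^ (m + 1) *
        2 ^ (2 ^ (k + 1) * (m + 1)) * p n ^ (m + 1) * Real.exp (-((m + 1) * (c1 * y))) := by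
          have := hn.1
          gcongr
          omega
      _ = (n : ℝ) ^ (k + 1) * (4 * 2 ^ (k + 1) * 2 ^ (2 ^ (k + 1)) * y * Real.exp (-(c1 * y))) ^ (m + 1) := by
          rw [show -((m + 1 : ℝ) * (c1 * y)) = ((m + 1 : ℕ) : ℝ) * (-(c1 * y)) by push_cast; ring,
            Real.exp_nat_mul, pow_mul, hy]
          rw [mul_pow _ (Real.exp _), mul_pow _ (p n * _), mul_pow (p n), mul_pow (4 * 2 ^ (k + 1)),
            ← mul_assoc 4, mul_pow (4 * 2 ^ (k + 1) : ℝ)]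
          ring
      _ ≤ (n : ℝ) ^ (k + 1) * q ^ (m + 1) := by gcongr
      _ ≤ _ := by
          gcongr 1
          exact pow_le_pow_of_le_one hq0 hq (by omega)
  refine (Finset.sum_le_card_nsmul _ _ _ hterm).trans ?_
  rw [nsmul_eq_mul, Nat.card_Ico]
  have hcard : (((KK (Fin n) k).card - M0 : ℕ) : ℝ) ≤ (n : ℝ) ^ (k + 1) := by
    have : (KK (Fin n) k).card - M0 ≤ n ^ (k + 1) := by
      rw [card_KK, Fintype.card_fin]
      exact (Nat.sub_le _ _).trans (Nat.choose_le_pow _ _)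
    exact_mod_cast this
  calc _ ≤ (n : ℝ) ^ (k + 1) * ((n : ℝ) ^ (k + 1) * q ^ (M0 + 1)) := by gcongr
    _ = C ^ (M0 + 1) * ((Real.log n) ^ (M0 + 1) * (((n : ℝ) ^ (k + 1) * (n : ℝ) ^ (k + 1)) *
        Real.exp (-(ε * Real.log n)) ^ (M0 + 1))) := by
        rw [hqd, pow_one, mul_pow, mul_pow]; ring
    _ ≤ _ := by
        gcongr
        have : (n : ℝ) = Real.exp (Real.log n) := (Real.exp_log hnR).symm
        rw [← pow_add]
        nth_rewrite 1 [this]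
        rw [← Real.exp_nat_mul, ← Real.exp_nat_mul, ← Real.exp_add]
        gcongr
        push_cast
        nlinarith

end

end

section

variable {V : Type*} [Fintype V]

/-- all pairs in `T` are realised -/
def JT (j : ℕ) (T : Finset (Finset V × Finset V)) (H : Finset (Finset V)) : Prop :=
  ∀ a ∈ T, IsM H j a.1 a.2

/-- the simplices occurring in `T` -/
noncomputable def KT (T : Finset (Finset V × Finset V)) : Finset (Finset V) := T.image Prod.fst

/-- the petals occurring in `T` -/
noncomputable def PT (T : Finset (Finset V × Finset V)) : Finset (Finset V) :=
  T.biUnion (fun a => fl a.1 a.2)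

lemma mem_KT {T : Finset (Finset V × Finset V)} {K : Finset V} :
    K ∈ KT T ↔ ∃ C, (K, C) ∈ T := by
  simp [KT]

lemma mem_PT {T : Finset (Finset V × Finset V)} {P : Finset V} :
    P ∈ PT T ↔ ∃ a ∈ T, P ∈ fl a.1 a.2 := by
  simp [PT]

lemma Ex_choose (p : ℝ) (k j r : ℕ) :
    Ex p (KK V k) (fun H => ((XM k j H).card.choose r : ℝ)) =
      ∑ T ∈ Finset.powersetCard r (Xi V k j), Pr p (KK V k) (JT j T) := by
  unfold Pr
  rw [← Ex_sum]
  refine Ex_congr fun H hH => ?_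
  rw [← Finset.card_powersetCard, Finset.sum_boole]
  congr 2
  ext T
  simp only [Finset.mem_powersetCard, Finset.mem_filter]
  constructor
  · rintro ⟨h1, h2⟩
    exact ⟨⟨h1.trans (Finset.filter_subset _ _), h2⟩, fun a ha => (mem_XM hH).1 (h1 ha)⟩
  · rintro ⟨⟨h1, h2⟩, h3⟩
    exact ⟨fun a ha => (mem_XM hH).2 (h3 a ha), h2⟩

lemma fl_card_Xi {k j : ℕ} (hj : j < k) {a : Finset V × Finset V} (ha : a ∈ Xi V k j) :
    (fl a.1 a.2).card = k - j + 1 := by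
  obtain ⟨h1, h2, h3⟩ := mem_Xi.1 ha
  rw [card_fl h3, h1, h2]; omega

lemma PT_card_le {k j : ℕ} (hj : j < k) {T : Finset (Finset V × Finset V)}
    (hT : T ⊆ Xi V k j) : (PT T).card ≤ T.card * (k - j + 1) := by
  unfold PT
  exact Finset.card_biUnion_le_card_mul _ _ _ fun a ha => (fl_card_Xi hj (hT ha)).le

lemma PT_mem_card {k j : ℕ} {T : Finset (Finset V × Finset V)}
    (hT : T ⊆ Xi V k j) : ∀ P ∈ PT T, P.card = j + 1 := by
  intro P hP
  obtain ⟨a, ha, hP⟩ := mem_PT.1 hP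
  rw [fl_card_mem hP, (mem_Xi.1 (hT ha)).2.1]

lemma KT_sub {k j : ℕ} {T : Finset (Finset V × Finset V)} (hT : T ⊆ Xi V k j) : KT T ⊆ KK V k := by
  intro K hK
  obtain ⟨C, hC⟩ := mem_KT.1 hK
  exact mem_KK.2 (mem_Xi.1 (hT hC)).1

/-- lower bound on the number of petals -/
lemma PT_card_ge {k j : ℕ} (hj : j < k) {T : Finset (Finset V × Finset V)}
    (hT : T ⊆ Xi V k j) {H : Finset (Finset V)} (hJ : JT j T H) :
    (KT T).card * (k - j + 1) + (if (KT T).card < T.card then 1 else 0) ≤ (PT T).card := by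
  have hs : ∀ K, ∃ C, K ∈ KT T → (K, C) ∈ T := by
    intro K
    by_cases h : K ∈ KT T
    · obtain ⟨C, hC⟩ := mem_KT.1 h
      exact ⟨C, fun _ => hC⟩
    · exact ⟨∅, fun h' => absurd h' h⟩
  choose s hs using hs
  have hdisj : ∀ K ∈ KT T, ∀ K' ∈ KT T, ∀ P C', (K', C') ∈ T → P ∈ fl K (s K) → P ∈ fl K' C' →
      K' = K := by
    intro K hK K' hK' P C' hC' h1 h2
    obtain ⟨a1, a2, a3, a4⟩ := hJ _ (hs K hK)
    obtain ⟨b1, b2, b3, b4⟩ := hJ _ hC'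
    exact a4 P h1 K' b1 (fl_sub b2 h2)
  let Q := (KT T).biUnion (fun K => fl K (s K))
  have hQ : Q.card = (KT T).card * (k - j + 1) := by
    rw [Finset.card_biUnion]
    · rw [Finset.sum_const_nat fun K hK => fl_card_Xi hj (hT (hs K hK))]
    · intro K hK K' hK' hne
      exact Finset.disjoint_left.2 fun P h1 h2 =>
        hne (hdisj K hK K' hK' P _ (hs K' hK') h1 h2).symm
  have hQsub : Q ⊆ PT T := by
    intro P hP
    obtain ⟨K, hK, hP⟩ := Finset.mem_biUnion.1 hP
    exact mem_PT.2 ⟨_, hs K hK, hP⟩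
  split_ifs with hlt
  · rw [← hQ]
    refine Finset.card_lt_card ⟨hQsub, fun hcon => ?_⟩
    have : ∃ a ∈ T, a ∉ (KT T).image (fun K => (K, s K)) := by
      by_contra hh
      push Not at hh
      have := (Finset.card_le_card (show T ⊆ _ from hh)).trans Finset.card_image_le
      omega
    obtain ⟨⟨K, C⟩, haT, ha⟩ := this
    have hK : K ∈ KT T := mem_KT.2 ⟨C, haT⟩
    have hne : C ≠ s K := by
      rintro rfl
      exact ha (Finset.mem_image.2 ⟨K, hK, rfl⟩)
    have x1 := mem_Xi.1 (hT haT)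
    have x2 := mem_Xi.1 (hT (hs K hK))
    simp only at x1 x2
    refine hne (fl_inj (j := j) x1.2.2 x2.2.2 (by omega) x1.2.1 x2.2.1 ?_)
    refine Finset.eq_of_subset_of_card_le ?_ ?_
    · intro P hP
      obtain ⟨K', hK', hP'⟩ := Finset.mem_biUnion.1 (hcon (mem_PT.2 ⟨_, haT, hP⟩))
      have := hdisj K' hK' K hK P C haT hP' hP
      subst this
      exact hP'
    · rw [card_fl x1.2.2, card_fl x2.2.2, x1.2.1, x2.2.1]
  · rw [add_zero, ← hQ]
    exact Finset.card_le_card hQsub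

lemma JT_cyl {k j : ℕ} {T : Finset (Finset V × Finset V)} {H : Finset (Finset V)}
    (hJ : JT j T H) : KT T ⊆ H ∧ Disjoint (U1 k (PT T) \ KT T) H := by
  constructor
  · intro K hK
    obtain ⟨C, hC⟩ := mem_KT.1 hK
    exact (hJ _ hC).1
  · refine Finset.disjoint_left.2 fun K' hK' hH => ?_
    obtain ⟨h1, h2⟩ := Finset.mem_sdiff.1 hK'
    have h3 := (Finset.mem_filter.1 h1).2
    obtain ⟨P, hP⟩ := Finset.card_pos.1 (by omega : 0 < ((PT T).filter (fun σ => σ ⊆ K')).card)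
    obtain ⟨hP1, hP2⟩ := Finset.mem_filter.1 hP
    obtain ⟨a, ha, hP3⟩ := mem_PT.1 hP1
    have := (hJ a ha).2.2.2 P hP3 K' hH hP2
    rw [this] at h2
    exact h2 (mem_KT.2 ⟨a.2, ha⟩)

lemma Pr_JT_le {p : ℝ} (h0 : 0 ≤ p) (h1 : p ≤ 1) {k j r : ℕ} (hj : j < k)
    {T : Finset (Finset V × Finset V)} (hT : T ⊆ Xi V k j) (hr : T.card = r) :
    Pr p (KK V k) (JT j T) ≤ p ^ (KT T).card *
      Real.exp (-(p * ((Fintype.card V - (j + 1)).choose (k - j) : ℕ))) ^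
        ((KT T).card * (k - j + 1) + (if (KT T).card < r then 1 else 0)) *
      Real.exp (p * (((r * (k - j + 1) : ℕ) : ℝ) ^ 2 * (Fintype.card V : ℝ) ^ (k - (j + 1)) + r)) := by
  by_cases hex : ∃ H, JT j T H
  · obtain ⟨H, hJ⟩ := hex
    have hw := PT_card_ge hj hT hJ
    rw [hr] at hw
    set w := (KT T).card * (k - j + 1) + (if (KT T).card < r then 1 else 0) with hwd
    set M := (Fintype.card V - (j + 1)).choose (k - j) with hM
    have hu := exactly_one (V := V) (k := k) (m := j + 1) (by omega) (PT T) (PT_mem_card hT)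
    rw [show k + 1 - (j + 1) = k - j by omega, ← hM] at hu
    have hpc := PT_card_le hj hT
    rw [hr] at hpc
    have hsd : (U1 k (PT T)).card ≤ (U1 k (PT T) \ KT T).card + r := by
      have a1 := Finset.le_card_sdiff (KT T) (U1 k (PT T))
      have a2 : (KT T).card ≤ r := by rw [← hr]; exact Finset.card_image_le
      omega
    have hnat : w * M ≤ (U1 k (PT T) \ KT T).card + r +
        (r * (k - j + 1)) ^ 2 * (Fintype.card V) ^ (k - (j + 1)) := by
      calc w * M ≤ (PT T).card * M := Nat.mul_le_mul_right _ hw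
        _ ≤ _ := hu
        _ ≤ _ := by gcongr
    have hreal : (w : ℝ) * M ≤ (U1 k (PT T) \ KT T).card + r +
        ((r * (k - j + 1) : ℕ) : ℝ) ^ 2 * (Fintype.card V : ℝ) ^ (k - (j + 1)) := by
      exact_mod_cast hnat
    refine (Pr_mono h0 h1 (Q' := fun H => KT T ⊆ H ∧ Disjoint (U1 k (PT T) \ KT T) H)
      fun H _ hJ => JT_cyl hJ).trans ((cyl_le h0 h1 (KT_sub hT) ?_).trans ?_)
    · exact Finset.sdiff_subset.trans (Finset.filter_subset _ _)
    · rw [mul_assoc]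
      refine mul_le_mul_of_nonneg_left ((one_sub_pow_le h1 _).trans ?_) (pow_nonneg h0 _)
      rw [← Real.exp_nat_mul, ← Real.exp_add]
      refine Real.exp_le_exp.2 ?_
      nlinarith [mul_le_mul_of_nonneg_left hreal h0]
  · have : Pr p (KK V k) (JT j T) = Pr p (KK V k) (fun _ => False) :=
      Pr_congr fun H _ => ⟨fun h => hex ⟨H, h⟩, False.elim⟩
    rw [this]
    have : Pr p (KK V k) (fun _ => False) = 0 := by simp [Pr, Ex]
    rw [this]
    positivity

/-- pairs over a set of simplices -/
noncomputable def XiS (k j : ℕ) (S : Finset (Finset V)) : Finset (Finset V × Finset V) :=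
  (Xi V k j).filter (fun a => a.1 ∈ S)

lemma card_XiS (k j : ℕ) (S : Finset (Finset V)) : (XiS k j S).card ≤ S.card * 2 ^ (k + 1) := by
  have h1 : XiS k j S ⊆ (S.filter (fun K => K.card = k + 1)).biUnion
      (fun K => K.powerset.image (fun C => (K, C))) := by
    intro a ha
    obtain ⟨ha1, ha2⟩ := Finset.mem_filter.1 ha
    obtain ⟨h1, h2, h3⟩ := mem_Xi.1 ha1
    refine Finset.mem_biUnion.2 ⟨a.1, Finset.mem_filter.2 ⟨ha2, h1⟩, ?_⟩
    exact Finset.mem_image.2 ⟨a.2, Finset.mem_powerset.2 h3, rfl⟩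
  refine (Finset.card_le_card h1).trans ((Finset.card_biUnion_le_card_mul _ _ (2 ^ (k + 1)) ?_).trans
    (Nat.mul_le_mul_right _ (Finset.card_filter_le _ _)))
  intro K hK
  refine Finset.card_image_le.trans ?_
  rw [Finset.card_powerset, (Finset.mem_filter.1 hK).2]

lemma Ex_choose_le {p : ℝ} (h0 : 0 ≤ p) (h1 : p ≤ 1) {k j : ℕ} (hj : j < k) (r : ℕ) (θ E : ℝ)
    (hθ : θ = Real.exp (-(p * ((Fintype.card V - (j + 1)).choose (k - j) : ℕ))))
    (hE : E = Real.exp (p * (((r * (k - j + 1) : ℕ) : ℝ) ^ 2 *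
      (Fintype.card V : ℝ) ^ (k - (j + 1)) + r))) :
    Ex p (KK V k) (fun H => ((XM k j H).card.choose r : ℝ)) ≤
      ((Xi V k j).card.choose r : ℝ) * ((p * θ ^ (k - j + 1)) ^ r * E) +
      ∑ i ∈ Finset.range r, ((Fintype.card V : ℝ) ^ (k + 1)) ^ i * 2 ^ (i * 2 ^ (k + 1)) *
        ((p * θ ^ (k - j + 1)) ^ i * θ * E) := by
  have hθ0 : 0 ≤ θ := by rw [hθ]; positivity
  have hE0 : 0 ≤ E := by rw [hE]; positivity
  rw [Ex_choose]
  have hT : ∀ T ∈ Finset.powersetCard r (Xi V k j), Pr p (KK V k) (JT j T) ≤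
      (p * θ ^ (k - j + 1)) ^ r * E + ∑ i ∈ Finset.range r, ∑ S ∈ Finset.powersetCard i (KK V k),
        if T ⊆ XiS k j S then (p * θ ^ (k - j + 1)) ^ i * θ * E else 0 := by
    intro T hT
    obtain ⟨hT1, hT2⟩ := Finset.mem_powersetCard.1 hT
    have hb := Pr_JT_le h0 h1 hj hT1 hT2
    rw [← hθ, ← hE] at hb
    have hnn : ∀ i ∈ Finset.range r, 0 ≤ ∑ S ∈ Finset.powersetCard i (KK V k),
        if T ⊆ XiS k j S then (p * θ ^ (k - j + 1)) ^ i * θ * E else 0 := by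
      intro i _
      refine Finset.sum_nonneg fun S _ => ?_
      split_ifs
      · positivity
      · exact le_rfl
    by_cases hlt : (KT T).card < r
    · rw [if_pos hlt] at hb
      have t1 := Finset.single_le_sum hnn (Finset.mem_range.2 hlt)
      have t2 := Finset.single_le_sum (s := Finset.powersetCard (KT T).card (KK V k))
        (f := fun S => if T ⊆ XiS k j S then (p * θ ^ (k - j + 1)) ^ (KT T).card * θ * E else 0)
        (fun S _ => by
          split_ifs
          · positivity
          · exact le_rfl) (Finset.mem_powersetCard.2 ⟨KT_sub hT1, rfl⟩)
      have t3 : T ⊆ XiS k j (KT T) := fun a ha =>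
        Finset.mem_filter.2 ⟨hT1 ha, mem_KT.2 ⟨a.2, ha⟩⟩
      simp only [if_pos t3] at t2
      have t4 : 0 ≤ (p * θ ^ (k - j + 1)) ^ r * E := by positivity
      have t5 : p ^ (KT T).card * θ ^ ((KT T).card * (k - j + 1) + 1) * E =
        (p * θ ^ (k - j + 1)) ^ (KT T).card * θ * E := by
        rw [mul_pow, ← pow_mul, pow_succ, mul_comm (k - j + 1)]; ring
      linarith
    · have hc : (KT T).card = r := le_antisymm (by rw [← hT2]; exact Finset.card_image_le)
        (not_lt.1 hlt)
      rw [if_neg hlt, hc] at hb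
      have := Finset.sum_nonneg hnn
      have t5 : p ^ r * θ ^ (r * (k - j + 1) + 0) * E =
        (p * θ ^ (k - j + 1)) ^ r * E := by
        rw [mul_pow, ← pow_mul, add_zero, mul_comm (k - j + 1)]
      linarith
  refine (Finset.sum_le_sum hT).trans ?_
  rw [Finset.sum_add_distrib, Finset.sum_const, Finset.card_powersetCard, nsmul_eq_mul,
    Finset.sum_comm]
  gcongr with i hi
  rw [Finset.sum_comm]
  have hS : ∀ S ∈ Finset.powersetCard i (KK V k), (∑ T ∈ Finset.powersetCard r (Xi V k j),
      if T ⊆ XiS k j S then (p * θ ^ (k - j + 1)) ^ i * θ * E else 0) ≤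
      2 ^ (i * 2 ^ (k + 1)) * ((p * θ ^ (k - j + 1)) ^ i * θ * E) := by
    intro S hS
    rw [← Finset.sum_filter, Finset.sum_const, nsmul_eq_mul]
    gcongr
    have : ((Finset.powersetCard r (Xi V k j)).filter (fun T => T ⊆ XiS k j S)).card ≤
        2 ^ (i * 2 ^ (k + 1)) := by
      calc _ ≤ (XiS k j S).powerset.card := by
            refine Finset.card_le_card fun T hT => ?_
            exact Finset.mem_powerset.2 (Finset.mem_filter.1 hT).2
        _ = 2 ^ (XiS k j S).card := Finset.card_powerset _
        _ ≤ _ := by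
            refine Nat.pow_le_pow_right (by norm_num) ?_
            rw [← (Finset.mem_powersetCard.1 hS).2]
            exact card_XiS k j S
    exact_mod_cast this
  refine (Finset.sum_le_card_nsmul _ _ _ hS).trans ?_
  rw [nsmul_eq_mul, mul_assoc (((Fintype.card V : ℝ) ^ (k + 1)) ^ i)]
  refine mul_le_mul_of_nonneg_right ?_ (by positivity)
  rw [Finset.card_powersetCard, card_KK]
  have : ((Fintype.card V).choose (k + 1)).choose i ≤ ((Fintype.card V) ^ (k + 1)) ^ i :=
    (Nat.choose_le_pow _ _).trans (Nat.pow_le_pow_left (Nat.choose_le_pow _ _) _)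
  exact_mod_cast this

/-- pairwise disjoint supports -/
def PD (T : Finset (Finset V × Finset V)) : Prop :=
  ∀ a ∈ T, ∀ b ∈ T, a ≠ b → Disjoint a.1 b.1

lemma Pr_JT_ge {p : ℝ} (h0 : 0 ≤ p) (h1 : p ≤ 1) {k j r : ℕ} (hj : j < k)
    {T : Finset (Finset V × Finset V)} (hT : T ⊆ Xi V k j) (hr : T.card = r) (hD : PD T) :
    p ^ r * (1 - p) ^ (r * (k - j + 1) * (Fintype.card V - (j + 1)).choose (k - j)) ≤
      Pr p (KK V k) (JT j T) := by
  set M := (Fintype.card V - (j + 1)).choose (k - j) with hM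
  let B := (KK V k).filter (Hits (PT T)) \ KT T
  have hBc : B.card ≤ r * (k - j + 1) * M := by
    have e1 : B ⊆ (PT T).biUnion (fun P => (KK V k).filter (fun K => P ⊆ K)) := by
      intro K hK
      obtain ⟨hK1, hK2⟩ := Finset.mem_filter.1 (Finset.mem_sdiff.1 hK).1
      obtain ⟨P, hP, hPK⟩ := hK2
      exact Finset.mem_biUnion.2 ⟨P, hP, Finset.mem_filter.2 ⟨hK1, hPK⟩⟩
    refine (Finset.card_le_card e1).trans ((Finset.card_biUnion_le_card_mul _ _ M ?_).trans ?_)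
    · intro P hP
      have hc := PT_mem_card hT P hP
      rw [card_super P (by omega), hc, show k + 1 - (j + 1) = k - j by omega]
    · have := PT_card_le hj hT
      rw [hr] at this
      exact Nat.mul_le_mul_right _ this
  have hK : (KT T).card ≤ r := by rw [← hr]; exact Finset.card_image_le
  have h1' : 0 ≤ 1 - p := by linarith
  calc p ^ r * (1 - p) ^ (r * (k - j + 1) * M) ≤ p ^ (KT T).card * (1 - p) ^ B.card := by
        refine mul_le_mul (pow_le_pow_of_le_one h0 h1 hK)
          (pow_le_pow_of_le_one h1' (by linarith) hBc) (by positivity) (by positivity)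
    _ = Pr p (KK V k) (fun H => KT T ⊆ H ∧ Disjoint B H) := by
        rw [cyl_eq (KT_sub hT)]
        · exact Finset.sdiff_subset.trans (Finset.filter_subset _ _)
        · exact Finset.disjoint_sdiff
    _ ≤ _ := by
        refine Pr_mono h0 h1 fun H hH hh a ha => ?_
        obtain ⟨hx1, hx2⟩ := hh
        obtain ⟨m1, m2, m3⟩ := mem_Xi.1 (hT ha)
        refine ⟨hx1 (mem_KT.2 ⟨a.2, ha⟩), m3, m2, fun P hP K' hK' hPK => ?_⟩
        have hKT : K' ∈ KT T := by
          by_contra hn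
          refine Finset.disjoint_left.1 hx2 (Finset.mem_sdiff.2 ⟨?_, hn⟩) hK'
          exact Finset.mem_filter.2 ⟨hH hK', P, mem_PT.2 ⟨a, ha, hP⟩, hPK⟩
        obtain ⟨C, hC⟩ := mem_KT.1 hKT
        by_contra hne
        have hdd := hD a ha (K', C) hC (by rintro rfl; exact hne rfl)
        have hc := fl_card_mem hP
        obtain ⟨v, hv⟩ := Finset.card_pos.1 (by omega : 0 < P.card)
        exact Finset.disjoint_left.1 hdd (fl_sub m3 hP hv) (hPK hv)

/-- a pair, with a fixed decidability instance -/
noncomputable def pair2 {α : Type*} (a b : α) : Finset α := {a, b}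

lemma card_pair2 {α : Type*} {a b : α} (h : a ≠ b) : (pair2 a b).card = 2 := Finset.card_pair h

lemma pair2_sub {α : Type*} {a b : α} {T : Finset α} (ha : a ∈ T) (hb : b ∈ T) :
    pair2 a b ⊆ T := by
  intro x hx
  rcases Finset.mem_insert.1 hx with rfl | hx
  · exact ha
  · rw [Finset.mem_singleton.1 hx]; exact hb

/-- r-sets containing a fixed set -/
noncomputable def cont {α : Type*} (X s : Finset α) (r : ℕ) : Finset (Finset α) :=
  (Finset.powersetCard r X).filter (fun T => s ⊆ T)

lemma mem_cont {α : Type*} {X s : Finset α} {r : ℕ} {T : Finset α} :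
    T ∈ cont X s r ↔ T ∈ Finset.powersetCard r X ∧ s ⊆ T := Finset.mem_filter

/-- number of r-sets containing a fixed set -/
lemma card_contain {α : Type*} (X s : Finset α) (r : ℕ) :
    (cont X s r).card ≤ X.card ^ (r - s.card) := by
  have : (cont X s r).card ≤
      (Finset.powersetCard (r - s.card) X).card := by
    refine Finset.card_le_card_of_injOn (fun T => T \ s) ?_ ?_
    · intro T hT
      obtain ⟨hT1, hT2⟩ := Finset.mem_filter.1 (Finset.mem_coe.1 hT)
      obtain ⟨hT3, hT4⟩ := Finset.mem_powersetCard.1 hT1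
      refine Finset.mem_coe.2 (Finset.mem_powersetCard.2 ⟨Finset.sdiff_subset.trans hT3, ?_⟩)
      rw [Finset.card_sdiff_of_subset hT2, hT4]
    · intro T hT T' hT' h
      have h1 := (Finset.mem_filter.1 (Finset.mem_coe.1 hT)).2
      have h2 := (Finset.mem_filter.1 (Finset.mem_coe.1 hT')).2
      simp only at h
      rw [← Finset.sdiff_union_of_subset h1, h, Finset.sdiff_union_of_subset h2]
  refine this.trans ?_
  rw [Finset.card_powersetCard]
  exact Nat.choose_le_pow _ _

lemma card_meet {k j : ℕ} {a : Finset V × Finset V} (ha : a ∈ Xi V k j) :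
    ((Xi V k j).filter (fun b => ¬ Disjoint a.1 b.1)).card ≤
      (k + 1) * ((Fintype.card V) ^ k * 2 ^ (k + 1)) := by
  have h1 : (Xi V k j).filter (fun b => ¬ Disjoint a.1 b.1) ⊆
      a.1.biUnion (fun v => XiS k j ((KK V k).filter (fun K => {v} ⊆ K))) := by
    intro b hb
    obtain ⟨hb1, hb2⟩ := Finset.mem_filter.1 hb
    obtain ⟨v, hv1, hv2⟩ := Finset.not_disjoint_iff.1 hb2
    refine Finset.mem_biUnion.2 ⟨v, hv1, Finset.mem_filter.2 ⟨hb1, Finset.mem_filter.2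
      ⟨mem_KK.2 (mem_Xi.1 hb1).1, Finset.singleton_subset_iff.2 hv2⟩⟩⟩
  refine (Finset.card_le_card h1).trans ?_
  rw [← (mem_Xi.1 ha).1]
  refine Finset.card_biUnion_le_card_mul _ _ _ fun v _ => ?_
  refine (card_XiS k j _).trans ?_
  rw [(mem_Xi.1 ha).1]
  refine Nat.mul_le_mul_right _ ?_
  have := card_super_le (V := V) (k := k) {v}
  simpa using this

lemma card_nonPD (k j r : ℕ) :
    ((Finset.powersetCard r (Xi V k j)).filter (fun T => ¬ PD T)).card ≤
      (Xi V k j).card * ((k + 1) * ((Fintype.card V) ^ k * 2 ^ (k + 1))) *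
        (Xi V k j).card ^ (r - 2) := by
  have h1 : (Finset.powersetCard r (Xi V k j)).filter (fun T => ¬ PD T) ⊆
      (Xi V k j).biUnion (fun a => ((Xi V k j).filter (fun b => ¬ Disjoint a.1 b.1)).biUnion
        (fun b => if a = b then ∅ else cont (Xi V k j) (pair2 a b) r)) := by
    intro T hT
    obtain ⟨hT1, hT2⟩ := Finset.mem_filter.1 hT
    unfold PD at hT2
    push Not at hT2
    obtain ⟨a, ha, b, hb, hne, hd⟩ := hT2
    have hsub := (Finset.mem_powersetCard.1 hT1).1
    refine Finset.mem_biUnion.2 ⟨a, hsub ha, Finset.mem_biUnion.2 ⟨b,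
      Finset.mem_filter.2 ⟨hsub hb, hd⟩, ?_⟩⟩
    rw [if_neg hne]
    exact mem_cont.2 ⟨hT1, pair2_sub ha hb⟩
  refine (Finset.card_le_card h1).trans ?_
  rw [mul_assoc]
  refine Finset.card_biUnion_le_card_mul _ _ _ fun a ha => ?_
  refine (Finset.card_biUnion_le_card_mul _ _ ((Xi V k j).card ^ (r - 2)) fun b _ => ?_).trans
    (Nat.mul_le_mul_right _ (card_meet ha))
  split_ifs with h
  · simp
  · have := card_contain (Xi V k j) (pair2 a b) r
    rw [card_pair2 h] at this
    exact this

/-- bound for the number of non-disjoint sets -/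
noncomputable def nPD (V : Type*) [Fintype V] (k j r : ℕ) : ℕ :=
  if r < 2 then 0 else (Xi V k j).card * ((k + 1) * ((Fintype.card V) ^ k * 2 ^ (k + 1))) *
        (Xi V k j).card ^ (r - 2)

lemma card_nonPD' (k j r : ℕ) :
    ((Finset.powersetCard r (Xi V k j)).filter (fun T => ¬ PD T)).card ≤ nPD V k j r := by
  unfold nPD
  split_ifs with h
  · rw [Nat.le_zero, Finset.card_eq_zero, Finset.filter_eq_empty_iff]
    intro T hT hn
    refine hn fun a ha b hb hne => absurd ?_ hne
    have := (Finset.mem_powersetCard.1 hT).2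
    exact Finset.card_le_one.1 (by omega) a ha b hb
  · exact card_nonPD k j r

lemma Ex_choose_ge {p : ℝ} (h0 : 0 ≤ p) (h1 : p ≤ 1) {k j : ℕ} (hj : j < k) (r L : ℕ)
    (hL : ((Finset.powersetCard r (Xi V k j)).filter (fun T => ¬ PD T)).card ≤ L) :
    (((Xi V k j).card.choose r : ℝ) -
L) *
      (p ^ r * (1 - p) ^ (r * (k - j + 1) * (Fintype.card V - (j + 1)).choose (k - j))) ≤
    Ex p (KK V k) (fun H => ((XM k j H).card.choose r : ℝ)) := by
  rw [Ex_choose]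
  have h1' : 0 ≤ 1 - p := by linarith
  set y := p ^ r * (1 - p) ^ (r * (k - j + 1) * (Fintype.card V - (j + 1)).choose (k - j)) with hy
  have hy0 : 0 ≤ y := by positivity
  set PS := Finset.powersetCard r (Xi V k j) with hPS
  calc _ ≤ ((PS.filter PD).card : ℝ) * y := by
        refine mul_le_mul_of_nonneg_right ?_ hy0
        have e1 := Finset.card_filter_add_card_filter_not (s := PS) PD
        have e2 := hL
        have e3 : PS.card = (Xi V k j).card.choose r := Finset.card_powersetCard _ _
        have e1' : ((PS.filter PD).card : ℝ) + ((PS.filter (fun T => ¬ PD T)).card : ℝ) =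
            (Xi V k j).card.choose r := by
          rw [← e3]; exact_mod_cast e1
        have e2' : ((PS.filter (fun T => ¬ PD T)).card : ℝ) ≤
      L := by exact_mod_cast e2
        linarith
    _ = ∑ T ∈ PS.filter PD, y := by rw [Finset.sum_const, nsmul_eq_mul]
    _ ≤ ∑ T ∈ PS.filter PD, Pr p (KK V k) (JT j T) := by
        refine Finset.sum_le_sum fun T hT => ?_
        obtain ⟨hT1, hT2⟩ := Finset.mem_filter.1 hT
        obtain ⟨hT3, hT4⟩ := Finset.mem_powersetCard.1 hT1
        exact Pr_JT_ge h0 h1 hj hT3 hT4 hT2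
    _ ≤ _ := Finset.sum_le_sum_of_subset_of_nonneg (Finset.filter_subset _ _)
        fun T _ _ => Pr_nonneg h0 h1 _

lemma card_Xi (k j : ℕ) :
    (Xi V k j).card = (Fintype.card V).choose (k + 1) * (k + 1).choose j := by
  rw [← card_KK (V := V) k]
  have h : Xi V k j = (KK V k).biUnion (fun K => (Finset.powersetCard j K).image (fun C => (K, C))) := by
    ext ⟨K, C⟩
    simp only [mem_Xi, Finset.mem_biUnion, Finset.mem_image, Finset.mem_powersetCard, mem_KK,
      Prod.mk.injEq]
    constructor
    · rintro ⟨h1, h2, h3⟩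
      exact ⟨K, h1, C, ⟨h3, h2⟩, rfl, rfl⟩
    · rintro ⟨K', h1, C', ⟨h3, h2⟩, rfl, rfl⟩
      exact ⟨h1, h2, h3⟩
  rw [h, Finset.card_biUnion]
  · refine Finset.sum_const_nat fun K hK => ?_
    rw [Finset.card_image_of_injective _ (fun a b hab => (Prod.mk.inj hab).2),
      Finset.card_powersetCard, mem_KK.1 hK]
  · intro K _ K' _ hne
    refine Finset.disjoint_left.2 fun a h1 h2 => hne ?_
    obtain ⟨_, _, rfl⟩ := Finset.mem_image.1 h1
    obtain ⟨_, _, h3⟩ := Finset.mem_image.1 h2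
    exact (Prod.mk.inj h3).1.symm

end

section

lemma choose_lim {N : ℕ → ℕ} {q : ℕ → ℝ} {lam : ℝ} (hlam : 0 < lam)
    (hq : Tendsto q atTop (nhds 0)) (hq0 : ∀ᶠ n in atTop, 0 < q n)
    (hN : Tendsto (fun n => (N n : ℝ) * q n) atTop (nhds lam)) (r : ℕ) :
    Tendsto (fun n => ((N n).choose r : ℝ) * q n ^ r) atTop (nhds (lam ^ r / r.factorial)) := by
  have hf : (0 : ℝ) < r.factorial := by positivity
  have up : Tendsto (fun n => ((N n : ℝ) * q n) ^ r / r.factorial) atTop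
      (nhds (lam ^ r / r.factorial)) := (hN.pow r).div_const _
  have lo : Tendsto (fun n => ((N n : ℝ) * q n - r * q n) ^ r / r.factorial) atTop
      (nhds (lam ^ r / r.factorial)) := by
    have := ((hN.sub (hq.const_mul (r : ℝ))).pow r).div_const (r.factorial : ℝ)
    simpa using this
  refine tendsto_of_tendsto_of_tendsto_of_le_of_le' lo up ?_ ?_
  · have h1 := hN.eventually (eventually_gt_nhds (half_lt_self hlam))
    have h2 : Tendsto (fun n => (r : ℝ) * q n) atTop (nhds 0) := by
      simpa using hq.const_mul (r : ℝ)
    have h3 := h2.eventually (eventually_lt_nhds (half_pos hlam))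
    filter_upwards [h1, h3, hq0] with n h1 h3 h4
    have hr : (r : ℝ) < N n := lt_of_mul_lt_mul_right (h3.trans h1) h4.le
    have hr' : r ≤ N n := by exact_mod_cast hr.le
    rw [← sub_mul, mul_pow, div_le_iff₀ hf]
    have : (N n - r) ^ r ≤ (N n).choose r * r.factorial := by
      rw [mul_comm, ← Nat.descFactorial_eq_factorial_mul_choose]
      exact (Nat.pow_le_pow_left (by omega) _).trans (Nat.pow_sub_le_descFactorial (N n) r)
    have h5 : ((N n : ℝ) - r) ^ r ≤ ((N n).choose r : ℝ) * r.factorial := by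
      rw [← Nat.cast_sub hr']
      exact_mod_cast this
    calc ((N n : ℝ) - r) ^ r * q n ^ r ≤ ((N n).choose r : ℝ) * r.factorial * q n ^ r := by
          gcongr
      _ = _ := by ring
  · filter_upwards [hq0] with n h4
    rw [mul_pow, le_div_iff₀ hf]
    have : (N n).choose r * r.factorial ≤ (N n) ^ r := by
      rw [mul_comm, ← Nat.descFactorial_eq_factorial_mul_choose]
      exact Nat.descFactorial_le_pow _ _
    have h5 : ((N n).choose r : ℝ) * r.factorial ≤ (N n : ℝ) ^ r := by exact_mod_cast this
    calc ((N n).choose r : ℝ) * q n ^ r * r.factorial = ((N n).choose r : ℝ) * r.factorial * q n ^ r := by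
          ring
      _ ≤ _ := by gcongr

lemma one_sub_pow_ge {p : ℝ} (h0 : 0 ≤ p) (h : p ≤ 1 / 2) (N : ℕ) :
    Real.exp (-(p * N)) * Real.exp (-(2 * p ^ 2 * N)) ≤ (1 - p) ^ N := by
  have hp : 0 < 1 - p := by linarith
  have h1 : Real.exp (-(p + 2 * p ^ 2)) ≤ 1 - p := by
    rw [← Real.le_log_iff_exp_le hp]
    refine le_trans ?_ (Real.one_sub_inv_le_log_of_pos hp)
    have : (1 - p)⁻¹ ≤ 1 + p + 2 * p ^ 2 := by
      rw [inv_le_iff_one_le_mul₀ hp]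
      nlinarith [mul_nonneg (sq_nonneg p) (show 0 ≤ 1 - 2 * p by linarith)]
    linarith
  calc _ = Real.exp (-(p + 2 * p ^ 2)) ^ N := by
        rw [← Real.exp_nat_mul, ← Real.exp_add]; ring_nf
    _ ≤ _ := pow_le_pow_left₀ (Real.exp_pos _).le h1 N

section
variable {k j : ℕ} {c : ℝ} {cseq p : ℕ → ℝ}

lemma lamj_pos (k j : ℕ) (c : ℝ) : 0 < lamj k j c := by unfold lamj; positivity

lemma Win.pn_zero (h : Win k j c cseq p) :
    Tendsto (fun n : ℕ => p n * (n : ℝ) ^ (k - (j + 1))) atTop (nhds 0) := by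
  have hjk := h.hjk
  have := h.y_log.mul (log_pow_div 1)
  rw [mul_zero] at this
  refine this.congr' ?_
  filter_upwards [log_tends.eventually_gt_atTop 0, eventually_gt_atTop 0] with n h1 h2
  have hn : (0 : ℝ) < n := by exact_mod_cast h2
  rw [show k - j = (k - (j + 1)) + 1 by omega, pow_succ]
  field_simp

lemma Win.ppM (h : Win k j c cseq p) :
    Tendsto (fun n : ℕ => p n ^ 2 * MM k j n) atTop (nhds 0) := by
  have g := (h.plog 1).const_mul (2 * kap k j)
  rw [mul_zero] at g
  refine squeeze_zero' ?_ ?_ g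
  · exact Eventually.of_forall fun n => by positivity
  · filter_upwards [h.y_le, h.p01] with n h1 h2
    have h3 : (MM k j n : ℝ) ≤ (n : ℝ) ^ (k - j) := by
      have : MM k j n ≤ n ^ (k - j) := (Nat.choose_le_pow _ _).trans
        (Nat.pow_le_pow_left (Nat.sub_le _ _) _)
      exact_mod_cast this
    calc p n ^ 2 * MM k j n ≤ p n ^ 2 * (n : ℝ) ^ (k - j) := by gcongr
      _ = p n * (p n * (n : ℝ) ^ (k - j)) := by ring
      _ ≤ p n * (2 * kap k j * Real.log n) := mul_le_mul_of_nonneg_left h1 h2.1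
      _ = _ := by ring

lemma Win.moment (h : Win k j c cseq p) (r : ℕ) :
    Tendsto (fun n => Ex (p n) (KK (Fin n) k) (fun H => ((XM k j H).card.choose r : ℝ))) atTop
      (nhds ((lamj k j c) ^ r / r.factorial)) := by
  have hjk := h.hjk
  set q : ℕ → ℝ := fun n => p n * (tht k j p n) ^ (k - j + 1) with hqd
  have hq : Tendsto q atTop (nhds 0) := by
    have := h.p_zero.mul (h.tht_zero.pow (k - j + 1))
    simpa using this
  have hq0 : ∀ᶠ n in atTop, 0 < q n := by
    filter_upwards [h.p_pos] with n hn
    exact mul_pos hn (pow_pos (tht_pos _ _ _ _) _)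
  set N : ℕ → ℕ := fun n => (Xi (Fin n) k j).card with hN
  have hNq : Tendsto (fun n => (N n : ℝ) * q n) atTop (nhds (lamj k j c)) := by
    refine h.main2.congr fun n => ?_
    rw [hN]
    simp only [card_Xi, Fintype.card_fin]
    rfl
  have hch := choose_lim (lamj_pos k j c) hq hq0 hNq r
  -- upper function
  set E : ℕ → ℝ := fun n => Real.exp (p n * (((r * (k - j + 1) : ℕ) : ℝ) ^ 2 *
      (n : ℝ) ^ (k - (j + 1)) + r)) with hEd
  have hE : Tendsto E atTop (nhds 1) := by
    have h1 := (h.pn_zero.const_mul (((r * (k - j + 1) : ℕ) : ℝ) ^ 2)).add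
      (h.p_zero.const_mul (r : ℝ))
    have h2 := (Real.continuous_exp.tendsto _).comp h1
    simp only [mul_zero, add_zero, Real.exp_zero] at h2
    refine h2.congr fun n => ?_
    simp only [Function.comp_apply, hEd]
    ring_nf
  have hup : Tendsto (fun n : ℕ => ((N n).choose r : ℝ) * (q n ^ r * E n) +
      ∑ i ∈ Finset.range r, ((n : ℝ) ^ (k + 1)) ^ i * 2 ^ (i * 2 ^ (k + 1)) *
        (q n ^ i * tht k j p n * E n)) atTop (nhds ((lamj k j c) ^ r / r.factorial)) := by
    have h1 := hch.mul hE
    have h2 : Tendsto (fun n : ℕ => ∑ i ∈ Finset.range r, ((n : ℝ) ^ (k + 1)) ^ i *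
        2 ^ (i * 2 ^ (k + 1)) * (q n ^ i * tht k j p n * E n)) atTop (nhds 0) := by
      have : (0 : ℝ) = ∑ i ∈ Finset.range r, (0 : ℝ) := by simp
      rw [this]
      refine tendsto_finsetSum _ fun i _ => ?_
      have := (((h.main1.pow i).mul h.tht_zero).mul hE).mul_const ((2 : ℝ) ^ (i * 2 ^ (k + 1)))
      simp only [mul_zero, zero_mul] at this
      refine this.congr fun n => ?_
      rw [mul_pow]
      simp only [hqd]
      ring
    have h3 := h1.add h2
    rw [mul_one, add_zero] at h3
    refine h3.congr fun n => ?_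
    ring
  -- lower function
  have hnk : Tendsto (fun n : ℕ => (n : ℝ) ^ k * q n) atTop (nhds 0) := by
    have := h.main1.mul (tendsto_one_div_atTop_nhds_zero_nat (𝕜 := ℝ))
    rw [mul_zero] at this
    refine this.congr' ?_
    filter_upwards [eventually_gt_atTop 0] with n hn
    have hn : (0 : ℝ) < n := by exact_mod_cast hn
    simp only [hqd]
    rw [pow_succ]
    field_simp
  have hnP : Tendsto (fun n => (nPD (Fin n) k j r : ℝ) * q n ^ r) atTop (nhds 0) := by
    unfold nPD
    by_cases hr : r < 2
    · simp only [if_pos hr, Nat.cast_zero, zero_mul]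
      exact tendsto_const_nhds
    · simp only [if_neg hr, Fintype.card_fin]
      have := (((hNq.pow (r - 1)).mul hnk).mul_const (((k + 1) * 2 ^ (k + 1) : ℕ) : ℝ))
      simp only [mul_zero, zero_mul] at this
      refine this.congr fun n => ?_
      obtain ⟨s, rfl⟩ : ∃ s, r = s + 2 := ⟨r - 2, by omega⟩
      simp only [Nat.add_sub_cancel, show s + 2 - 1 = s + 1 by omega, hN]
      push_cast
      ring
  set y : ℕ → ℝ := fun n => (1 - p n) ^ (r * (k - j + 1) * MM k j n) /
    (tht k j p n) ^ ((k - j + 1) * r) with hyd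
  have hy : Tendsto y atTop (nhds 1) := by
    have h1 := (Real.continuous_exp.tendsto _).comp
      ((h.ppM.const_mul (2 * (r * (k - j + 1) : ℕ) : ℝ)).neg)
    simp only [mul_zero, neg_zero, Real.exp_zero] at h1
    have e1 : ∀ n, (tht k j p n) ^ ((k - j + 1) * r) =
        Real.exp (-(p n * (r * (k - j + 1) * MM k j n : ℕ))) := by
      intro n
      unfold tht
      rw [← Real.exp_nat_mul]
      congr 1
      push_cast
      ring
    refine tendsto_of_tendsto_of_tendsto_of_le_of_le' h1 tendsto_const_nhds ?_ ?_
    · filter_upwards [h.p01, h.p_half] with n hn1 hn2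
      simp only [hyd]
      rw [le_div_iff₀ (pow_pos (tht_pos _ _ _ _) _), e1]
      refine le_trans (le_of_eq ?_) (one_sub_pow_ge hn1.1 hn2 _)
      rw [mul_comm]
      congr 1
      simp only [Function.comp_apply]
      congr 1
      push_cast
      ring
    · filter_upwards [h.p01] with n hn1
      simp only [hyd]
      rw [div_le_one (pow_pos (tht_pos _ _ _ _) _), e1]
      exact one_sub_pow_le hn1.2 _
  have hlo : Tendsto (fun n => (((N n).choose r : ℝ) - nPD (Fin n) k j r) *
      (p n ^ r * (1 - p n) ^ (r * (k - j + 1) * MM k j n))) atTop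
      (nhds ((lamj k j c) ^ r / r.factorial)) := by
    have h1 := (hch.sub hnP).mul hy
    rw [sub_zero, mul_one] at h1
    refine h1.congr fun n => ?_
    have : (tht k j p n) ^ ((k - j + 1) * r) ≠ 0 := (pow_pos (tht_pos _ _ _ _) _).ne'
    simp only [hyd, hqd]
    rw [mul_pow, ← pow_mul]
    field_simp
  refine tendsto_of_tendsto_of_tendsto_of_le_of_le' hlo hup ?_ ?_
  · filter_upwards [h.p01] with n hn
    have := Ex_choose_ge (V := Fin n) hn.1 hn.2 hjk r (nPD (Fin n) k j r) (card_nonPD' k j r)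
    simp only [Fintype.card_fin] at this
    exact this
  · filter_upwards [h.p01] with n hn
    have := Ex_choose_le (V := Fin n) hn.1 hn.2 hjk r (tht k j p n) (E n)
      (by simp only [Fintype.card_fin]; rfl) (by simp only [Fintype.card_fin, hEd])
    simp only [Fintype.card_fin] at this
    exact this

lemma Win.X_poisson (h : Win k j c cseq p) (s : ℕ) :
    Tendsto (fun n => Pr (p n) (KK (Fin n) k) (fun H => (XM k j H).card = s)) atTop
      (nhds (Real.exp (-(lamj k j c)) * (lamj k j c) ^ s / s.factorial)) :=
  poisson_of_moments p (fun n => KK (Fin n) k) h.p01 (fun n H => (XM k j H).card) _ h.moment s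

lemma Win.X_le (h : Win k j c cseq p) :
    Tendsto (fun n => Pr (p n) (KK (Fin n) k) (fun H => ¬ (XM k j H).card ≤ n)) atTop (nhds 0) := by
  have h1 := (h.moment 1).mul (tendsto_one_div_atTop_nhds_zero_nat (𝕜 := ℝ))
  rw [mul_zero] at h1
  refine squeeze_zero' ?_ ?_ h1
  · filter_upwards [h.p01] with n hn using Pr_nonneg hn.1 hn.2 _
  · filter_upwards [h.p01, eventually_gt_atTop 0] with n hn hn0
    refine (markov hn.1 hn.2 (fun H => (XM k j H).card) n hn0).trans (le_of_eq ?_)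
    simp [div_eq_mul_inv]

end

end

lemma Pr_transfer {α : ℕ → Type*} {p : ℕ → ℝ} {U : ∀ n, Finset (α n)}
    {G Q Q' : ∀ n, Finset (α n) → Prop} {l : ℝ}
    (hp : ∀ᶠ n in atTop, 0 ≤ p n ∧ p n ≤ 1)
    (hG : Tendsto (fun n => Pr (p n) (U n) (fun H => ¬ G n H)) atTop (nhds 0))
    (hQ : ∀ᶠ n in atTop, ∀ H ⊆ U n, G n H → (Q n H ↔ Q' n H))
    (hl : Tendsto (fun n => Pr (p n) (U n) (Q' n)) atTop (nhds l)) :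
    Tendsto (fun n => Pr (p n) (U n) (Q n)) atTop (nhds l) := by
  have lo := hl.sub hG
  have up := hl.add hG
  rw [sub_zero] at lo
  rw [add_zero] at up
  refine tendsto_of_tendsto_of_tendsto_of_le_of_le' lo up ?_ ?_
  · filter_upwards [hp, hQ] with n h1 h2
    have := (Pr_mono h1.1 h1.2 (Q' := fun H => Q n H ∨ ¬ G n H) (fun H hH (hq : Q' n H) => by
      by_cases hg : G n H
      · exact Or.inl ((h2 H hH hg).2 hq)
      · exact Or.inr hg)).trans (Pr_or h1.1 h1.2 (Q n) (fun H => ¬ G n H))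
    linarith
  · filter_upwards [hp, hQ] with n h1 h2
    exact (Pr_mono h1.1 h1.2 (Q' := fun H => Q' n H ∨ ¬ G n H) (fun H hH (hq : Q n H) => by
      by_cases hg : G n H
      · exact Or.inl ((h2 H hH hg).1 hq)
      · exact Or.inr hg)).trans (Pr_or h1.1 h1.2 (Q' n) (fun H => ¬ G n H))

lemma complexAt_eq (k n : ℕ) (t : Finset (Fin n) → ℝ) (p : ℝ) :
    complexAt k n t p = cx (Hof k n t p) := by
  ext A
  simp only [complexAt, cx, Hof, Set.mem_ofPred_eq, Finset.mem_filter, Finset.mem_powersetCard,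
    Finset.subset_univ, true_and, and_assoc]

lemma measure_tendsto {k : ℕ} {p : ℕ → ℝ} {l : ℝ} (hp : ∀ᶠ n in atTop, 0 ≤ p n ∧ p n ≤ 1)
    (Q : ∀ n, Set (Finset (Fin n)) → Prop)
    (h : Tendsto (fun n => Pr (p n) (KK (Fin n) k) (fun H => Q n (cx H))) atTop (nhds l)) :
    Tendsto (fun n => birthMeasure n {t : Finset (Fin n) → ℝ | Q n (complexAt k n t (p n))})
      atTop (nhds (ENNReal.ofReal l)) := by
  refine ((ENNReal.continuous_ofReal.tendsto _).comp h).congr' ?_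
  filter_upwards [hp] with n hn
  simp only [complexAt_eq]
  exact (bridge k n (p n) hn.1 hn.2 (fun H => Q n (cx H))).symm

/-- good event -/
def Good (k j M0 n : ℕ) (H : Finset (Finset (Fin n))) : Prop :=
  E1 j H ∧ Esm k j M0 H ∧ Elarge k j M0 H ∧ (XM k j H).card ≤ n

section
variable {k j : ℕ} {c : ℝ} {cseq p : ℕ → ℝ}

lemma Win.good (h : Win k j c cseq p) : ∃ M0, 1 ≤ M0 ∧
    Tendsto (fun n => Pr (p n) (KK (Fin n) k) (fun H => ¬ Good k j M0 n H)) atTop (nhds 0) := by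
  obtain ⟨M0, hM, hL⟩ := h.Elarge_zero
  refine ⟨M0, hM, ?_⟩
  have s := ((h.E1_zero.add (h.Esm_zero M0)).add hL).add h.X_le
  simp only [add_zero] at s
  refine squeeze_zero' ?_ ?_ s
  · filter_upwards [h.p01] with n hn using Pr_nonneg hn.1 hn.2 _
  · filter_upwards [h.p01] with n hn
    have a1 := Pr_or (U := KK (Fin n) k) hn.1 hn.2 (fun H => ¬ E1 j H) (fun H => ¬ Esm k j M0 H)
    have a2 := Pr_or (U := KK (Fin n) k) hn.1 hn.2 (fun H => ¬ E1 j H ∨ ¬ Esm k j M0 H)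
      (fun H => ¬ Elarge k j M0 H)
    have a3 := Pr_or (U := KK (Fin n) k) hn.1 hn.2
      (fun H => (¬ E1 j H ∨ ¬ Esm k j M0 H) ∨ ¬ Elarge k j M0 H)
      (fun H => ¬ (XM k j H).card ≤ n)
    have a4 := Pr_mono (U := KK (Fin n) k) hn.1 hn.2 (Q := fun H => ¬ Good k j M0 n H)
      (Q' := fun H => ((¬ E1 j H ∨ ¬ Esm k j M0 H) ∨ ¬ Elarge k j M0 H) ∨ ¬ (XM k j H).card ≤ n)
      (fun H _ hg => by
        unfold Good at hg
        tauto)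
    linarith

lemma Win.part1 (h : Win k j c cseq p) (s : ℕ) :
    Tendsto (fun n => Pr (p n) (KK (Fin n) k)
      (fun H => Module.finrank (ZMod 2) (cohomology (cx H) j) = s)) atTop
      (nhds (Real.exp (-(lamj k j c)) * (lamj k j c) ^ s / s.factorial)) := by
  obtain ⟨M0, hM, hG⟩ := h.good
  refine Pr_transfer (G := fun n => Good k j M0 n) h.p01 hG ?_ (h.X_poisson s)
  refine Eventually.of_forall fun n H hH hg => ?_
  rw [finrank_Hj h.hj h.hjk hM hH hg.1 hg.2.1 hg.2.2.1 (by simpa using hg.2.2.2)]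

lemma good_low {k j M0 n : ℕ} (hj : 1 ≤ j) (hn : j < n) {H : Finset (Finset (Fin n))}
    (hg : Good k j M0 n H) :
    Nonempty (cohomology (cx H) 0 ≃ₗ[ZMod 2] ZMod 2) ∧
        ∀ i, 1 ≤ i → i ≤ j - 1 → Subsingleton (cohomology (cx H) i) :=
  ⟨E1_H0 hg.1 hj (by simpa using hn), fun i h1 h2 =>
    E1_vanish hg.1 (by simpa using hn) h1 (by omega)⟩

lemma Win.part2 (h : Win k j c cseq p) :
    Tendsto (fun n => Pr (p n) (KK (Fin n) k)
      (fun H => Nonempty (cohomology (cx H) 0 ≃ₗ[ZMod 2] ZMod 2) ∧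
        ∀ i, 1 ≤ i → i ≤ j - 1 → Subsingleton (cohomology (cx H) i))) atTop (nhds 1) := by
  obtain ⟨M0, hM, hG⟩ := h.good
  refine Pr_transfer (G := fun n => Good k j M0 n) (Q' := fun _ _ => True) h.p01 hG ?_ ?_
  · filter_upwards [eventually_gt_atTop j] with n hn H hH hg
    exact ⟨fun _ => trivial, fun _ => good_low h.hj hn hg⟩
  · have : ∀ n, Pr (p n) (KK (Fin n) k) (fun _ => True) = 1 := by
      intro n
      unfold Pr
      simp only [if_true]
      exact Ex_one
    simp only [this]
    exact tendsto_const_nhds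

lemma Win.part3 (h : Win k j c cseq p) :
    Tendsto (fun n => Pr (p n) (KK (Fin n) k) (fun H => CohomConnected (cx H) j)) atTop
      (nhds (Real.exp (-(lamj k j c)))) := by
  obtain ⟨M0, hM, hG⟩ := h.good
  have h1 := h.part1 0
  simp only [pow_zero, mul_one, Nat.factorial_zero, Nat.cast_one, div_one] at h1
  refine Pr_transfer (G := fun n => Good k j M0 n) h.p01 hG ?_ h1
  filter_upwards [eventually_gt_atTop j] with n hn H hH hg
  obtain ⟨g1, g2⟩ := good_low h.hj hn hg
  rw [Module.finrank_zero_iff]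
  constructor
  · intro hc
    exact hc.2 j h.hj le_rfl
  · intro hs
    refine ⟨g1, fun i hi1 hi2 => ?_⟩
    rcases Nat.lt_or_ge i j with hlt | hge
    · exact g2 i hi1 (by omega)
    · obtain rfl : i = j := by omega
      exact hs

end

/-- Theorem 1.7: inside the critical window, `dim H^j(G_p;F₂)` converges in distribution
to `Po(λ_j)`; moreover whp `H^0 ≅ F₂` and `H^i = 0` for `1 ≤ i ≤ j-1`; in particular
`Pr(G_p is j-cohom-connected) → e^{-λ_j}`. -/
theorem statement4 (k j : ℕ) (hk : 2 ≤ k) (hj : 1 ≤ j) (hjk : j < k)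
    (c : ℝ) (cseq : ℕ → ℝ) (hc : Tendsto cseq atTop (nhds c))
    (p : ℕ → ℝ)
    (hp : ∀ n : ℕ, p n =
      ((j + 1 : ℝ) * Real.log n + Real.log (Real.log n) + cseq n) * (Nat.factorial (k - j)) /
        (((k - j + 1 : ℕ) : ℝ) * (n : ℝ) ^ (k - j))) :
    (∀ s : ℕ,
      Tendsto (fun n : ℕ => birthMeasure n {t : Finset (Fin n) → ℝ |
          Module.finrank (ZMod 2) (cohomology (complexAt k n t (p n)) j) = s})
        atTop
        (nhds (ENNReal.ofReal
          (Real.exp (-(lamj k j c)) * (lamj k j c) ^ s / (Nat.factorial s))))) ∧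
    Tendsto (fun n : ℕ => birthMeasure n {t : Finset (Fin n) → ℝ |
        Nonempty (cohomology (complexAt k n t (p n)) 0 ≃ₗ[ZMod 2] ZMod 2) ∧
        ∀ i, 1 ≤ i → i ≤ j - 1 → Subsingleton (cohomology (complexAt k n t (p n)) i)})
      atTop (nhds 1) ∧
    Tendsto (fun n : ℕ => birthMeasure n {t : Finset (Fin n) → ℝ |
        CohomConnected (complexAt k n t (p n)) j})
      atTop (nhds (ENNReal.ofReal (Real.exp (-(lamj k j c))))) := by


  have h : Win k j c cseq p := ⟨hj, hjk, hc, hp⟩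
  refine ⟨fun s => ?_, ?_, ?_⟩
  · exact measure_tendsto h.p01
      (fun n G => Module.finrank (ZMod 2) (cohomology G j) = s) (h.part1 s)
  · have := measure_tendsto h.p01
      (fun n G => Nonempty (cohomology G 0 ≃ₗ[ZMod 2] ZMod 2) ∧
        ∀ i, 1 ≤ i → i ≤ j - 1 → Subsingleton (cohomology G i)) h.part2
    rwa [ENNReal.ofReal_one] at this
  · exact measure_tendsto h.p01 (fun n G => CohomConnected G j) h.part3

end RSC
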